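/- Let n ≥ 2 and let W be a normalized double-well potential, and set κ₀ = ∫_ℝ ( V'(η(s)) η'(s) + W(η(s)) ) s ds, where η is the optimal transition profile. There exist universal constants ε₀ > 0 and C such that for every ε ∈ (0,ε₀): | ψ(ε) − 2 n ω_n^{1/n} − 2 n (n−1) ω_n^{2/n} κ₀ ε | ≤ C ε². -/

import Mathlib

noncomputable section

open MeasureTheory Real Set Filter

abbrev En (n : ℕ) : Type := EuclideanSpace ℝ (Fin n)

/-- Volume of the unit ball of `ℝⁿ`. -/
def ballVol (n : ℕ) : ℝ := (volume (Metric.ball (0 : En n) 1)).toReal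

/-- A normalized double-well potential. -/
structure DoubleWell (W : ℝ → ℝ) : Prop where
  contDiffOn : ContDiffOn ℝ 2 W (Icc 0 1)
  lipschitzSecond : ∃ L : NNReal, LipschitzOnWith L (iteratedDerivWithin 2 W (Icc 0 1)) (Icc 0 1)
  zero_at_zero : W 0 = 0
  zero_at_one : W 1 = 0
  pos_on : ∀ t ∈ Ioo (0:ℝ) 1, 0 < W t
  second_pos_zero : 0 < iteratedDerivWithin 2 W (Icc 0 1) 0
  second_pos_one : 0 < iteratedDerivWithin 2 W (Icc 0 1) 1
  normalized : ∫ t in (0:ℝ)..1, Real.sqrt (W t) = 1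

/-- `Φ(t) = ∫₀ᵗ √W`. -/
def Phi (W : ℝ → ℝ) (t : ℝ) : ℝ := ∫ s in (0:ℝ)..t, Real.sqrt (W s)

/-- `V(t) = Φ(t)^{n/(n-1)}`. -/
def Vpot (n : ℕ) (W : ℝ → ℝ) (t : ℝ) : ℝ := Phi W t ^ ((n : ℝ) / ((n : ℝ) - 1))

/-- Membership in `H¹(ℝⁿ;[0,1])`. -/
structure H1Box (n : ℕ) (u : En n → ℝ) : Prop where
  mem_Icc : ∀ x, u x ∈ Icc (0:ℝ) 1
  diff : Differentiable ℝ u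
  memL2 : MemLp u 2 (volume : Measure (En n))
  grad_memL2 : MemLp (fun x => fderiv ℝ u x) 2 (volume : Measure (En n))

/-- The Allen–Cahn energy. -/
def AC (n : ℕ) (W : ℝ → ℝ) (σ : ℝ) (u : En n → ℝ) : ℝ :=
  σ * (∫ x : En n, ‖fderiv ℝ u x‖ ^ 2) + σ⁻¹ * (∫ x : En n, W (u x))

/-- The isoperimetric-type infimum `Ψ(σ,m)`. -/
def Psi (n : ℕ) (W : ℝ → ℝ) (σ m : ℝ) : ℝ :=
  sInf ((fun u => AC n W σ u) ''
    {u : En n → ℝ | H1Box n u ∧ (∫ x : En n, Vpot n W (u x)) = m})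

/-- `u` is a minimizer of `ψ(ε) = Ψ(ε,1)`. -/
def Minimizes (n : ℕ) (W : ℝ → ℝ) (ε : ℝ) (u : En n → ℝ) : Prop :=
  H1Box n u ∧ (∫ x : En n, Vpot n W (u x)) = 1 ∧ AC n W ε u = Psi n W ε 1

/-- Radial function. -/
def Radial (n : ℕ) (u : En n → ℝ) : Prop :=
  ∃ ζ : ℝ → ℝ, ∀ x : En n, u x = ζ ‖x‖

/-- Radial decreasing function. -/
def RadialDecreasing (n : ℕ) (u : En n → ℝ) : Prop :=
  ∃ ζ : ℝ → ℝ, AntitoneOn ζ (Ici 0) ∧ ∀ x : En n, u x = ζ ‖x‖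

/-- The Laplacian as the trace of the second derivative. -/
def lap (n : ℕ) (u : En n → ℝ) (x : En n) : ℝ :=
  ∑ i : Fin n,
    fderiv ℝ (fun y => fderiv ℝ u y (EuclideanSpace.single i 1)) x (EuclideanSpace.single i 1)

/-- The optimal transition profile `η`. -/
structure TransitionProfile (W : ℝ → ℝ) (η : ℝ → ℝ) : Prop where
  mem : ∀ s, η s ∈ Ioo (0:ℝ) 1
  init : η 0 = 1/2
  ode : ∀ s, HasDerivAt η (-(Real.sqrt (W (η s)))) s
  anti : StrictAnti η
  tendsto_bot : Tendsto η atBot (nhds 1)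
  tendsto_top : Tendsto η atTop (nhds 0)

/-- `d_Φ(u,v)`. -/
def dPhi (n : ℕ) (W : ℝ → ℝ) (u v : En n → ℝ) : ℝ :=
  ∫ x : En n, |Phi W (u x) - Phi W (v x)| ^ ((n : ℝ) / ((n : ℝ) - 1))

/-- `R₀ = ω_n^{-1/n}`. -/
def R0 (n : ℕ) : ℝ := ballVol n ^ (-(1:ℝ) / (n : ℝ))

section Part1
open MeasureTheory Real Set Filter
open scoped ENNReal NNReal Pointwise

lemma bm1_compact {K L C : Set ℝ} (hK : IsCompact K) (hL : IsCompact L)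
    (hK0 : K.Nonempty) (hL0 : L.Nonempty) (hC : ∀ a ∈ K, ∀ b ∈ L, a + b ∈ C) :
    volume K + volume L ≤ volume C := by
  obtain ⟨a, haK, ha⟩ := hK.exists_isGreatest hK0
  obtain ⟨b, hbL, hb⟩ := hL.exists_isLeast hL0
  have h1 : volume ((fun x => x + b) '' K) = volume K := by
    rw [Set.image_add_right, measure_preimage_add_right]
  have h2 : volume ((fun x => a + x) '' L) = volume L := by
    rw [Set.image_add_left, measure_preimage_add]
  have hd : AEDisjoint volume ((fun x => x + b) '' K) ((fun x => a + x) '' L) := by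
    have : ((fun x => x + b) '' K) ∩ ((fun x => a + x) '' L) ⊆ {a + b} := by
      rintro x ⟨⟨k, hk, rfl⟩, ⟨l, hl, h⟩⟩
      have := ha hk
      have := hb hl
      simp only [mem_singleton_iff] at *
      linarith
    exact measure_mono_null this (by simp)
  have hLm : MeasurableSet ((fun x => a + x) '' L) :=
    (hL.image (by fun_prop)).measurableSet
  calc volume K + volume L
      = volume (((fun x => x + b) '' K) ∪ ((fun x => a + x) '' L)) := by
        rw [measure_union₀ hLm.nullMeasurableSet hd, h1, h2]
    _ ≤ volume C := by
        apply measure_mono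
        rintro x (⟨k, hk, rfl⟩ | ⟨l, hl, rfl⟩)
        · exact hC k hk b hbL
        · exact hC a haK l hl

lemma bm1 {A B C : Set ℝ} (hA : MeasurableSet A) (hB : MeasurableSet B)
    (hA0 : A.Nonempty) (hB0 : B.Nonempty) (hC : ∀ a ∈ A, ∀ b ∈ B, a + b ∈ C) :
    volume A + volume B ≤ volume C := by
  obtain ⟨a, ha⟩ := hA0
  obtain ⟨b, hb⟩ := hB0
  have key : ∀ K, (K ⊆ A ∧ IsCompact K) → ∀ L, (L ⊆ B ∧ IsCompact L) →
      volume K + volume L ≤ volume C := by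
    rintro K ⟨hKA, hK⟩ L ⟨hLB, hL⟩
    calc volume K + volume L ≤ volume (insert a K) + volume (insert b L) := by
          gcongr <;> exact subset_insert _ _
      _ ≤ _ := by
          apply bm1_compact (hK.insert a) (hL.insert b) (insert_nonempty _ _) (insert_nonempty _ _)
          intro x hx y hy
          exact hC x (insert_subset ha hKA hx) y (insert_subset hb hLB hy)
  rw [hA.measure_eq_iSup_isCompact, hB.measure_eq_iSup_isCompact]
  simp_rw [iSup_and']
  exact ENNReal.biSup_add_biSup_le' ⟨∅, by simp⟩ ⟨∅, by simp⟩ key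

/-- One-dimensional functional inequality. -/
lemma pl1 {f g h : ℝ → ℝ} (hf : Measurable f) (hg : Measurable g) (hh : Measurable h)
    (hf0 : ∀ x, 0 ≤ f x) (hg0 : ∀ x, 0 ≤ g x) (hh0 : ∀ x, 0 ≤ h x)
    (hf1 : ∀ x, f x ≤ 1) (hg1 : ∀ x, g x ≤ 1)
    (hfs : ∀ t < 1, ∃ x, t < f x) (hgs : ∀ t < 1, ∃ x, t < g x)
    {l : ℝ} (hl0 : 0 < l) (hl1 : l < 1)
    (H : ∀ x y t, t < f x → t < g y → t < h (l * x + (1 - l) * y)) :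
    ENNReal.ofReal l * (∫⁻ x, ENNReal.ofReal (f x)) +
      ENNReal.ofReal (1 - l) * (∫⁻ x, ENNReal.ofReal (g x)) ≤ ∫⁻ x, ENNReal.ofReal (h x) := by
  have scal : ∀ (c : ℝ), 0 < c → ∀ s : Set ℝ, volume ((fun x => c * x) '' s) =
      ENNReal.ofReal c * volume s := by
    intro c hc s
    have := Measure.addHaar_image_homothety (volume : Measure ℝ) 0 c s
    simp only [Module.finrank_self, pow_one, abs_of_pos hc] at this
    rw [← this]
    congr 1
    apply image_congr
    intro x _
    simp [AffineMap.homothety_apply]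
  have hl1' : 0 < 1 - l := by linarith
  rw [lintegral_eq_lintegral_meas_lt volume (ae_of_all _ hf0) hf.aemeasurable,
    lintegral_eq_lintegral_meas_lt volume (ae_of_all _ hg0) hg.aemeasurable,
    lintegral_eq_lintegral_meas_lt volume (ae_of_all _ hh0) hh.aemeasurable,
    ← lintegral_const_mul' _ _ ENNReal.ofReal_ne_top,
    ← lintegral_const_mul' _ _ ENNReal.ofReal_ne_top]
  have mm : ∀ F : ℝ → ℝ, Measurable (fun t => volume {a | t < F a}) := fun F =>
    Antitone.measurable (fun s t hst => measure_mono (fun a ha => lt_of_le_of_lt hst ha))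
  rw [← lintegral_add_left ((mm f).const_mul _)]
  apply lintegral_mono
  intro t
  dsimp only
  rcases lt_or_ge t 1 with ht | ht
  · rw [← scal l hl0, ← scal (1 - l) hl1']
    apply bm1
    · have : MeasurableSet {a | t < f a} := measurableSet_lt measurable_const hf
      exact (MeasurableEmbedding.measurableSet_image
        (measurableEmbedding_mulLeft₀ hl0.ne')).2 this
    · have : MeasurableSet {a | t < g a} := measurableSet_lt measurable_const hg
      exact (MeasurableEmbedding.measurableSet_image
        (measurableEmbedding_mulLeft₀ hl1'.ne')).2 this
    · obtain ⟨x, hx⟩ := hfs t ht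
      exact ⟨_, x, hx, rfl⟩
    · obtain ⟨x, hx⟩ := hgs t ht
      exact ⟨_, x, hx, rfl⟩
    · rintro _ ⟨x, hx, rfl⟩ _ ⟨y, hy, rfl⟩
      exact H x y t hx hy
  · have h1 : {a | t < f a} = ∅ := by
      ext a; simp; exact (hf1 a).trans ht
    have h2 : {a | t < g a} = ∅ := by
      ext a; simp; exact (hg1 a).trans ht
    simp [h1, h2]

lemma measure_cons_section {n : ℕ} {A : Set (Fin (n+1) → ℝ)} (hA : MeasurableSet A) :
    volume A = ∫⁻ x : ℝ, volume {y : Fin n → ℝ | Fin.cons x y ∈ A} ∧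
    Measurable (fun x : ℝ => volume {y : Fin n → ℝ | (Fin.cons x y : Fin (n+1) → ℝ) ∈ A}) ∧
    ∀ x : ℝ, MeasurableSet {y : Fin n → ℝ | (Fin.cons x y : Fin (n+1) → ℝ) ∈ A} := by
  have mp := (volume_preserving_piFinSuccAbove (fun _ : Fin (n+1) => ℝ) 0).symm
  set e := (MeasurableEquiv.piFinSuccAbove (fun _ : Fin (n+1) => ℝ) 0).symm with he
  have hS : MeasurableSet (e ⁻¹' A) := e.measurable hA
  have hcons : ∀ x : ℝ, {y : Fin n → ℝ | (Fin.cons x y : Fin (n+1) → ℝ) ∈ A} =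
      Prod.mk x ⁻¹' (e ⁻¹' A) := by
    intro x; ext y; simp [he, MeasurableEquiv.piFinSuccAbove]; exact Iff.rfl
  refine ⟨?_, ?_, ?_⟩
  · rw [← mp.measure_preimage_equiv A]
    simp_rw [hcons]
    exact Measure.prod_apply hS
  · simp_rw [hcons]
    exact measurable_measure_prodMk_left hS
  · intro x
    rw [hcons]
    exact measurable_prodMk_left hS

/-- Multiplicative Brunn–Minkowski for bounded measurable sets. -/
lemma bm_mul (n : ℕ) : ∀ (A B C : Set (Fin n → ℝ)) (N : ℝ), MeasurableSet A → MeasurableSet B →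
    MeasurableSet C → A ⊆ Icc (fun _ => -N) (fun _ => N) → B ⊆ Icc (fun _ => -N) (fun _ => N) →
    ∀ l : ℝ, 0 < l → l < 1 →
    (∀ a ∈ A, ∀ b ∈ B, l • a + (1 - l) • b ∈ C) →
    volume A ^ l * volume B ^ (1 - l) ≤ volume C := by
  induction n with
  | zero =>
    intro A B C N hA hB hC hAN hBN l hl0 hl1 H
    rcases A.eq_empty_or_nonempty with rfl | ⟨a, ha⟩
    · simp [hl0]
    rcases B.eq_empty_or_nonempty with rfl | ⟨b, hb⟩
    · simp [hl1]
    have : ∀ D : Set (Fin 0 → ℝ), D.Nonempty → volume D = 1 := by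
      intro D ⟨d, hd⟩
      have : D = univ := by ext x; simp [Subsingleton.elim x d, hd]
      rw [this]
      simp [volume_pi]
    rw [this A ⟨a, ha⟩, this B ⟨b, hb⟩, this C ⟨_, H a ha b hb⟩]
    simp
  | succ n ih =>
    intro A B C N hA hB hC hAN hBN l hl0 hl1 H
    have hl1' : 0 < 1 - l := by linarith
    obtain ⟨hA1, hA2, hA3⟩ := measure_cons_section hA
    obtain ⟨hB1, hB2, hB3⟩ := measure_cons_section hB
    obtain ⟨hC1, hC2, hC3⟩ := measure_cons_section hC
    set f := fun x : ℝ => volume {y : Fin n → ℝ | (Fin.cons x y : Fin (n+1) → ℝ) ∈ A} with hf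
    set g := fun x : ℝ => volume {y : Fin n → ℝ | (Fin.cons x y : Fin (n+1) → ℝ) ∈ B} with hg
    set h := fun x : ℝ => volume {y : Fin n → ℝ | (Fin.cons x y : Fin (n+1) → ℝ) ∈ C} with hh
    have hsub : ∀ D : Set (Fin (n+1) → ℝ), D ⊆ Icc (fun _ => -N) (fun _ => N) → ∀ x : ℝ,
        {y : Fin n → ℝ | (Fin.cons x y : Fin (n+1) → ℝ) ∈ D} ⊆ Icc (fun _ => -N) (fun _ => N) := by
      intro D hD x y hy
      have := hD hy
      constructor
      · intro i; have := this.1 i.succ; simpa using this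
      · intro i; have := this.2 i.succ; simpa using this
    have hbox : volume (Icc (fun _ : Fin n => -N) (fun _ => N)) < ⊤ :=
      isCompact_Icc.measure_lt_top
    have step : ∀ x y, f x ^ l * g y ^ (1 - l) ≤ h (l * x + (1 - l) * y) := by
      intro x y
      apply ih _ _ _ N (hA3 x) (hB3 y) (hC3 _) (hsub A hAN x) (hsub B hBN y) l hl0 hl1
      intro a ha b hb
      have := H _ ha _ hb
      simp only [mem_ofPred_eq]
      convert this using 1
      ext i
      refine Fin.cases ?_ (fun j => ?_) i <;> simp
    set F := ⨆ x, f x with hF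
    set G := ⨆ x, g x with hG
    have hFt : F ≠ ⊤ := ((iSup_le fun x => measure_mono (hsub A hAN x)).trans_lt hbox).ne
    have hGt : G ≠ ⊤ := ((iSup_le fun x => measure_mono (hsub B hBN x)).trans_lt hbox).ne
    have hfF : ∀ x, f x ≤ F := fun x => le_iSup f x
    have hgG : ∀ x, g x ≤ G := fun x => le_iSup g x
    rcases eq_or_ne F 0 with hF0 | hF0
    · have : volume A = 0 := by
        rw [hA1]; apply le_antisymm _ zero_le
        calc ∫⁻ x, f x ≤ ∫⁻ x : ℝ, 0 := lintegral_mono (fun x => (hfF x).trans hF0.le)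
          _ = 0 := by simp
      simp [this, hl0]
    rcases eq_or_ne G 0 with hG0 | hG0
    · have : volume B = 0 := by
        rw [hB1]; apply le_antisymm _ zero_le
        calc ∫⁻ x, g x ≤ ∫⁻ x : ℝ, 0 := lintegral_mono (fun x => (hgG x).trans hG0.le)
          _ = 0 := by simp
      simp [this, hl1]
    set Q := F ^ l * G ^ (1 - l) with hQ
    have hQ0 : Q ≠ 0 := by
      simp [hQ, hF0, hG0, hFt, hGt]
    have hQt : Q ≠ ⊤ := ENNReal.mul_ne_top (ENNReal.rpow_ne_top_of_nonneg hl0.le hFt)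
      (ENNReal.rpow_ne_top_of_nonneg hl1'.le hGt)
    have hfF1 : ∀ x, f x / F ≤ 1 := fun x => ENNReal.div_le_of_le_mul (by simpa using hfF x)
    have hgG1 : ∀ x, g x / G ≤ 1 := fun x => ENNReal.div_le_of_le_mul (by simpa using hgG x)
    have tr : ∀ {a : ℝ≥0∞}, a ≤ 1 → a ≠ ⊤ := fun h => ne_top_of_le_ne_top ENNReal.one_ne_top h
    have PL := pl1 (f := fun x => (f x / F).toReal) (g := fun x => (g x / G).toReal)
      (h := fun x => (min 1 (h x / Q)).toReal) (by fun_prop) (by fun_prop)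
      ((measurable_const.min (hC2.div_const _)).ennreal_toReal)
      (fun x => ENNReal.toReal_nonneg) (fun x => ENNReal.toReal_nonneg)
      (fun x => ENNReal.toReal_nonneg)
      (fun x => ENNReal.toReal_le_of_le_ofReal zero_le_one (by simpa using hfF1 x))
      (fun x => ENNReal.toReal_le_of_le_ofReal zero_le_one (by simpa using hgG1 x))
      (by
        intro t ht
        rcases lt_or_ge t 0 with h0 | h0
        · exact ⟨0, h0.trans_le ENNReal.toReal_nonneg⟩
        have : ENNReal.ofReal t * F < F := by
          calc ENNReal.ofReal t * F < 1 * F := by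
                rw [ENNReal.mul_lt_mul_iff_left hF0 hFt]; simpa using ht
            _ = F := one_mul _
        obtain ⟨x, hx⟩ := lt_iSup_iff.1 this
        refine ⟨x, ?_⟩
        rw [← ENNReal.ofReal_lt_iff_lt_toReal h0 (tr (hfF1 x)), ENNReal.lt_div_iff_mul_lt (by simp [hF0]) (by simp [hFt])]
        exact hx)
      (by
        intro t ht
        rcases lt_or_ge t 0 with h0 | h0
        · exact ⟨0, h0.trans_le ENNReal.toReal_nonneg⟩
        have : ENNReal.ofReal t * G < G := by
          calc ENNReal.ofReal t * G < 1 * G := by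
                rw [ENNReal.mul_lt_mul_iff_left hG0 hGt]; simpa using ht
            _ = G := one_mul _
        obtain ⟨x, hx⟩ := lt_iSup_iff.1 this
        refine ⟨x, ?_⟩
        rw [← ENNReal.ofReal_lt_iff_lt_toReal h0 (tr (hgG1 x)), ENNReal.lt_div_iff_mul_lt (by simp [hG0]) (by simp [hGt])]
        exact hx)
      hl0 hl1
      (by
        intro x y t hx hy
        rcases lt_or_ge t 0 with h0 | h0
        · exact h0.trans_le ENNReal.toReal_nonneg
        rw [← ENNReal.ofReal_lt_iff_lt_toReal h0 (tr (hfF1 x)), ENNReal.lt_div_iff_mul_lt (by simp [hF0]) (by simp [hFt])] at hx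
        have hx' := hx
        rw [← ENNReal.ofReal_lt_iff_lt_toReal h0 (tr (hgG1 y)), ENNReal.lt_div_iff_mul_lt (by simp [hG0]) (by simp [hGt])] at hy
        rw [← ENNReal.ofReal_lt_iff_lt_toReal h0 (tr (min_le_left _ _)), lt_min_iff]
        constructor
        · by_contra hcon
          push Not at hcon
          have : F ≤ ENNReal.ofReal t * F := by
            calc F = 1 * F := (one_mul _).symm
              _ ≤ _ := by gcongr
          exact absurd (hx.trans_le (hfF x)) (not_lt.2 this)
        · rw [ENNReal.lt_div_iff_mul_lt (by simp [hQ0]) (by simp [hQt])]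
          refine lt_of_lt_of_le ?_ (step x y)
          have e1 : ENNReal.ofReal t * Q = (ENNReal.ofReal t * F) ^ l * (ENNReal.ofReal t * G) ^ (1 - l) := by
            rw [ENNReal.mul_rpow_of_nonneg _ _ hl0.le, ENNReal.mul_rpow_of_nonneg _ _ hl1'.le, hQ]
            have : ENNReal.ofReal t = ENNReal.ofReal t ^ l * ENNReal.ofReal t ^ (1 - l) := by
              rw [← ENNReal.rpow_add_of_nonneg _ _ hl0.le hl1'.le]; simp
            conv_lhs => rw [this]
            ring
          rw [e1]
          exact ENNReal.mul_lt_mul (ENNReal.rpow_lt_rpow hx hl0) (ENNReal.rpow_lt_rpow hy hl1'))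
    have i1 : ∫⁻ x, ENNReal.ofReal (f x / F).toReal = volume A / F := by
      simp_rw [ENNReal.ofReal_toReal (tr (hfF1 _)), div_eq_mul_inv]
      rw [lintegral_mul_const _ hA2, ← hA1]
    have i2 : ∫⁻ x, ENNReal.ofReal (g x / G).toReal = volume B / G := by
      simp_rw [ENNReal.ofReal_toReal (tr (hgG1 _)), div_eq_mul_inv]
      rw [lintegral_mul_const _ hB2, ← hB1]
    have i3 : ∫⁻ x, ENNReal.ofReal (min 1 (h x / Q)).toReal ≤ volume C / Q := by
      calc ∫⁻ x, ENNReal.ofReal (min 1 (h x / Q)).toReal ≤ ∫⁻ x, h x / Q := by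
            apply lintegral_mono; intro x
            dsimp only
            rw [ENNReal.ofReal_toReal (tr (min_le_left _ _))]
            exact min_le_right _ _
        _ = _ := by
            simp_rw [div_eq_mul_inv]
            rw [lintegral_mul_const _ hC2, ← hC1]
    rw [i1, i2] at PL
    have PL := PL.trans i3
    have hAt : volume A ≠ ⊤ := ((measure_mono hAN).trans_lt isCompact_Icc.measure_lt_top).ne
    have hBt : volume B ≠ ⊤ := ((measure_mono hBN).trans_lt isCompact_Icc.measure_lt_top).ne
    have amgm : (volume A / F) ^ l * (volume B / G) ^ (1 - l) ≤
        ENNReal.ofReal l * (volume A / F) + ENNReal.ofReal (1 - l) * (volume B / G) := by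
      have a1 : volume A / F ≠ ⊤ := ENNReal.div_ne_top hAt hF0
      have a2 : volume B / G ≠ ⊤ := ENNReal.div_ne_top hBt hG0
      generalize volume A / F = a at *
      generalize volume B / G = b at *
      have := Real.geom_mean_le_arith_mean2_weighted hl0.le hl1'.le
        (ENNReal.toReal_nonneg (a := a)) (ENNReal.toReal_nonneg (a := b)) (by ring)
      have h2 := ENNReal.ofReal_le_ofReal this
      rw [ENNReal.ofReal_mul (by positivity), ENNReal.ofReal_add (by positivity) (by positivity),
        ENNReal.ofReal_mul hl0.le, ENNReal.ofReal_mul hl1'.le,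
        ← ENNReal.ofReal_rpow_of_nonneg (by positivity) hl0.le,
        ← ENNReal.ofReal_rpow_of_nonneg (by positivity) hl1'.le,
        ENNReal.ofReal_toReal a1, ENNReal.ofReal_toReal a2] at h2
      exact h2
    have fin := amgm.trans PL
    rw [ENNReal.div_rpow_of_nonneg _ _ hl0.le, ENNReal.div_rpow_of_nonneg _ _ hl1'.le,
      ENNReal.le_div_iff_mul_le (Or.inl hQ0) (Or.inl hQt)] at fin
    refine le_trans (le_of_eq ?_) fin
    have p1 : F ^ l ≠ 0 := by simp [hF0, hFt]
    have p2 : G ^ (1-l) ≠ 0 := by simp [hG0, hGt]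
    have p3 : F ^ l ≠ ⊤ := ENNReal.rpow_ne_top_of_nonneg hl0.le hFt
    have p4 : G ^ (1-l) ≠ ⊤ := ENNReal.rpow_ne_top_of_nonneg hl1'.le hGt
    rw [hQ]
    calc _ = (volume A ^ l) * (volume B ^ (1-l)) * (((F^l)⁻¹ * F ^ l) * ((G^(1-l))⁻¹ * G ^ (1-l))) := by
          rw [ENNReal.inv_mul_cancel p1 p3, ENNReal.inv_mul_cancel p2 p4]; simp
      _ = _ := by simp only [div_eq_mul_inv]; ring

end Part1

section Part2
open MeasureTheory Real Set Filter
open scoped ENNReal NNReal Pointwise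

lemma ballVol_pos (n : ℕ) : 0 < ballVol n := by
  unfold ballVol
  exact ENNReal.toReal_pos (Metric.measure_ball_pos _ _ one_pos).ne' measure_ball_lt_top.ne

lemma bm_mul_En (n : ℕ) (A B C : Set (En n)) (N : ℝ) (hA : MeasurableSet A) (hB : MeasurableSet B)
    (hC : MeasurableSet C) (hAN : A ⊆ Metric.closedBall 0 N) (hBN : B ⊆ Metric.closedBall 0 N)
    (l : ℝ) (hl0 : 0 < l) (hl1 : l < 1)
    (H : ∀ a ∈ A, ∀ b ∈ B, l • a + (1 - l) • b ∈ C) :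
    volume A ^ l * volume B ^ (1 - l) ≤ volume C := by
  have mp := (EuclideanSpace.volume_preserving_symm_measurableEquiv_toLp (Fin n)).symm
  set e := (MeasurableEquiv.toLp 2 (Fin n → ℝ)) with he
  have hv : ∀ S : Set (En n), volume (e ⁻¹' S) = volume S := fun S => mp.measure_preimage_equiv S
  have hbox : ∀ S : Set (En n), S ⊆ Metric.closedBall 0 N →
      e ⁻¹' S ⊆ Icc (fun _ => -N) (fun _ => N) := by
    intro S hS y hy
    have h1 := hS hy
    rw [mem_closedBall_zero_iff] at h1
    have h2 : ∀ i, |y i| ≤ N := fun i => by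
      have := PiLp.norm_apply_le (p := 2) (e y) i
      exact this.trans h1
    exact ⟨fun i => (abs_le.1 (h2 i)).1, fun i => (abs_le.1 (h2 i)).2⟩
  have := bm_mul n (e ⁻¹' A) (e ⁻¹' B) (e ⁻¹' C) N (e.measurable hA) (e.measurable hB)
    (e.measurable hC) (hbox A hAN) (hbox B hBN) l hl0 hl1
    (fun a ha b hb => H _ ha _ hb)
  rwa [hv, hv, hv] at this

lemma bm_ball_bdd (n : ℕ) (hn : 2 ≤ n) (A C : Set (En n)) (N r : ℝ) (hr : 0 < r)
    (hA : MeasurableSet A) (hC : MeasurableSet C) (hAN : A ⊆ Metric.closedBall 0 N)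
    (H : ∀ a ∈ A, ∀ y : En n, ‖y‖ < r → a + y ∈ C) :
    volume A + ENNReal.ofReal (n * r * ballVol n ^ (1 / (n:ℝ))) * volume A ^ (((n:ℝ) - 1) / n)
      ≤ volume C := by
  have hn0 : (0:ℝ) < n := by positivity
  have hn2 : (2:ℝ) ≤ n := by exact_mod_cast hn
  have hbv := ballVol_pos n
  rcases eq_or_ne (volume A) 0 with h0 | h0
  · rw [h0, ENNReal.zero_rpow_of_pos (by apply div_pos <;> linarith)]; simp
  have hAt : volume A ≠ ⊤ := ((measure_mono hAN).trans_lt measure_closedBall_lt_top).ne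
  rcases eq_or_ne (volume C) ⊤ with hCt | hCt
  · simp [hCt]
  set α := (volume A).toReal with hα
  have hαpos : 0 < α := ENNReal.toReal_pos h0 hAt
  set a := α ^ (1 / (n:ℝ)) with ha
  set b := r * ballVol n ^ (1 / (n:ℝ)) with hb
  have hapos : 0 < a := by positivity
  have hbpos : 0 < b := mul_pos hr (rpow_pos_of_pos (ballVol_pos n) _)
  set l := a / (a + b) with hl
  have hl0 : 0 < l := by positivity
  have hl1 : l < 1 := by rw [hl, div_lt_one (by positivity)]; linarith
  have hl' : 1 - l = b / (a + b) := by rw [hl]; field_simp; ring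
  have hl1' : 0 < 1 - l := by linarith
  set M := max (l⁻¹ * N) ((1 - l)⁻¹ * r) with hM
  have key := bm_mul_En n (l⁻¹ • A) ((1 - l)⁻¹ • Metric.ball 0 r) C M
    (hA.const_smul₀ _) (measurableSet_ball.const_smul₀ _) hC
    (by
      rintro _ ⟨x, hx, rfl⟩
      have := hAN hx
      rw [mem_closedBall_zero_iff] at *
      simp only [norm_smul, norm_inv, Real.norm_eq_abs, abs_of_pos hl0]
      exact le_trans (by gcongr) (le_max_left _ _))
    (by
      rintro _ ⟨x, hx, rfl⟩
      rw [mem_ball_zero_iff] at hx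
      rw [mem_closedBall_zero_iff]
      simp only [norm_smul, norm_inv, Real.norm_eq_abs, abs_of_pos hl1']
      exact le_trans (by gcongr) (le_max_right _ _))
    l hl0 hl1
    (by
      rintro _ ⟨x, hx, rfl⟩ _ ⟨y, hy, rfl⟩
      rw [mem_ball_zero_iff] at hy
      simp only [smul_smul, mul_inv_cancel₀ hl0.ne', mul_inv_cancel₀ hl1'.ne', one_smul]
      exact H x hx y hy)
  rw [Measure.addHaar_smul, Measure.addHaar_smul, Measure.addHaar_ball_of_pos _ _ hr] at key
  simp only [finrank_euclideanSpace, Fintype.card_fin] at key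
  have e1 : volume A = ENNReal.ofReal (a ^ n) := by
    rw [ha, ← Real.rpow_natCast, ← Real.rpow_mul hαpos.le, one_div_mul_cancel hn0.ne', Real.rpow_one,
      hα, ENNReal.ofReal_toReal hAt]
  have e2 : volume (Metric.ball (0 : En n) 1) = ENNReal.ofReal (ballVol n) := by
    rw [ballVol, ENNReal.ofReal_toReal measure_ball_lt_top.ne]
  have e3 : ENNReal.ofReal (r ^ n) * volume (Metric.ball (0 : En n) 1) = ENNReal.ofReal (b ^ n) := by
    rw [e2, ← ENNReal.ofReal_mul (by positivity), hb, mul_pow, ← Real.rpow_natCast (ballVol n ^ _),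
      ← Real.rpow_mul (ballVol_pos n).le, one_div_mul_cancel hn0.ne', Real.rpow_one]
  rw [e3, e1, ← ENNReal.ofReal_mul (by positivity), ← ENNReal.ofReal_mul (by positivity)] at key
  have f1 : |l⁻¹ ^ n| * a ^ n = (a + b) ^ n := by
    rw [abs_of_pos (by positivity), ← mul_pow]; congr 1; rw [hl]; field_simp
  have f2 : |(1-l)⁻¹ ^ n| * b ^ n = (a + b) ^ n := by
    rw [abs_of_pos (by positivity), ← mul_pow]; congr 1; rw [hl']; field_simp
  rw [f1, f2, ← ENNReal.rpow_add_of_nonneg _ _ hl0.le hl1'.le] at key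
  simp only [add_sub_cancel, ENNReal.rpow_one] at key
  refine le_trans ?_ key
  rw [e1, ENNReal.ofReal_rpow_of_nonneg (by positivity) (by apply div_nonneg <;> linarith),
    ← ENNReal.ofReal_mul (by positivity), ← ENNReal.ofReal_add (by positivity) (by positivity)]
  apply ENNReal.ofReal_le_ofReal
  have f3 : (a ^ n) ^ (((n:ℝ) - 1) / n) = a ^ (n - 1) := by
    rw [← Real.rpow_natCast, ← Real.rpow_mul hapos.le, ← Real.rpow_natCast]
    congr 1
    rw [Nat.cast_sub (by omega)]
    field_simp; simp
  rw [f3, mul_assoc (n:ℝ), ← hb]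
  obtain ⟨k, rfl⟩ : ∃ k, n = k + 1 := ⟨n - 1, by omega⟩
  have := one_add_mul_le_pow (a := b / a) (by have : 0 < b / a := by positivity
                                              linarith) (k + 1)
  have h3 : a ^ (k+1) * (1 + ↑(k+1) * (b/a)) ≤ a ^ (k+1) * (1 + b / a) ^ (k+1) := by gcongr
  rw [← mul_pow] at h3
  have h4 : a * (1 + b/a) = a + b := by field_simp
  rw [h4] at h3
  refine le_trans (le_of_eq ?_) h3
  simp only [Nat.add_sub_cancel]
  field_simp
  ring

lemma bm_ball (n : ℕ) (hn : 2 ≤ n) (A C : Set (En n)) (r : ℝ) (hr : 0 < r)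
    (hA : MeasurableSet A) (hC : MeasurableSet C)
    (H : ∀ a ∈ A, ∀ y : En n, ‖y‖ < r → a + y ∈ C) :
    volume A + ENNReal.ofReal (n * r * ballVol n ^ (1 / (n:ℝ))) * volume A ^ (((n:ℝ) - 1) / n)
      ≤ volume C := by
  have hmono : Monotone (fun k : ℕ => A ∩ Metric.closedBall (0 : En n) k) := by
    intro i j hij x hx
    exact ⟨hx.1, Metric.closedBall_subset_closedBall (by exact_mod_cast hij) hx.2⟩
  have hU : ⋃ k : ℕ, (A ∩ Metric.closedBall (0 : En n) k) = A := by
    rw [← inter_iUnion, Metric.iUnion_closedBall_nat, inter_univ]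
  have ht : Tendsto (fun k : ℕ => volume (A ∩ Metric.closedBall (0 : En n) k)) atTop
      (nhds (volume A)) := by
    have := tendsto_measure_iUnion_atTop (μ := volume) hmono
    rwa [hU] at this
  have ht2 : Tendsto (fun k : ℕ => volume (A ∩ Metric.closedBall (0 : En n) k) +
      ENNReal.ofReal (n * r * ballVol n ^ (1 / (n:ℝ))) *
      volume (A ∩ Metric.closedBall (0 : En n) k) ^ (((n:ℝ) - 1) / n)) atTop
      (nhds (volume A + ENNReal.ofReal (n * r * ballVol n ^ (1 / (n:ℝ))) * volume A ^ (((n:ℝ) - 1) / n))) := by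
    apply ht.add
    apply ENNReal.Tendsto.const_mul _ (Or.inr ENNReal.ofReal_ne_top)
    exact (ENNReal.continuous_rpow_const.tendsto _).comp ht
  refine le_of_tendsto' ht2 (fun k => ?_)
  exact bm_ball_bdd n hn _ C k r hr (hA.inter measurableSet_closedBall) hC inter_subset_right
    (fun a ha y hy => H a ha.1 y hy)

end Part2

section Part3
open MeasureTheory Real Set Filter
open scoped ENNReal NNReal Pointwise

lemma vol_level (a : ℝ≥0∞) : volume {t : ℝ | t ∈ Ioi (0:ℝ) ∧ ENNReal.ofReal t < a} = a := by
  rcases eq_or_ne a ⊤ with rfl | ha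
  · have : {t : ℝ | t ∈ Ioi (0:ℝ) ∧ ENNReal.ofReal t < ⊤} = Ioi 0 := by ext; simp
    rw [this]; simp
  · have : {t : ℝ | t ∈ Ioi (0:ℝ) ∧ ENNReal.ofReal t < a} = Ioo 0 a.toReal := by
      ext t
      constructor
      · rintro ⟨h1, h2⟩
        exact ⟨h1, (ENNReal.ofReal_lt_iff_lt_toReal (le_of_lt h1) ha).1 h2⟩
      · rintro ⟨h1, h2⟩
        exact ⟨h1, (ENNReal.ofReal_lt_iff_lt_toReal (le_of_lt h1) ha).2 h2⟩
    rw [this, Real.volume_Ioo]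
    simp [ENNReal.ofReal_toReal ha]

lemma layercake_enn {α : Type*} [MeasurableSpace α] (μ : Measure α) [SFinite μ] {F : α → ℝ≥0∞}
    (hF : Measurable F) :
    ∫⁻ x, F x ∂μ = ∫⁻ t in Ioi (0:ℝ), μ {x | ENNReal.ofReal t < F x} := by
  have hS : MeasurableSet {q : α × ℝ | ENNReal.ofReal q.2 < F q.1} :=
    measurableSet_lt (by fun_prop) (by fun_prop)
  calc ∫⁻ x, F x ∂μ = ∫⁻ x, (volume.restrict (Ioi (0:ℝ))) (Prod.mk x ⁻¹' {q : α × ℝ | ENNReal.ofReal q.2 < F q.1}) ∂μ := by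
        apply lintegral_congr
        intro x
        rw [Measure.restrict_apply (measurable_prodMk_left hS), ← vol_level (F x)]
        congr 1
        ext t; simp [and_comm]
    _ = (μ.prod (volume.restrict (Ioi (0:ℝ)))) {q : α × ℝ | ENNReal.ofReal q.2 < F q.1} := by
        rw [Measure.prod_apply hS]
    _ = _ := by
        rw [Measure.prod_apply_symm hS]; rfl

lemma line_bound {n : ℕ} {f : En n → ℝ} (hf : Differentiable ℝ f) (x y : En n) :
    ENNReal.ofReal (f (x + y)) ≤ ENNReal.ofReal (f x) +
      ∫⁻ s in Icc (0:ℝ) 1, ‖fderiv ℝ f (x + s • y)‖ₑ * ‖y‖ₑ := by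
  have hd : ∀ s : ℝ, HasDerivAt (fun s : ℝ => f (x + s • y)) (fderiv ℝ f (x + s • y) y) s := by
    intro s
    have h1 : HasDerivAt (fun s : ℝ => x + s • y) y s := by
      simpa using ((hasDerivAt_id s).smul_const y).const_add x
    exact (hf (x + s • y)).hasFDerivAt.comp_hasDerivAt s h1
  have hm : Measurable (fun s : ℝ => fderiv ℝ f (x + s • y) y) :=
    ((measurable_fderiv_apply_const ℝ f y)).comp (by fun_prop)
  set I := ∫⁻ s in Icc (0:ℝ) 1, ‖fderiv ℝ f (x + s • y)‖ₑ * ‖y‖ₑ with hI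
  rcases eq_or_ne I ⊤ with h | h
  · simp [h]
  have hle : ∫⁻ s in Icc (0:ℝ) 1, ‖fderiv ℝ f (x + s • y) y‖ₑ ≤ I := by
    apply lintegral_mono
    intro s
    exact ContinuousLinearMap.le_opENorm _ _
  have hintg : IntegrableOn (fun s : ℝ => fderiv ℝ f (x + s • y) y) (Icc 0 1) volume :=
    ⟨hm.aestronglyMeasurable, (hle.trans_lt h.lt_top)⟩
  have hii : IntervalIntegrable (fun s : ℝ => fderiv ℝ f (x + s • y) y) volume 0 1 := by
    rw [intervalIntegrable_iff_integrableOn_Icc_of_le zero_le_one]; exact hintg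
  have ftc := intervalIntegral.integral_eq_sub_of_hasDerivAt (fun s _ => hd s) hii
  simp only [one_smul, zero_smul, add_zero] at ftc
  have h1 : f (x + y) - f x ≤ I.toReal := by
    rw [← ftc, intervalIntegral.integral_of_le zero_le_one, ← integral_Icc_eq_integral_Ioc]
    calc ∫ s in Icc (0:ℝ) 1, fderiv ℝ f (x + s • y) y
        ≤ ‖∫ s in Icc (0:ℝ) 1, fderiv ℝ f (x + s • y) y‖ := le_norm_self _
      _ ≤ (∫⁻ s in Icc (0:ℝ) 1, ‖fderiv ℝ f (x + s • y) y‖ₑ).toReal := by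
          have := enorm_integral_le_lintegral_enorm (μ := volume.restrict (Icc (0:ℝ) 1))
            (fun s : ℝ => fderiv ℝ f (x + s • y) y)
          rw [← toReal_enorm]
          exact ENNReal.toReal_mono (hle.trans_lt h.lt_top).ne this
      _ ≤ I.toReal := ENNReal.toReal_mono h hle
  calc ENNReal.ofReal (f (x+y)) ≤ ENNReal.ofReal (f x + I.toReal) :=
        ENNReal.ofReal_le_ofReal (by linarith)
    _ ≤ ENNReal.ofReal (f x) + ENNReal.ofReal I.toReal := ENNReal.ofReal_add_le
    _ = _ := by rw [ENNReal.ofReal_toReal h]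

/-- ball average -/
def bavg {n : ℕ} (k r : ℝ) (g : En n → ℝ≥0∞) (x : En n) : ℝ≥0∞ :=
  (volume (Metric.ball (0 : En n) k))⁻¹ * ∫⁻ w in Metric.ball (0 : En n) r, g (x + w)

lemma bavg_measurable {n : ℕ} (k r : ℝ) {g : En n → ℝ≥0∞} (hg : Measurable g) :
    Measurable (bavg k r g) := by
  unfold bavg
  apply Measurable.const_mul
  exact Measurable.lintegral_prod_right' (f := fun q : En n × En n => g (q.1 + q.2)) (by fun_prop)

lemma lintegral_bavg {n : ℕ} (k r : ℝ) {g : En n → ℝ≥0∞} (hg : Measurable g) :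
    ∫⁻ x, bavg k r g x = (volume (Metric.ball (0 : En n) k))⁻¹ *
      volume (Metric.ball (0 : En n) r) * ∫⁻ x, g x := by
  unfold bavg
  have hm : Measurable (fun q : En n × En n => g (q.1 + q.2)) := by fun_prop
  rw [lintegral_const_mul _ (Measurable.lintegral_prod_right' hm),
    lintegral_lintegral_swap hm.aemeasurable]
  simp_rw [lintegral_add_right_eq_self g]
  rw [lintegral_const, Measure.restrict_apply_univ]
  ring

lemma bavg_shift {n : ℕ} {f : En n → ℝ} (hf : Differentiable ℝ f) (k r : ℝ) (hr : 0 < r)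
    (x y : En n) (hy : ‖y‖ < r) :
    bavg k k (fun x => ENNReal.ofReal (f x)) (x + y) ≤
      bavg k k (fun x => ENNReal.ofReal (f x)) x +
      ENNReal.ofReal r * bavg k (k + r) (fun x => ‖fderiv ℝ f x‖ₑ) x := by
  have hfm : Measurable f := hf.continuous.measurable
  have hdm : Measurable (fun x => ‖fderiv ℝ f x‖ₑ) := (measurable_fderiv ℝ f).enorm
  have hyr : ‖y‖ₑ ≤ ENNReal.ofReal r := by
    rw [← ofReal_norm]; exact ENNReal.ofReal_le_ofReal hy.le
  unfold bavg
  set c := (volume (Metric.ball (0 : En n) k))⁻¹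
  have h1 : ∫⁻ w in Metric.ball (0 : En n) k, ENNReal.ofReal (f (x + y + w)) ≤
      (∫⁻ w in Metric.ball (0 : En n) k, ENNReal.ofReal (f (x + w))) +
      ∫⁻ w in Metric.ball (0 : En n) k, ∫⁻ s in Icc (0:ℝ) 1,
        ‖fderiv ℝ f (x + w + s • y)‖ₑ * ENNReal.ofReal r := by
    rw [← lintegral_add_left (by fun_prop)]
    apply lintegral_mono
    intro w
    dsimp only
    have := line_bound hf (x + w) y
    rw [add_right_comm] at this
    refine this.trans ?_
    gcongr
  have h2 : ∫⁻ w in Metric.ball (0 : En n) k, ∫⁻ s in Icc (0:ℝ) 1,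
        ‖fderiv ℝ f (x + w + s • y)‖ₑ * ENNReal.ofReal r ≤
      ENNReal.ofReal r * ∫⁻ w in Metric.ball (0 : En n) (k + r), ‖fderiv ℝ f (x + w)‖ₑ := by
    rw [lintegral_lintegral_swap (by
      apply Measurable.aemeasurable
      apply Measurable.mul_const
      exact hdm.comp (by fun_prop : Measurable fun q : En n × ℝ => x + q.1 + q.2 • y))]
    calc _ ≤ ∫⁻ s in Icc (0:ℝ) 1, ENNReal.ofReal r * ∫⁻ w in Metric.ball (0 : En n) (k + r), ‖fderiv ℝ f (x + w)‖ₑ := by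
          apply setLIntegral_mono' measurableSet_Icc
          intro s hs
          have hme : Measurable (fun w : En n => ‖fderiv ℝ f (x + w + s • y)‖ₑ) :=
            hdm.comp (by fun_prop : Measurable fun w : En n => x + w + s • y)
          rw [lintegral_mul_const _ hme, mul_comm]
          refine mul_le_mul' le_rfl ?_
          have e : ∫⁻ w in Metric.ball (0 : En n) k, ‖fderiv ℝ f (x + w + s • y)‖ₑ =
              ∫⁻ w, (Metric.ball (s • y : En n) k).indicator (fun w => ‖fderiv ℝ f (x + w)‖ₑ) w := by
            rw [← lintegral_indicator measurableSet_ball,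
              ← lintegral_add_right_eq_self ((Metric.ball (s • y : En n) k).indicator
                (fun w => ‖fderiv ℝ f (x + w)‖ₑ)) (s • y)]
            apply lintegral_congr
            intro w
            by_cases hw : w ∈ Metric.ball (0 : En n) k
            · have hw' : w + s • y ∈ Metric.ball (s • y : En n) k := by
                simpa [Metric.mem_ball, dist_eq_norm] using hw
              rw [indicator_of_mem hw, indicator_of_mem hw', add_assoc]
            · have hw' : w + s • y ∉ Metric.ball (s • y : En n) k := by
                simpa [Metric.mem_ball, dist_eq_norm] using hw
              rw [indicator_of_notMem hw, indicator_of_notMem hw']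
          rw [e, lintegral_indicator measurableSet_ball]
          apply lintegral_mono_set
          apply Metric.ball_subset_ball'
          have : ‖s • y‖ ≤ ‖y‖ := by
            rw [norm_smul, Real.norm_eq_abs, abs_of_nonneg hs.1]
            exact mul_le_of_le_one_left (norm_nonneg _) hs.2
          rw [dist_zero_right]; linarith
      _ = _ := by simp
  calc c * ∫⁻ w in Metric.ball (0 : En n) k, ENNReal.ofReal (f (x + y + w))
      ≤ c * ((∫⁻ w in Metric.ball (0 : En n) k, ENNReal.ofReal (f (x + w))) +
      ENNReal.ofReal r * ∫⁻ w in Metric.ball (0 : En n) (k + r), ‖fderiv ℝ f (x + w)‖ₑ) := by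
        gcongr; exact h1.trans (by gcongr)
    _ = _ := by ring

lemma sob_avg (n : ℕ) (hn : 2 ≤ n) {f : En n → ℝ} (hf : Differentiable ℝ f)
    (hfi : ∫⁻ x, ENNReal.ofReal (f x) ≠ ⊤) (k : ℝ) (hk : 0 < k) :
    ENNReal.ofReal (n * ballVol n ^ (1 / (n:ℝ))) *
      ∫⁻ t in Ioi (0:ℝ), volume {x | ENNReal.ofReal t < bavg k k (fun x => ENNReal.ofReal (f x)) x}
        ^ (((n:ℝ) - 1) / n) ≤ ∫⁻ x, ‖fderiv ℝ f x‖ₑ := by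
  have hfm : Measurable f := hf.continuous.measurable
  have hdm : Measurable (fun x => ‖fderiv ℝ f x‖ₑ) := (measurable_fderiv ℝ f).enorm
  have hbv := ballVol_pos n
  set F := bavg k k (fun x => ENNReal.ofReal (f x)) with hF
  have hFm : Measurable F := bavg_measurable k k (by fun_prop)
  have vk : volume (Metric.ball (0 : En n) k) ≠ 0 := (Metric.measure_ball_pos _ _ hk).ne'
  have vkt : volume (Metric.ball (0 : En n) k) ≠ ⊤ := measure_ball_lt_top.ne
  have hFi : ∫⁻ x, F x ≠ ⊤ := by
    rw [hF, lintegral_bavg k k (by fun_prop), ENNReal.inv_mul_cancel vk vkt, one_mul]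
    exact hfi
  set Z := ∫⁻ t in Ioi (0:ℝ), volume {x | ENNReal.ofReal t < F x} ^ (((n:ℝ) - 1) / n) with hZ
  set I := ∫⁻ x, ‖fderiv ℝ f x‖ₑ with hI
  have main : ∀ r : ℝ, 0 < r → ENNReal.ofReal (n * ballVol n ^ (1 / (n:ℝ))) * Z ≤
      (volume (Metric.ball (0 : En n) k))⁻¹ * volume (Metric.ball (0 : En n) (k + r)) * I := by
    intro r hr
    set m := bavg k (k + r) (fun x => ‖fderiv ℝ f x‖ₑ) with hm
    have hmm : Measurable m := bavg_measurable k (k + r) hdm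
    have h1 : ∫⁻ x, (F x + ENNReal.ofReal r * m x) = (∫⁻ x, F x) + ENNReal.ofReal r *
        ((volume (Metric.ball (0 : En n) k))⁻¹ * volume (Metric.ball (0 : En n) (k + r)) * I) := by
      rw [lintegral_add_left hFm, lintegral_const_mul _ hmm, hm, lintegral_bavg _ _ hdm]
    have mm : Measurable (fun t : ℝ => volume {x | ENNReal.ofReal t < F x}) :=
      Antitone.measurable (fun s t hst => measure_mono
        (fun a ha => lt_of_le_of_lt (ENNReal.ofReal_le_ofReal hst) ha))
    have h2 : (∫⁻ x, F x) + ENNReal.ofReal (n * r * ballVol n ^ (1 / (n:ℝ))) * Z ≤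
        ∫⁻ x, (F x + ENNReal.ofReal r * m x) := by
      rw [layercake_enn volume hFm, layercake_enn volume (by fun_prop : Measurable fun x => F x + ENNReal.ofReal r * m x), hZ,
        ← lintegral_const_mul _ (by fun_prop), ← lintegral_add_left mm]
      apply lintegral_mono
      intro t
      apply bm_ball n hn _ _ r hr
      · exact measurableSet_lt measurable_const hFm
      · exact measurableSet_lt measurable_const (by fun_prop)
      · intro a ha y hy
        have := bavg_shift hf k r hr (a + y) (-y) (by simpa using hy)
        simp only [add_neg_cancel_right] at this
        exact lt_of_lt_of_le ha this
    rw [h1] at h2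
    have h3 := (ENNReal.add_le_add_iff_left hFi).1 h2
    have h4 : ENNReal.ofReal (n * r * ballVol n ^ (1 / (n:ℝ))) =
        ENNReal.ofReal r * ENNReal.ofReal (n * ballVol n ^ (1 / (n:ℝ))) := by
      rw [← ENNReal.ofReal_mul hr.le]; congr 1; ring
    rw [h4, mul_assoc] at h3
    exact (ENNReal.mul_le_mul_iff_right (by simpa using hr) ENNReal.ofReal_ne_top).1 h3
  rcases eq_or_ne I ⊤ with hIt | hIt
  · rw [hIt]; exact le_top
  have lim : Tendsto (fun r : ℝ => (volume (Metric.ball (0 : En n) k))⁻¹ *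
      volume (Metric.ball (0 : En n) (k + r)) * I) (nhdsWithin 0 (Ioi 0))
      (nhds ((volume (Metric.ball (0 : En n) k))⁻¹ * volume (Metric.ball (0 : En n) k) * I)) := by
    have e : ∀ r, 0 < r → volume (Metric.ball (0 : En n) r) =
        ENNReal.ofReal (r ^ n) * volume (Metric.ball (0 : En n) 1) := by
      intro r hr
      rw [Measure.addHaar_ball_of_pos _ _ hr]; simp
    have : Tendsto (fun r : ℝ => volume (Metric.ball (0 : En n) (k + r))) (nhdsWithin 0 (Ioi 0))
      (nhds (volume (Metric.ball (0 : En n) k))) := by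
      rw [e k hk]
      have h1 : Tendsto (fun r : ℝ => ENNReal.ofReal ((k + r) ^ n) * volume (Metric.ball (0 : En n) 1))
          (nhdsWithin 0 (Ioi 0)) (nhds (ENNReal.ofReal (k ^ n) * volume (Metric.ball (0 : En n) 1))) := by
        apply ENNReal.Tendsto.mul_const _ (Or.inr measure_ball_lt_top.ne)
        apply ENNReal.tendsto_ofReal
        have : Continuous (fun r : ℝ => (k + r) ^ n) := by fun_prop
        have := this.tendsto 0
        simp only [add_zero] at this
        exact this.mono_left nhdsWithin_le_nhds
      refine h1.congr' ?_
      filter_upwards [self_mem_nhdsWithin] with r hr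
      have hr' : (0:ℝ) < r := hr
      rw [e (k + r) (by linarith)]
    apply ENNReal.Tendsto.mul_const _ (Or.inr hIt)
    exact ENNReal.Tendsto.const_mul this (Or.inr (ENNReal.inv_ne_top.2 vk))
  rw [ENNReal.inv_mul_cancel vk vkt, one_mul] at lim
  refine ge_of_tendsto lim ?_
  filter_upwards [self_mem_nhdsWithin] with r hr
  exact main r hr

lemma sob (n : ℕ) (hn : 2 ≤ n) {f : En n → ℝ} (hf : Differentiable ℝ f)
    (hfi : ∫⁻ x, ENNReal.ofReal (f x) ≠ ⊤) :
    ENNReal.ofReal (n * ballVol n ^ (1 / (n:ℝ))) *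
      ∫⁻ t in Ioi (0:ℝ), volume {x | t < f x} ^ (((n:ℝ) - 1) / n) ≤ ∫⁻ x, ‖fderiv ℝ f x‖ₑ := by
  have hfm : Measurable f := hf.continuous.measurable
  have hn2 : (2:ℝ) ≤ n := by exact_mod_cast hn
  have hp : 0 < ((n:ℝ) - 1) / n := by apply div_pos <;> linarith
  set κ : ℕ → ℝ := fun j => 1 / ((j:ℝ) + 1) with hκ
  have κpos : ∀ j, 0 < κ j := fun j => by positivity
  have κlim : Tendsto κ atTop (nhds 0) := tendsto_one_div_add_atTop_nhds_zero_nat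
  set F : ℕ → En n → ℝ≥0∞ := fun j => bavg (κ j) (κ j) (fun x => ENNReal.ofReal (f x)) with hF
  have hFm : ∀ j, Measurable (F j) := fun j => bavg_measurable _ _ (by fun_prop)
  have conv : ∀ t : ℝ, 0 < t → ∀ x, t < f x → ∀ᶠ j in atTop, ENNReal.ofReal t < F j x := by
    intro t ht x hx
    obtain ⟨t', htt', ht'x⟩ := exists_between hx
    have hopen : {w : En n | t' < f w} ∈ nhds x := hf.continuous.continuousAt.eventually (lt_mem_nhds ht'x)
    obtain ⟨δ, hδ, hball⟩ := Metric.mem_nhds_iff.1 hopen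
    filter_upwards [κlim.eventually (gt_mem_nhds hδ)] with j hj
    have vk : volume (Metric.ball (0 : En n) (κ j)) ≠ 0 := (Metric.measure_ball_pos _ _ (κpos j)).ne'
    have vkt : volume (Metric.ball (0 : En n) (κ j)) ≠ ⊤ := measure_ball_lt_top.ne
    calc ENNReal.ofReal t < ENNReal.ofReal t' := (ENNReal.ofReal_lt_ofReal_iff (by linarith)).2 htt'
      _ = (volume (Metric.ball (0 : En n) (κ j)))⁻¹ * ∫⁻ w in Metric.ball (0 : En n) (κ j), ENNReal.ofReal t' := by
          rw [lintegral_const, Measure.restrict_apply_univ, mul_comm (ENNReal.ofReal t'), ← mul_assoc,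
            ENNReal.inv_mul_cancel vk vkt, one_mul]
      _ ≤ F j x := by
          simp only [hF, bavg]
          refine mul_le_mul' le_rfl ?_
          apply setLIntegral_mono' measurableSet_ball
          intro w hw
          apply ENNReal.ofReal_le_ofReal
          have : x + w ∈ Metric.ball x δ := by
            rw [mem_ball_zero_iff] at hw
            simp [Metric.mem_ball, dist_eq_norm]; linarith
          exact le_of_lt (hball this)
  have hvol : ∀ t : ℝ, 0 < t → volume {x | t < f x} ≤
      liminf (fun j => volume {x | ENNReal.ofReal t < F j x}) atTop := by
    intro t ht
    have ms : ∀ j, MeasurableSet {x | ENNReal.ofReal t < F j x} := fun j =>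
      measurableSet_lt measurable_const (hFm j)
    calc volume {x | t < f x} = ∫⁻ x, ({x | t < f x} : Set (En n)).indicator 1 x := by
          rw [lintegral_indicator_one (measurableSet_lt measurable_const hfm)]
      _ ≤ ∫⁻ x, liminf (fun j => ({x | ENNReal.ofReal t < F j x} : Set (En n)).indicator (1 : En n → ℝ≥0∞) x) atTop := by
          apply lintegral_mono
          intro x
          by_cases hx : t < f x
          · have h1 : ({x | t < f x} : Set (En n)).indicator (1 : En n → ℝ≥0∞) x = 1 := by
              simp [hx]
            rw [h1]
            apply le_liminf_of_le
            · isBoundedDefault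
            filter_upwards [conv t ht x hx] with j hj
            simp [hj]
          · simp [hx]
      _ ≤ liminf (fun j => ∫⁻ x, ({x | ENNReal.ofReal t < F j x} : Set (En n)).indicator (1 : En n → ℝ≥0∞) x) atTop :=
          lintegral_liminf_le (fun j => measurable_one.indicator (ms j))
      _ = _ := by simp_rw [lintegral_indicator_one (ms _)]
  have mm : ∀ j, Measurable (fun t : ℝ => volume {x | ENNReal.ofReal t < F j x} ^ (((n:ℝ) - 1) / n)) := by
    intro j
    apply Measurable.pow_const
    exact Antitone.measurable (fun s t hst => measure_mono
        (fun a ha => lt_of_le_of_lt (ENNReal.ofReal_le_ofReal hst) ha))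
  calc ENNReal.ofReal (n * ballVol n ^ (1 / (n:ℝ))) *
      ∫⁻ t in Ioi (0:ℝ), volume {x | t < f x} ^ (((n:ℝ) - 1) / n)
      ≤ ENNReal.ofReal (n * ballVol n ^ (1 / (n:ℝ))) *
      ∫⁻ t in Ioi (0:ℝ), liminf (fun j => volume {x | ENNReal.ofReal t < F j x} ^ (((n:ℝ) - 1) / n)) atTop := by
        refine mul_le_mul' le_rfl ?_
        apply setLIntegral_mono' measurableSet_Ioi
        intro t ht
        have h1 := ENNReal.rpow_le_rpow (hvol t ht) hp.le
        refine h1.trans (le_of_eq ?_)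
        exact ((ENNReal.orderIsoRpow _ hp).liminf_apply)
    _ ≤ ENNReal.ofReal (n * ballVol n ^ (1 / (n:ℝ))) *
      liminf (fun j => ∫⁻ t in Ioi (0:ℝ), volume {x | ENNReal.ofReal t < F j x} ^ (((n:ℝ) - 1) / n)) atTop := by
        gcongr
        exact lintegral_liminf_le mm
    _ = liminf (fun j => ENNReal.ofReal (n * ballVol n ^ (1 / (n:ℝ))) *
        ∫⁻ t in Ioi (0:ℝ), volume {x | ENNReal.ofReal t < F j x} ^ (((n:ℝ) - 1) / n)) atTop := by
        rw [ENNReal.liminf_const_mul_of_ne_top ENNReal.ofReal_ne_top]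
    _ ≤ _ := by
        refine liminf_le_of_le (by isBoundedDefault) (fun b hb => ?_)
        obtain ⟨j, hj⟩ := hb.exists
        exact hj.trans (sob_avg n hn hf hfi (κ j) (κpos j))

end Part3

section Part4
open MeasureTheory Real Set Filter
open scoped ENNReal NNReal Pointwise

lemma mono_of_hd {f f' : ℝ → ℝ} {a b : ℝ}
    (h : ∀ t ∈ Icc a b, HasDerivWithinAt f (f' t) (Icc a b) t) (h0 : ∀ t ∈ Icc a b, 0 ≤ f' t) :
    MonotoneOn f (Icc a b) := by
  apply monotoneOn_of_hasDerivWithinAt_nonneg (convex_Icc a b) (f' := f')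
  · exact fun t ht => (h t ht).continuousWithinAt
  · intro t ht
    exact (h t (interior_subset ht)).mono interior_subset
  · intro t ht
    exact h0 t (interior_subset ht)

lemma quad_near {g g1 g2 : ℝ → ℝ} (h1 : ∀ t ∈ Icc (0:ℝ) 1, HasDerivWithinAt g (g1 t) (Icc 0 1) t)
    (h2 : ∀ t ∈ Icc (0:ℝ) 1, HasDerivWithinAt g1 (g2 t) (Icc 0 1) t)
    (h3 : ContinuousOn g2 (Icc 0 1)) (g0 : g 0 = 0) (g10 : g1 0 = 0) (g20 : 0 < g2 0) :
    ∃ c > 0, ∃ δ > 0, ∃ C > 0, (∀ t ∈ Icc (0:ℝ) 1, t ≤ δ → c * t ^ 2 ≤ g t) ∧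
      ∀ t ∈ Icc (0:ℝ) 1, g t ≤ C * t ^ 2 := by
  obtain ⟨K, hK⟩ := isCompact_Icc.exists_bound_of_continuousOn h3
  have hK0 : 0 ≤ K := (norm_nonneg _).trans (hK 0 (by simp))
  have b1 : ∀ t ∈ Icc (0:ℝ) 1, ‖g1 t‖ ≤ K * t := by
    intro t ht
    have := (convex_Icc (0:ℝ) 1).norm_image_sub_le_of_norm_hasDerivWithin_le h2 hK
      (left_mem_Icc.2 zero_le_one) ht
    simpa [g10, abs_of_nonneg ht.1] using this
  have b2 : ∀ t ∈ Icc (0:ℝ) 1, g t ≤ (K + 1) * t ^ 2 := by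
    intro t ht
    have := (convex_Icc (0:ℝ) t).norm_image_sub_le_of_norm_hasDerivWithin_le
      (f := g) (f' := g1) (C := K * t)
      (fun s hs => (h1 s ⟨hs.1, hs.2.trans ht.2⟩).mono (Icc_subset_Icc_right ht.2))
      (fun s hs => (b1 s ⟨hs.1, hs.2.trans ht.2⟩).trans (by gcongr; exact hs.2))
      (left_mem_Icc.2 ht.1) (right_mem_Icc.2 ht.1)
    simp only [g0, sub_zero, Real.norm_eq_abs, abs_of_nonneg ht.1] at this
    nlinarith [le_abs_self (g t), sq_nonneg t]
  -- lower
  have hev : ∀ᶠ t in nhdsWithin 0 (Icc (0:ℝ) 1), g2 0 / 2 < g2 t :=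
    (h3 0 (by simp)).eventually (lt_mem_nhds (by linarith))
  rw [eventually_nhdsWithin_iff, Metric.eventually_nhds_iff] at hev
  obtain ⟨δ, hδ, hev⟩ := hev
  set δ' := min (δ / 2) 1
  have hδ' : 0 < δ' := by positivity
  have hg2 : ∀ t ∈ Icc 0 δ', g2 0 / 2 ≤ g2 t := by
    intro t ht
    have h1 : t ≤ δ / 2 := ht.2.trans (min_le_left _ _)
    have h2 : t ≤ 1 := ht.2.trans (min_le_right _ _)
    apply le_of_lt
    apply hev
    · rw [dist_zero_right, Real.norm_eq_abs, abs_of_nonneg ht.1]; linarith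
    · exact ⟨ht.1, h2⟩
  have hsub : Icc 0 δ' ⊆ Icc (0:ℝ) 1 := Icc_subset_Icc_right (min_le_right _ _)
  set k := g2 0 / 2
  have m1 : MonotoneOn (fun t => g1 t - k * t) (Icc 0 δ') := by
    apply mono_of_hd (f' := fun t => g2 t - k)
    · intro t ht
      have := ((h2 t (hsub ht)).mono hsub).sub ((hasDerivWithinAt_id t (Icc 0 δ')).const_mul k)
      exact this.congr_deriv (by simp)
    · intro t ht; linarith [hg2 t ht]
  have l1 : ∀ t ∈ Icc 0 δ', k * t ≤ g1 t := by
    intro t ht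
    have := m1 (left_mem_Icc.2 hδ'.le) ht ht.1
    simp [g10] at this; linarith
  have m2 : MonotoneOn (fun t => g t - k / 2 * t ^ 2) (Icc 0 δ') := by
    apply mono_of_hd (f' := fun t => g1 t - k * t)
    · intro t ht
      have := ((h1 t (hsub ht)).mono hsub).sub (((hasDerivWithinAt_id t (Icc 0 δ')).pow 2).const_mul (k/2))
      refine this.congr_deriv ?_
      simp; ring
    · intro t ht; linarith [l1 t ht]
  refine ⟨k / 2, by positivity, δ', hδ', K + 1, by linarith, ?_, b2⟩
  intro t ht htd
  have := m2 (left_mem_Icc.2 hδ'.le) ⟨ht.1, htd⟩ ht.1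
  simp [g0] at this; linarith

lemma hit_zero {g θ : ℝ → ℝ} {a δ : ℝ} (ha : 0 < a) (hδ : 0 < δ)
    (hg : ∀ t ∈ Ioo (0:ℝ) 1, t < δ → a * t ≤ g t) (hm : ∀ s, θ s ∈ Ioo (0:ℝ) 1)
    (ode : ∀ s, HasDerivAt θ (-(Real.sqrt (g (θ s)))) s) (lim : Tendsto θ atTop (nhds 0)) : False := by
  obtain ⟨s0, hs0⟩ := eventually_atTop.1 (lim.eventually (gt_mem_nhds hδ))
  set k := Real.sqrt a / 2
  have hk : 0 < k := by have := Real.sqrt_pos.2 ha; positivity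
  have key : ∀ s, s0 ≤ s → Real.sqrt (θ s) ≤ Real.sqrt (θ s0) - k * (s - s0) := by
    intro s hs
    have := mono_of_hd (f := fun r => - Real.sqrt (θ r) - k * r)
      (f' := fun r => Real.sqrt (g (θ r)) / (2 * Real.sqrt (θ r)) - k) (a := s0) (b := s) ?_ ?_
      (left_mem_Icc.2 hs) (right_mem_Icc.2 hs) hs
    · simp only at this; linarith
    · intro r hr
      apply HasDerivAt.hasDerivWithinAt
      have h1 := ((ode r).sqrt (hm r).1.ne').neg.sub ((hasDerivAt_id r).const_mul k)
      refine h1.congr_deriv ?_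
      simp; ring
    · intro r hr
      have h1 : Real.sqrt a * Real.sqrt (θ r) ≤ Real.sqrt (g (θ r)) := by
        rw [← Real.sqrt_mul ha.le]
        exact Real.sqrt_le_sqrt (hg _ (hm r) (hs0 r hr.1))
      have h2 : 0 < Real.sqrt (θ r) := Real.sqrt_pos.2 (hm r).1
      rw [sub_nonneg, le_div_iff₀ (by positivity)]
      simp only [k]; linarith
  have := key (s0 + Real.sqrt (θ s0) / k + 1) (by
    have : 0 ≤ Real.sqrt (θ s0) / k := by positivity
    linarith)
  have e : k * (s0 + Real.sqrt (θ s0) / k + 1 - s0) = Real.sqrt (θ s0) + k := by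
    field_simp; ring
  rw [e] at this
  linarith [Real.sqrt_nonneg (θ (s0 + Real.sqrt (θ s0) / k + 1))]

/-- vanishing first derivative at the well -/
lemma well_deriv_zero {g θ : ℝ → ℝ} {a : ℝ} (h1 : HasDerivWithinAt g a (Icc 0 1) 0) (g0 : g 0 = 0)
    (hpos : ∀ t ∈ Ioo (0:ℝ) 1, 0 < g t) (hm : ∀ s, θ s ∈ Ioo (0:ℝ) 1)
    (ode : ∀ s, HasDerivAt θ (-(Real.sqrt (g (θ s)))) s) (lim : Tendsto θ atTop (nhds 0)) : a = 0 := by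
  have h2 := (hasDerivWithinAt_iff_tendsto_slope.1 h1)
  have ex : ∀ p : ℝ → Prop, (∀ᶠ t in nhdsWithin 0 (Icc (0:ℝ) 1 \ {0}), p t) →
      ∃ δ > 0, ∀ t ∈ Ioo (0:ℝ) 1, t < δ → p t := by
    intro p hp
    rw [eventually_nhdsWithin_iff, Metric.eventually_nhds_iff] at hp
    obtain ⟨δ, hδ, hp⟩ := hp
    refine ⟨δ, hδ, fun t ht htd => hp ?_ ⟨⟨ht.1.le, ht.2.le⟩, ht.1.ne'⟩⟩
    rw [dist_zero_right, Real.norm_eq_abs, abs_of_pos ht.1]; exact htd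
  rcases lt_trichotomy a 0 with h | h | h
  · exfalso
    obtain ⟨δ, hδ, hp⟩ := ex _ (h2.eventually (gt_mem_nhds h))
    have ht : min (δ/2) (1/2) ∈ Ioo (0:ℝ) 1 :=
      ⟨by positivity, lt_of_le_of_lt (min_le_right _ _) (by norm_num)⟩
    have := hp _ ht (lt_of_le_of_lt (min_le_left _ _) (by linarith))
    simp only [slope, g0, vsub_eq_sub, sub_zero, smul_eq_mul] at this
    have h3 := hpos _ ht
    have h4 := ht.1
    have : 0 < (min (δ/2) (1/2))⁻¹ * g (min (δ/2) (1/2)) := by positivity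
    linarith
  · exact h
  · exfalso
    obtain ⟨δ, hδ, hp⟩ := ex _ (h2.eventually (lt_mem_nhds (show a / 2 < a by linarith)))
    refine hit_zero (half_pos h) hδ ?_ hm ode lim
    intro t ht htd
    have := hp t ht htd
    simp only [slope, g0, vsub_eq_sub, sub_zero, smul_eq_mul] at this
    rw [inv_mul_eq_div, lt_div_iff₀ ht.1] at this
    exact this.le

lemma exp_decay {g θ : ℝ → ℝ} {c : ℝ} (hc : 0 < c)
    (hg : ∀ t ∈ Ioo (0:ℝ) 1, t ≤ 1 / 2 → c ^ 2 * t ^ 2 ≤ g t) (hm : ∀ s, θ s ∈ Ioo (0:ℝ) 1)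
    (ode : ∀ s, HasDerivAt θ (-(Real.sqrt (g (θ s)))) s) (h0 : θ 0 = 1 / 2) (anti : Antitone θ) :
    ∀ s, 0 ≤ s → θ s ≤ Real.exp (- c * s) := by
  intro s hs
  have := mono_of_hd (f := fun r => - (θ r * Real.exp (c * r)))
      (f' := fun r => (Real.sqrt (g (θ r)) - c * θ r) * Real.exp (c * r)) (a := 0) (b := s) ?_ ?_
      (left_mem_Icc.2 hs) (right_mem_Icc.2 hs) hs
  · simp only [h0, mul_zero, Real.exp_zero] at this
    have h3 : Real.exp (- c * s) * Real.exp (c * s) = 1 := by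
      rw [← Real.exp_add]; simp
    have h4 := Real.exp_pos (c * s)
    by_contra hcon
    push Not at hcon
    nlinarith
  · intro r hr
    apply HasDerivAt.hasDerivWithinAt
    have h1 : HasDerivAt (fun r => Real.exp (c * r)) (Real.exp (c * r) * c) r := by
      have := ((hasDerivAt_id r).const_mul c).exp
      simpa using this
    refine ((ode r).mul h1).neg.congr_deriv ?_
    ring
  · intro r hr
    have h1 : θ r ≤ 1 / 2 := by rw [← h0]; exact anti hr.1
    have h2 : c * θ r ≤ Real.sqrt (g (θ r)) := by
      apply Real.le_sqrt_of_sq_le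
      have := hg _ (hm r) h1
      nlinarith
    exact mul_nonneg (by linarith) (Real.exp_pos _).le

section
variable {W η : ℝ → ℝ}

lemma W_hd1 (hW : DoubleWell W) : ∀ t ∈ Icc (0:ℝ) 1,
    HasDerivWithinAt W (derivWithin W (Icc 0 1) t) (Icc 0 1) t := by
  intro t ht
  exact ((hW.contDiffOn.differentiableOn (by norm_num)) t ht).hasDerivWithinAt

lemma W_hd2 (hW : DoubleWell W) : ∀ t ∈ Icc (0:ℝ) 1,
    HasDerivWithinAt (derivWithin W (Icc 0 1)) (iteratedDerivWithin 2 W (Icc 0 1) t) (Icc 0 1) t := by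
  intro t ht
  have h1 : ContDiffOn ℝ 1 (derivWithin W (Icc 0 1)) (Icc 0 1) :=
    hW.contDiffOn.derivWithin (uniqueDiffOn_Icc zero_lt_one) (by norm_num)
  have h2 := ((h1.differentiableOn (by norm_num)) t ht).hasDerivWithinAt
  refine h2.congr_deriv ?_
  rw [iteratedDerivWithin_succ, iteratedDerivWithin_one]

lemma W_c2 (hW : DoubleWell W) : ContinuousOn (iteratedDerivWithin 2 W (Icc 0 1)) (Icc 0 1) := by
  obtain ⟨L, hL⟩ := hW.lipschitzSecond
  exact hL.continuousOn

lemma W_cont (hW : DoubleWell W) : ContinuousOn W (Icc 0 1) := hW.contDiffOn.continuousOn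

lemma refl_map : MapsTo (fun t : ℝ => 1 - t) (Icc (0:ℝ) 1) (Icc 0 1) := by
  intro t ht; exact ⟨by linarith [ht.2], by linarith [ht.1]⟩

lemma refl_hd {f : ℝ → ℝ} {f' : ℝ} {t : ℝ}
    (h : HasDerivWithinAt f f' (Icc 0 1) (1 - t)) :
    HasDerivWithinAt (fun t => f (1 - t)) (- f') (Icc 0 1) t := by
  have h1 : HasDerivWithinAt (fun t : ℝ => 1 - t) (-1) (Icc 0 1) t := by
    simpa using (hasDerivWithinAt_id t (Icc (0:ℝ) 1)).const_sub 1
  have := HasDerivWithinAt.comp t h h1 refl_map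
  exact this.congr_deriv (by simp)

lemma eta_refl_ode (hη : TransitionProfile W η) (s : ℝ) :
    HasDerivAt (fun s => 1 - η (-s)) (-(Real.sqrt (W (1 - (1 - η (-s)))))) s := by
  have h1 := (hη.ode (-s)).comp s (hasDerivAt_neg s)
  have := h1.const_sub 1
  refine this.congr_deriv ?_
  simp

lemma eta_refl_lim (hη : TransitionProfile W η) : Tendsto (fun s => 1 - η (-s)) atTop (nhds 0) := by
  have := (hη.tendsto_bot.comp tendsto_neg_atTop_atBot).const_sub 1
  simpa using this

lemma W_d0 (hW : DoubleWell W) (hη : TransitionProfile W η) : derivWithin W (Icc 0 1) 0 = 0 :=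
  well_deriv_zero (W_hd1 hW 0 (by simp)) hW.zero_at_zero hW.pos_on hη.mem hη.ode hη.tendsto_top

lemma W_d1 (hW : DoubleWell W) (hη : TransitionProfile W η) : derivWithin W (Icc 0 1) 1 = 0 := by
  have := well_deriv_zero (g := fun t => W (1 - t)) (θ := fun s => 1 - η (-s))
    (refl_hd (f' := derivWithin W (Icc 0 1) 1) (by rw [sub_zero]; exact W_hd1 hW 1 (by simp))) (by simp [hW.zero_at_one])
    (fun t ht => hW.pos_on _ ⟨by linarith [ht.2], by linarith [ht.1]⟩)
    (fun s => ⟨by linarith [(hη.mem (-s)).2], by linarith [(hη.mem (-s)).1]⟩)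
    (eta_refl_ode hη) (eta_refl_lim hη)
  linarith

/-- two-sided quadratic bounds -/
lemma W_quad (hW : DoubleWell W) (hη : TransitionProfile W η) :
    ∃ c > 0, ∃ C > 0, ∀ t ∈ Icc (0:ℝ) 1, c ^ 2 * (t * (1 - t)) ^ 2 ≤ W t ∧
      W t ≤ C ^ 2 * (t * (1 - t)) ^ 2 := by
  obtain ⟨c1, hc1, δ1, hδ1, C1, hC1, l1, u1⟩ := quad_near (W_hd1 hW) (W_hd2 hW) (W_c2 hW)
    hW.zero_at_zero (W_d0 hW hη) hW.second_pos_zero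
  obtain ⟨c2, hc2, δ2, hδ2, C2, hC2, l2, u2⟩ := quad_near (g := fun t => W (1 - t))
    (g1 := fun t => - derivWithin W (Icc 0 1) (1 - t))
    (g2 := fun t => iteratedDerivWithin 2 W (Icc 0 1) (1 - t))
    (fun t ht => refl_hd (W_hd1 hW _ (refl_map ht)))
    (fun t ht => (refl_hd (W_hd2 hW _ (refl_map ht))).neg.congr_deriv (by simp))
    ((W_c2 hW).comp (by fun_prop) refl_map) (by simp [hW.zero_at_one])
    (by simp [W_d1 hW hη]) (by simpa using hW.second_pos_one)
  have l2' : ∀ t ∈ Icc (0:ℝ) 1, 1 - t ≤ δ2 → c2 * (1 - t) ^ 2 ≤ W t := by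
    intro t ht h
    simpa using l2 (1 - t) (refl_map ht) h
  have u2' : ∀ t ∈ Icc (0:ℝ) 1, W t ≤ C2 * (1 - t) ^ 2 := by
    intro t ht
    simpa using u2 (1 - t) (refl_map ht)
  -- middle
  have mid : ∃ m > 0, ∀ t ∈ Icc (0:ℝ) 1, δ1 ≤ t → δ2 ≤ 1 - t → m ≤ W t := by
    rcases (Icc δ1 (1 - δ2)).eq_empty_or_nonempty with he | hne
    · refine ⟨1, one_pos, fun t ht h1 h2 => ?_⟩
      have : t ∈ Icc δ1 (1 - δ2) := ⟨h1, by linarith⟩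
      rw [he] at this; exact this.elim
    · have hs : Icc δ1 (1 - δ2) ⊆ Icc 0 1 := Icc_subset_Icc hδ1.le (by linarith)
      obtain ⟨x, hx, hmin⟩ := isCompact_Icc.exists_isMinOn hne ((W_cont hW).mono hs)
      refine ⟨W x, hW.pos_on x ⟨by linarith [hx.1], by linarith [hx.2]⟩, fun t ht h1 h2 => ?_⟩
      exact hmin ⟨h1, by linarith⟩
  obtain ⟨m, hm, mid⟩ := mid
  set cc := min m (min c1 c2)
  have hcc : 0 < cc := by positivity
  refine ⟨Real.sqrt cc, Real.sqrt_pos.2 hcc, Real.sqrt (4 * (C1 + C2)), by positivity, fun t ht => ?_⟩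
  rw [Real.sq_sqrt hcc.le, Real.sq_sqrt (by positivity)]
  have t0 := ht.1
  have t1 := ht.2
  have hq1 : (t * (1 - t)) ^ 2 ≤ t ^ 2 := by
    rw [mul_pow]; exact mul_le_of_le_one_right (sq_nonneg _) (pow_le_one₀ (by linarith) (by linarith))
  have hq2 : (t * (1 - t)) ^ 2 ≤ (1 - t) ^ 2 := by
    rw [mul_pow]; exact mul_le_of_le_one_left (sq_nonneg _) (pow_le_one₀ (by linarith) (by linarith))
  have hq3 : (t * (1 - t)) ^ 2 ≤ 1 := hq1.trans (pow_le_one₀ t0 t1)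
  have cm : cc ≤ m := min_le_left _ _
  have cc1 : cc ≤ c1 := (min_le_right _ _).trans (min_le_left _ _)
  have cc2 : cc ≤ c2 := (min_le_right _ _).trans (min_le_right _ _)
  constructor
  · rcases le_total t δ1 with h | h
    · calc cc * (t * (1 - t)) ^ 2 ≤ c1 * t ^ 2 := by gcongr
        _ ≤ _ := l1 t ht h
    · rcases le_total (1 - t) δ2 with h' | h'
      · calc cc * (t * (1 - t)) ^ 2 ≤ c2 * (1 - t) ^ 2 := by gcongr
          _ ≤ _ := l2' t ht h'
      · calc cc * (t * (1 - t)) ^ 2 ≤ m * 1 := by gcongr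
          _ ≤ _ := by rw [mul_one]; exact mid t ht h h'
  · rcases le_total t (1/2) with h | h
    · calc W t ≤ C1 * t ^ 2 := u1 t ht
        _ ≤ 4 * (C1 + C2) * (t ^ 2 * (1/4)) := by nlinarith [sq_nonneg t]
        _ ≤ 4 * (C1 + C2) * (t * (1 - t)) ^ 2 := by
          rw [mul_pow]; gcongr; nlinarith
    · calc W t ≤ C2 * (1 - t) ^ 2 := u2' t ht
        _ ≤ 4 * (C1 + C2) * ((1/4) * (1 - t) ^ 2) := by nlinarith [sq_nonneg (1 - t)]
        _ ≤ 4 * (C1 + C2) * (t * (1 - t)) ^ 2 := by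
          rw [mul_pow]; gcongr; nlinarith

lemma eta_decay_top (hW : DoubleWell W) (hη : TransitionProfile W η) :
    ∃ k > 0, ∀ s, 0 ≤ s → η s ≤ Real.exp (- k * s) ∧ 1 - η (-s) ≤ Real.exp (- k * s) := by
  obtain ⟨c, hc, C, hC, h⟩ := W_quad hW hη
  have key : ∀ t ∈ Icc (0:ℝ) 1, t ≤ 1 / 2 → (c/2) ^ 2 * t ^ 2 ≤ c ^ 2 * (t * (1 - t)) ^ 2 := by
    intro t ht h'
    rw [← mul_pow, ← mul_pow]
    have := ht.1
    refine pow_le_pow_left₀ (by positivity) ?_ 2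
    nlinarith [mul_nonneg hc.le ht.1]
  refine ⟨c / 2, by positivity, fun s hs => ⟨?_, ?_⟩⟩
  · refine exp_decay (g := W) (by positivity) ?_ hη.mem hη.ode hη.init hη.anti.antitone s hs
    intro t ht h'
    exact (key t ⟨ht.1.le, ht.2.le⟩ h').trans (h t ⟨ht.1.le, ht.2.le⟩).1
  · refine exp_decay (g := fun t => W (1 - t)) (θ := fun s => 1 - η (-s)) (by positivity) ?_
      (fun s => ⟨by linarith [(hη.mem (-s)).2], by linarith [(hη.mem (-s)).1]⟩)
      (eta_refl_ode hη) (by simp [hη.init]; norm_num) ?_ s hs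
    · intro t ht h'
      refine (key t ⟨ht.1.le, ht.2.le⟩ h').trans ?_
      have := (h (1 - t) (refl_map ⟨ht.1.le, ht.2.le⟩)).1
      simpa [mul_comm] using this
    · intro a b hab
      have := hη.anti.antitone (neg_le_neg hab)
      simp only; linarith
end

end Part4

section Part5
open MeasureTheory Real Set Filter
open scoped ENNReal NNReal Pointwise

def wf (W : ℝ → ℝ) (t : ℝ) : ℝ := Real.sqrt (W (max 0 (min 1 t)))
def Ph (W : ℝ → ℝ) (t : ℝ) : ℝ := ∫ s in (0:ℝ)..t, wf W s
def qn (n : ℕ) : ℝ := (n : ℝ) / ((n : ℝ) - 1)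

section
variable {W η : ℝ → ℝ}

lemma wf_cont (hW : DoubleWell W) : Continuous (wf W) := by
  apply Continuous.sqrt
  refine (W_cont hW).comp_continuous (by fun_prop) ?_
  intro t
  exact ⟨le_max_left _ _, max_le zero_le_one (min_le_left _ _)⟩

lemma wf_eq {t : ℝ} (ht : t ∈ Icc (0:ℝ) 1) : wf W t = Real.sqrt (W t) := by
  unfold wf; rw [min_eq_right ht.2, max_eq_right ht.1]

lemma wf_nonneg (t : ℝ) : 0 ≤ wf W t := Real.sqrt_nonneg _

lemma W_nonneg (hW : DoubleWell W) {t : ℝ} (ht : t ∈ Icc (0:ℝ) 1) : 0 ≤ W t := by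
  rcases eq_or_lt_of_le ht.1 with h | h
  · rw [← h, hW.zero_at_zero]
  rcases eq_or_lt_of_le ht.2 with h' | h'
  · rw [h', hW.zero_at_one]
  exact (hW.pos_on t ⟨h, h'⟩).le

lemma wf_sq (hW : DoubleWell W) {t : ℝ} (ht : t ∈ Icc (0:ℝ) 1) : wf W t ^ 2 = W t := by
  rw [wf_eq ht, Real.sq_sqrt (W_nonneg hW ht)]

lemma wf_pos (hW : DoubleWell W) {t : ℝ} (ht : t ∈ Ioo (0:ℝ) 1) : 0 < wf W t := by
  rw [wf_eq (Ioo_subset_Icc_self ht)]; exact Real.sqrt_pos.2 (hW.pos_on t ht)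

lemma Ph_hd (hW : DoubleWell W) (t : ℝ) : HasDerivAt (Ph W) (wf W t) t :=
  (wf_cont hW).integral_hasStrictDerivAt 0 t |>.hasDerivAt

lemma Ph_cont (hW : DoubleWell W) : Continuous (Ph W) :=
  continuous_iff_continuousAt.2 fun t => (Ph_hd hW t).continuousAt

lemma Ph_zero : Ph W 0 = 0 := by simp [Ph]

lemma Phi_eq {t : ℝ} (ht : t ∈ Icc (0:ℝ) 1) : Phi W t = Ph W t := by
  apply intervalIntegral.integral_congr
  intro s hs
  rw [uIcc_of_le ht.1] at hs
  exact (wf_eq ⟨hs.1, hs.2.trans ht.2⟩).symm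

lemma Ph_one (hW : DoubleWell W) : Ph W 1 = 1 := by
  rw [← Phi_eq (by simp)]; exact hW.normalized

lemma Ph_mono (hW : DoubleWell W) : Monotone (Ph W) :=
  monotone_of_hasDerivAt_nonneg (Ph_hd hW) wf_nonneg

lemma Ph_strict (hW : DoubleWell W) : StrictMonoOn (Ph W) (Icc 0 1) := by
  apply strictMonoOn_of_deriv_pos (convex_Icc 0 1) (Ph_cont hW).continuousOn
  intro t ht
  rw [interior_Icc] at ht
  rw [(Ph_hd hW t).deriv]; exact wf_pos hW ht

lemma Ph_mem (hW : DoubleWell W) {t : ℝ} (ht : t ∈ Icc (0:ℝ) 1) : Ph W t ∈ Icc (0:ℝ) 1 := by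
  constructor
  · rw [← Ph_zero (W := W)]; exact Ph_mono hW ht.1
  · rw [← Ph_one hW]; exact Ph_mono hW ht.2

lemma Ph_mem' (hW : DoubleWell W) {t : ℝ} (ht : t ∈ Ioo (0:ℝ) 1) : Ph W t ∈ Ioo (0:ℝ) 1 := by
  constructor
  · rw [← Ph_zero (W := W)]; exact Ph_strict hW (by simp) (Ioo_subset_Icc_self ht) ht.1
  · rw [← Ph_one hW]; exact Ph_strict hW (Ioo_subset_Icc_self ht) (by simp) ht.2

lemma Ph_upper (hW : DoubleWell W) (hη : TransitionProfile W η) :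
    ∃ C > 0, ∀ t ∈ Icc (0:ℝ) 1, Ph W t ≤ C * t ^ 2 ∧ 1 - Ph W t ≤ C * (1 - t) ^ 2 := by
  obtain ⟨c, hc, C, hC, h⟩ := W_quad hW hη
  have hw : ∀ t ∈ Icc (0:ℝ) 1, wf W t ≤ C * (t * (1 - t)) := by
    intro t ht
    rw [wf_eq ht]
    apply Real.sqrt_le_iff.2
    have := ht.1; have := ht.2
    have h2 : 0 ≤ 1 - t := by linarith
    refine ⟨by positivity, ?_⟩
    rw [mul_pow]; exact (h t ht).2
  refine ⟨C, hC, fun t ht => ⟨?_, ?_⟩⟩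
  · have := mono_of_hd (f := fun s => C * s ^ 2 - Ph W s) (f' := fun s => 2 * C * s - wf W s)
      (a := 0) (b := 1) ?_ ?_ (by simp) ht ht.1
    · simp [Ph_zero] at this; linarith
    · intro s hs
      apply HasDerivAt.hasDerivWithinAt
      refine ((((hasDerivAt_id s).pow 2).const_mul C).sub (Ph_hd hW s)).congr_deriv ?_
      simp; ring
    · intro s hs
      have h0 := hw s hs
      have h1 := mul_nonneg hC.le hs.1
      have h3 := mul_nonneg h1 hs.1
      nlinarith
  · have := mono_of_hd (f := fun s => - C * (1 - s) ^ 2 - Ph W s) (f' := fun s => 2 * C * (1 - s) - wf W s)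
      (a := 0) (b := 1) ?_ ?_ ht (right_mem_Icc.2 zero_le_one) ht.2
    · simp [Ph_one hW] at this; linarith
    · intro s hs
      apply HasDerivAt.hasDerivWithinAt
      have h1 := (((((hasDerivAt_id s).const_sub 1).pow 2).const_mul (-C)).sub (Ph_hd hW s))
      refine h1.congr_deriv ?_
      simp; ring
    · intro s hs
      have h0 := hw s hs
      have h2 : 0 ≤ 1 - s := by linarith [hs.2]
      have h1 := mul_nonneg hC.le h2
      have h3 := mul_nonneg h1 h2
      nlinarith

lemma Ph_W (hW : DoubleWell W) (hη : TransitionProfile W η) :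
    ∃ C > 0, ∀ t ∈ Icc (0:ℝ) 1, Ph W t * (1 - Ph W t) ≤ C * W t := by
  obtain ⟨c, hc, C, hC, h⟩ := W_quad hW hη
  obtain ⟨D, hD, hu⟩ := Ph_upper hW hη
  refine ⟨D ^ 2 / c ^ 2, by positivity, fun t ht => ?_⟩
  have h1 := (hu t ht).1
  have h2 := (hu t ht).2
  have h3 := Ph_mem hW ht
  calc Ph W t * (1 - Ph W t) ≤ (D * t ^ 2) * (D * (1 - t) ^ 2) := by
        have : 0 ≤ 1 - Ph W t := by linarith [h3.2]
        gcongr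
    _ = D ^ 2 / c ^ 2 * (c ^ 2 * (t * (1 - t)) ^ 2) := by field_simp
    _ ≤ _ := by gcongr; exact (h t ht).1

lemma qn_bd {n : ℕ} (hn : 2 ≤ n) : 1 < qn n ∧ qn n ≤ 2 := by
  have : (2:ℝ) ≤ n := by exact_mod_cast hn
  unfold qn
  constructor
  · rw [lt_div_iff₀ (by linarith)]; linarith
  · rw [div_le_iff₀ (by linarith)]; linarith

lemma Vpot_eq (n : ℕ) {t : ℝ} (ht : t ∈ Icc (0:ℝ) 1) : Vpot n W t = Ph W t ^ qn n := by
  unfold Vpot; rw [Phi_eq ht]; rfl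

lemma rpow_q {n : ℕ} (hn : 2 ≤ n) {y : ℝ} (hy : y ∈ Icc (0:ℝ) 1) :
    y ^ 2 ≤ y ^ qn n ∧ y ^ qn n ≤ y := by
  have hq := qn_bd hn
  constructor
  · rw [← Real.rpow_natCast]
    exact Real.rpow_le_rpow_of_exponent_ge' hy.1 hy.2 (by linarith) (by simpa using hq.2)
  · calc y ^ qn n ≤ y ^ (1:ℝ) := Real.rpow_le_rpow_of_exponent_ge' hy.1 hy.2 (by norm_num) hq.1.le
      _ = y := Real.rpow_one y

lemma V_hd {n : ℕ} (hn : 2 ≤ n) (hW : DoubleWell W) (t : ℝ) :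
    HasDerivAt (fun t => Ph W t ^ qn n) (qn n * Ph W t ^ (qn n - 1) * wf W t) t := by
  have := (Ph_hd hW t).rpow_const (p := qn n) (Or.inr (qn_bd hn).1.le)
  refine this.congr_deriv ?_
  ring

lemma V_dw {n : ℕ} (hn : 2 ≤ n) (hW : DoubleWell W) {t : ℝ} (ht : t ∈ Ioo (0:ℝ) 1) :
    derivWithin (Vpot n W) (Icc 0 1) t = qn n * Ph W t ^ (qn n - 1) * wf W t := by
  have h1 := (V_hd hn hW t).hasDerivWithinAt (s := Icc 0 1)
  have h2 : HasDerivWithinAt (Vpot n W) (qn n * Ph W t ^ (qn n - 1) * wf W t) (Icc 0 1) t :=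
    h1.congr (fun s hs => Vpot_eq n hs) (Vpot_eq n (Ioo_subset_Icc_self ht))
  exact h2.derivWithin (uniqueDiffOn_Icc zero_lt_one t (Ioo_subset_Icc_self ht))

/-- decay weight -/
def dec (s : ℝ) : ℝ := ((1 + s ^ 2) ^ 2)⁻¹

lemma dec_pos (s : ℝ) : 0 < dec s := by unfold dec; positivity

lemma dec_le (s : ℝ) : (1 + s ^ 2) * dec s = (1 + s ^ 2)⁻¹ := by
  unfold dec
  have : 1 + s ^ 2 ≠ 0 := by positivity
  field_simp

lemma exp_le_dec {k : ℝ} (hk : 0 < k) : ∃ C > 0, ∀ s, 0 ≤ s → Real.exp (-k * s) ≤ C * dec s := by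
  refine ⟨2 + 48 / k ^ 4, by positivity, fun s hs => ?_⟩
  unfold dec
  rw [← div_eq_mul_inv, le_div_iff₀ (by positivity)]
  have h1 := Real.pow_div_factorial_le_exp (k * s) (by positivity) 4
  have h2 : (1:ℝ) ≤ Real.exp (k * s) := Real.one_le_exp (by positivity)
  have h3 : Real.exp (-k * s) * Real.exp (k * s) = 1 := by rw [← Real.exp_add]; simp
  have h4 : s ^ 4 ≤ 24 / k ^ 4 * Real.exp (k * s) := by
    rw [div_mul_eq_mul_div, le_div_iff₀ (by positivity)]
    have : (Nat.factorial 4 : ℝ) = 24 := by norm_num [Nat.factorial]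
    rw [this, div_le_iff₀ (by norm_num)] at h1
    nlinarith
  have h5 : (1 + s ^ 2) ^ 2 ≤ (2 + 48 / k ^ 4) * Real.exp (k * s) := by
    calc (1 + s ^ 2) ^ 2 ≤ 2 + 2 * s ^ 4 := by nlinarith [sq_nonneg (s ^ 2 - 1)]
      _ ≤ 2 * Real.exp (k * s) + 2 * (24 / k ^ 4 * Real.exp (k * s)) := by linarith
      _ = _ := by ring
  have h6 := Real.exp_pos (-k * s)
  calc Real.exp (-k * s) * (1 + s ^ 2) ^ 2
      ≤ Real.exp (-k * s) * ((2 + 48 / k ^ 4) * Real.exp (k * s)) := by gcongr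
    _ = (2 + 48 / k ^ 4) * (Real.exp (-k * s) * Real.exp (k * s)) := by ring
    _ = _ := by rw [h3, mul_one]

lemma dec_neg (s : ℝ) : dec (-s) = dec s := by simp [dec]

lemma eta_dec (hW : DoubleWell W) (hη : TransitionProfile W η) :
    ∃ C > 0, (∀ s, 0 ≤ s → η s ≤ C * dec s) ∧ (∀ s, s ≤ 0 → 1 - η s ≤ C * dec s) ∧
      (∀ s, W (η s) ≤ C * dec s) ∧ (∀ s, 0 ≤ s → Ph W (η s) ≤ C * dec s) ∧
      (∀ s, s ≤ 0 → 1 - Ph W (η s) ≤ C * dec s) := by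
  obtain ⟨k, hk, hd⟩ := eta_decay_top hW hη
  obtain ⟨C1, hC1, he⟩ := exp_le_dec hk
  obtain ⟨c, hc, C, hC, h⟩ := W_quad hW hη
  obtain ⟨D, hD, hu⟩ := Ph_upper hW hη
  have a1 : ∀ s, 0 ≤ s → η s ≤ C1 * dec s := fun s hs => ((hd s hs).1).trans (he s hs)
  have a2 : ∀ s, s ≤ 0 → 1 - η s ≤ C1 * dec s := by
    intro s hs
    have := ((hd (-s) (by linarith)).2).trans (he (-s) (by linarith))
    rwa [neg_neg, dec_neg] at this
  have hm : ∀ s, η s ∈ Icc (0:ℝ) 1 := fun s => Ioo_subset_Icc_self (hη.mem s)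
  have fin : ∀ (y E s : ℝ), 0 ≤ E → E ≤ 1 + C ^ 2 + D → ∀ z, z ≤ C1 * dec s → 0 ≤ z → y ≤ E * z →
      y ≤ ((1 + C ^ 2 + D) * C1) * dec s := by
    intro y E s hE hE2 z hz hz0 hy
    calc y ≤ E * z := hy
      _ ≤ (1 + C ^ 2 + D) * (C1 * dec s) := by gcongr
      _ = _ := by ring
  refine ⟨(1 + C ^ 2 + D) * C1, by positivity, fun s hs => ?_, fun s hs => ?_, fun s => ?_,
    fun s hs => ?_, fun s hs => ?_⟩
  · exact fin _ 1 s (by norm_num) (by nlinarith) _ (a1 s hs) (hm s).1 (by linarith)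
  · exact fin _ 1 s (by norm_num) (by nlinarith) _ (a2 s hs) (by linarith [(hm s).2]) (by linarith)
  · have h1 := (h _ (hm s)).2
    have x0 := (hm s).1
    have x1 := (hm s).2
    have y0 : 0 ≤ 1 - η s := by linarith
    rcases le_total 0 s with hs | hs
    · refine fin _ (C ^ 2) s (by positivity) (by linarith) _ (a1 s hs) x0 (h1.trans ?_)
      gcongr
      have : η s * (1 - η s) ≤ η s := by nlinarith
      have := mul_nonneg x0 y0
      nlinarith
    · refine fin _ (C ^ 2) s (by positivity) (by linarith) _ (a2 s hs) y0 (h1.trans ?_)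
      gcongr
      have : η s * (1 - η s) ≤ 1 - η s := by nlinarith
      have := mul_nonneg x0 y0
      nlinarith
  · refine fin _ D s hD.le (by nlinarith) _ (a1 s hs) (hm s).1 ((hu _ (hm s)).1.trans ?_)
    gcongr
    nlinarith [(hm s).1, (hm s).2]
  · refine fin _ D s hD.le (by nlinarith) _ (a2 s hs) (by linarith [(hm s).2]) ((hu _ (hm s)).2.trans ?_)
    gcongr
    nlinarith [(hm s).1, (hm s).2]
end

end Part5

section Part6
open MeasureTheory Real Set Filter
open scoped ENNReal NNReal Pointwise

def hv (s : ℝ) : ℝ := (Iic (0:ℝ)).indicator (fun _ => (1:ℝ)) s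
def kap (n : ℕ) (W η : ℝ → ℝ) : ℝ := ∫ s, (Ph W (η s) - Ph W (η s) ^ qn n)
def mom1 (W η : ℝ → ℝ) : ℝ := ∫ s, s * W (η s)
def Kq (n : ℕ) (W η : ℝ → ℝ) : ℝ := ∫ s, (Ph W (η s) ^ qn n - hv s)

lemma int_dec {f : ℝ → ℝ} (hm : AEStronglyMeasurable f volume) {C : ℝ}
    (h : ∀ s, |f s| ≤ C * ((1 + s ^ 2) * dec s)) : Integrable f := by
  have := integrable_inv_one_add_sq.const_mul C
  refine this.mono' hm (Eventually.of_forall fun s => ?_)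
  rw [Real.norm_eq_abs, ← dec_le s]; exact h s

lemma abs_le_one_add_sq (s : ℝ) : |s| ≤ 1 + s ^ 2 := by
  rw [abs_le]; constructor <;> nlinarith [sq_nonneg (s - 1), sq_nonneg (s + 1)]

lemma tend_inv_one_add_sq_top : Tendsto (fun s : ℝ => (1 + s ^ 2)⁻¹) atTop (nhds 0) := by
  apply Tendsto.comp tendsto_inv_atTop_zero
  apply tendsto_atTop_add_const_left
  exact tendsto_pow_atTop (by norm_num)

lemma tend_inv_one_add_sq_bot : Tendsto (fun s : ℝ => (1 + s ^ 2)⁻¹) atBot (nhds 0) := by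
  have := tend_inv_one_add_sq_top.comp tendsto_neg_atBot_atTop
  refine this.congr (fun s => ?_)
  simp

lemma tend_of_dec {f : ℝ → ℝ} {C : ℝ} {l : Filter ℝ}
    (hl : Tendsto (fun s : ℝ => (1 + s ^ 2)⁻¹) l (nhds 0))
    (h : ∀ᶠ s in l, |f s| ≤ C * ((1 + s ^ 2) * dec s)) : Tendsto f l (nhds 0) := by
  have := hl.const_mul C
  rw [mul_zero] at this
  apply squeeze_zero_norm' _ this
  filter_upwards [h] with s hs
  rw [Real.norm_eq_abs, ← dec_le s]; exact hs

section
variable {W η : ℝ → ℝ}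

lemma eta_cont (hη : TransitionProfile W η) : Continuous η :=
  continuous_iff_continuousAt.2 fun s => (hη.ode s).continuousAt

lemma eta_Icc (hη : TransitionProfile W η) (s : ℝ) : η s ∈ Icc (0:ℝ) 1 := Ioo_subset_Icc_self (hη.mem s)

lemma Weta_cont (hW : DoubleWell W) (hη : TransitionProfile W η) : Continuous (fun s => W (η s)) :=
  (W_cont hW).comp_continuous (eta_cont hη) (eta_Icc hη)

lemma Pheta_cont (hW : DoubleWell W) (hη : TransitionProfile W η) : Continuous (fun s => Ph W (η s)) :=
  (Ph_cont hW).comp (eta_cont hη)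

lemma Veta_cont {n : ℕ} (hn : 2 ≤ n) (hW : DoubleWell W) (hη : TransitionProfile W η) :
    Continuous (fun s => Ph W (η s) ^ qn n) :=
  (Pheta_cont hW hη).rpow_const (fun _ => Or.inr (by linarith [(qn_bd hn).1]))

lemma Pheta_hd (hW : DoubleWell W) (hη : TransitionProfile W η) (s : ℝ) :
    HasDerivAt (fun s => Ph W (η s)) (- W (η s)) s := by
  have := (Ph_hd hW (η s)).comp s (hη.ode s)
  refine this.congr_deriv ?_
  have h2 := wf_sq hW (eta_Icc hη s)
  rw [← wf_eq (eta_Icc hη s), ← h2]; ring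

lemma Veta_hd {n : ℕ} (hn : 2 ≤ n) (hW : DoubleWell W) (hη : TransitionProfile W η) (s : ℝ) :
    HasDerivAt (fun s => Ph W (η s) ^ qn n) (- (qn n * Ph W (η s) ^ (qn n - 1) * W (η s))) s := by
  have := (V_hd hn hW (η s)).comp s (hη.ode s)
  refine this.congr_deriv ?_
  have h2 := wf_sq hW (eta_Icc hη s)
  rw [← wf_eq (eta_Icc hη s), ← h2]; ring

lemma int_sqW (hW : DoubleWell W) (hη : TransitionProfile W η) :
    Integrable (fun s => s ^ 2 * W (η s)) ∧ Integrable (fun s => s * W (η s)) ∧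
      Integrable (fun s => W (η s)) := by
  obtain ⟨C, hC, h1, h2, h3, h4, h5⟩ := eta_dec hW hη
  have hc := Weta_cont hW hη
  have h0 : ∀ s, 0 ≤ W (η s) := fun s => W_nonneg hW (eta_Icc hη s)
  have key : ∀ a s : ℝ, |a| ≤ 1 + s ^ 2 → |a * W (η s)| ≤ C * ((1 + s ^ 2) * dec s) := by
    intro a s ha
    rw [abs_mul, abs_of_nonneg (h0 s)]
    calc |a| * W (η s) ≤ (1 + s ^ 2) * (C * dec s) := by
          gcongr
          · exact h0 s
          · exact h3 s
      _ = _ := by ring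
  refine ⟨int_dec (C := C) ?_ ?_, int_dec (C := C) ?_ ?_, int_dec (C := C) ?_ ?_⟩
  · exact Continuous.aestronglyMeasurable ((continuous_pow 2).mul hc)
  · intro s; apply key; rw [abs_of_nonneg (sq_nonneg s)]; linarith
  · exact Continuous.aestronglyMeasurable (continuous_id.mul hc)
  · intro s; exact key _ _ (abs_le_one_add_sq s)
  · exact hc.aestronglyMeasurable
  · intro s; have := key 1 s (by simp; positivity); simpa using this

lemma int_W_one (hW : DoubleWell W) (hη : TransitionProfile W η) : ∫ s, W (η s) = 1 := by
  have h1 : ∀ s, HasDerivAt (fun s => - Ph W (η s)) (W (η s)) s := by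
    intro s; simpa using (Pheta_hd hW hη s).fun_neg
  have h := integral_of_hasDerivAt_of_tendsto h1 (int_sqW hW hη).2.2
    (m := -1) (n := 0) ?_ ?_
  · rw [h]; norm_num
  · have := ((Ph_cont hW).tendsto 1).comp hη.tendsto_bot
    rw [Ph_one hW] at this; exact this.neg
  · have := ((Ph_cont hW).tendsto 0).comp hη.tendsto_top
    rw [Ph_zero] at this; simpa using this.neg

lemma hv_meas : Measurable hv := by
  unfold hv; exact measurable_const.indicator measurableSet_Iic

lemma V_hv_bd {n : ℕ} (hn : 2 ≤ n) (hW : DoubleWell W) (hη : TransitionProfile W η) :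
    ∃ C > 0, ∀ s, |Ph W (η s) - hv s| ≤ C * dec s ∧ |Ph W (η s) ^ qn n - hv s| ≤ C * dec s := by
  obtain ⟨C, hC, h1, h2, h3, h4, h5⟩ := eta_dec hW hη
  refine ⟨2 * C, by positivity, fun s => ?_⟩
  have hP := Ph_mem hW (eta_Icc hη s)
  have hq := rpow_q hn hP
  have hd := mul_pos hC (dec_pos s)
  rcases le_or_gt s 0 with hs | hs
  · have e : hv s = 1 := by simp [hv, hs]
    have := h5 s hs
    rw [e, abs_le, abs_le]
    refine ⟨⟨by linarith, by linarith [hP.2]⟩, ⟨by nlinarith [hP.1, hP.2], by linarith [hP.2, hq.2]⟩⟩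
  · have e : hv s = 0 := by simp [hv, hs]
    have := h4 s hs.le
    rw [e, abs_le, abs_le]
    refine ⟨⟨by linarith [hP.1], by linarith⟩, ⟨by nlinarith [hP.1, hP.2], by linarith⟩⟩

lemma int_V_hv {n : ℕ} (hn : 2 ≤ n) (hW : DoubleWell W) (hη : TransitionProfile W η) :
    Integrable (fun s => Ph W (η s) - hv s) ∧ Integrable (fun s => Ph W (η s) ^ qn n - hv s) := by
  obtain ⟨C, hC, h⟩ := V_hv_bd hn hW hη
  have aux : ∀ s, C * dec s ≤ C * ((1 + s ^ 2) * dec s) := by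
    intro s; have := dec_pos s; nlinarith [mul_nonneg (sq_nonneg s) (mul_pos hC this).le]
  exact ⟨int_dec ((Pheta_cont hW hη).measurable.sub hv_meas).aestronglyMeasurable
      (fun s => (h s).1.trans (aux s)),
    int_dec ((Veta_cont hn hW hη).measurable.sub hv_meas).aestronglyMeasurable
      (fun s => (h s).2.trans (aux s))⟩

lemma int_Phi_hv (hW : DoubleWell W) (hη : TransitionProfile W η) :
    ∫ s, (Ph W (η s) - hv s) = mom1 W η := by
  have hi := (int_V_hv (le_refl 2) hW hη).1
  have hs := (int_sqW hW hη).2.1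
  have hd : Integrable (fun s => (Ph W (η s) - hv s) - s * W (η s)) := hi.sub hs
  obtain ⟨C, hC, h⟩ := V_hv_bd (le_refl 2) hW hη
  have key : ∀ s, |s * (Ph W (η s) - hv s)| ≤ C * ((1 + s ^ 2) * dec s) := by
    intro s
    rw [abs_mul]
    calc |s| * |Ph W (η s) - hv s| ≤ (1 + s ^ 2) * (C * dec s) := by
          gcongr
          · exact abs_le_one_add_sq s
          · exact (h s).1
      _ = _ := by ring
  have e : ∫ s, ((Ph W (η s) - hv s) - s * W (η s)) = 0 := by
    rw [← intervalIntegral.integral_Iic_add_Ioi (b := 0) hd.integrableOn hd.integrableOn]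
    have i1 : ∫ s in Iic (0:ℝ), ((Ph W (η s) - hv s) - s * W (η s)) = 0 := by
      have c1 : ∀ s ∈ Iic (0:ℝ), ((Ph W (η s) - hv s) - s * W (η s)) = (Ph W (η s) - 1) - s * W (η s) := by
        intro s hs
        have : hv s = 1 := by simp [hv, mem_Iic.1 hs]
        rw [this]
      rw [setIntegral_congr_fun measurableSet_Iic c1,
        integral_Iic_of_hasDerivAt_of_tendsto' (f := fun s => s * (Ph W (η s) - 1)) (m := 0)]
      · simp
      · intro s _
        refine ((hasDerivAt_id s).mul ((Pheta_hd hW hη s).sub_const 1)).congr_deriv ?_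
        simp; ring
      · exact hd.integrableOn.congr_fun c1 measurableSet_Iic
      · apply tend_of_dec (C := C) tend_inv_one_add_sq_bot
        filter_upwards [Iic_mem_atBot (0:ℝ)] with s hs
        have : hv s = 1 := by simp [hv, mem_Iic.1 hs]
        have h2 := key s
        rwa [this] at h2
    have i2 : ∫ s in Ioi (0:ℝ), ((Ph W (η s) - hv s) - s * W (η s)) = 0 := by
      have c1 : ∀ s ∈ Ioi (0:ℝ), ((Ph W (η s) - hv s) - s * W (η s)) = (Ph W (η s)) - s * W (η s) := by
        intro s hs
        have : hv s = 0 := by simp [hv, mem_Ioi.1 hs]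
        rw [this, sub_zero]
      rw [setIntegral_congr_fun measurableSet_Ioi c1,
        integral_Ioi_of_hasDerivAt_of_tendsto' (f := fun s => s * (Ph W (η s))) (m := 0)]
      · simp
      · intro s _
        refine ((hasDerivAt_id s).mul (Pheta_hd hW hη s)).congr_deriv ?_
        simp; ring
      · exact hd.integrableOn.congr_fun c1 measurableSet_Ioi
      · apply tend_of_dec (C := C) tend_inv_one_add_sq_top
        filter_upwards [Ioi_mem_atTop (0:ℝ)] with s hs
        have : hv s = 0 := by simp [hv, mem_Ioi.1 hs]
        have h2 := key s
        rwa [this, sub_zero] at h2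
    rw [i1, i2, add_zero]
  rw [integral_sub hi hs] at e
  unfold mom1; linarith

lemma int_kap {n : ℕ} (hn : 2 ≤ n) (hW : DoubleWell W) (hη : TransitionProfile W η) :
    Integrable (fun s => Ph W (η s) - Ph W (η s) ^ qn n) := by
  obtain ⟨h1, h2⟩ := int_V_hv hn hW hη
  refine (h1.sub h2).congr (Eventually.of_forall fun s => ?_)
  simp

lemma kap_eq {n : ℕ} (hn : 2 ≤ n) (hW : DoubleWell W) (hη : TransitionProfile W η) :
    kap n W η = mom1 W η - Kq n W η := by
  obtain ⟨h1, h2⟩ := int_V_hv hn hW hη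
  rw [← int_Phi_hv hW hη]
  unfold Kq kap
  rw [← integral_sub h1 h2]
  congr 1; ext s; ring

lemma frozen_kap {n : ℕ} (hn : 2 ≤ n) (hW : DoubleWell W) (hη : TransitionProfile W η) :
    (∫ s : ℝ, (derivWithin (Vpot n W) (Icc 0 1) (η s) * deriv η s + W (η s)) * s) = kap n W η := by
  obtain ⟨C, hC, h⟩ := V_hv_bd hn hW hη
  have hq := qn_bd hn
  have e1 : ∀ s, (derivWithin (Vpot n W) (Icc 0 1) (η s) * deriv η s + W (η s)) * s =
      (1 - qn n * Ph W (η s) ^ (qn n - 1)) * (s * W (η s)) := by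
    intro s
    rw [V_dw hn hW (hη.mem s), (hη.ode s).deriv, ← wf_eq (eta_Icc hη s), ← wf_sq hW (eta_Icc hη s)]
    ring
  simp_rw [e1]
  have hi1 := int_kap hn hW hη
  have hPc := Pheta_cont hW hη
  have hcr : Continuous (fun s => Ph W (η s) ^ (qn n - 1)) :=
    hPc.rpow_const (fun _ => Or.inr (by linarith))
  have hi2 : Integrable (fun s => (1 - qn n * Ph W (η s) ^ (qn n - 1)) * (s * W (η s))) := by
    refine (int_sqW hW hη).2.1.bdd_mul (c := 3) (Continuous.aestronglyMeasurable (by fun_prop)) ?_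
    refine Eventually.of_forall fun s => ?_
    have hP := Ph_mem hW (eta_Icc hη s)
    have a1 : Ph W (η s) ^ (qn n - 1) ≤ 1 := Real.rpow_le_one hP.1 hP.2 (by linarith)
    have a0 : 0 ≤ Ph W (η s) ^ (qn n - 1) := Real.rpow_nonneg hP.1 _
    rw [Real.norm_eq_abs, abs_le]; constructor <;> nlinarith
  have key := integral_of_hasDerivAt_of_tendsto (f := fun s => s * (Ph W (η s) - Ph W (η s) ^ qn n))
    (f' := fun s => (Ph W (η s) - Ph W (η s) ^ qn n) -
      (1 - qn n * Ph W (η s) ^ (qn n - 1)) * (s * W (η s))) (m := 0) (n := 0) ?_ (hi1.sub hi2) ?_ ?_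
  · rw [integral_sub hi1 hi2] at key
    unfold kap; linarith
  · intro s
    refine ((hasDerivAt_id s).mul ((Pheta_hd hW hη s).sub (Veta_hd hn hW hη s))).congr_deriv ?_
    simp; ring
  all_goals
    have key : ∀ s, |s * (Ph W (η s) - Ph W (η s) ^ qn n)| ≤ (2 * C) * ((1 + s ^ 2) * dec s) := by
      intro s
      rw [abs_mul]
      have : |Ph W (η s) - Ph W (η s) ^ qn n| ≤ 2 * C * dec s := by
        have := abs_sub (Ph W (η s) - hv s) (Ph W (η s) ^ qn n - hv s)
        rw [sub_sub_sub_cancel_right] at this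
        linarith [(h s).1, (h s).2]
      calc |s| * |Ph W (η s) - Ph W (η s) ^ qn n| ≤ (1 + s ^ 2) * (2 * C * dec s) := by
            gcongr
            exact abs_le_one_add_sq s
        _ = _ := by ring
  · exact tend_of_dec (C := 2 * C) tend_inv_one_add_sq_bot (Eventually.of_forall key)
  · exact tend_of_dec (C := 2 * C) tend_inv_one_add_sq_top (Eventually.of_forall key)

lemma eta_image (hη : TransitionProfile W η) : η '' univ = Ioo 0 1 := by
  apply Subset.antisymm
  · rintro _ ⟨s, -, rfl⟩; exact hη.mem s
  · intro t ht
    rw [image_univ]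
    obtain ⟨a, ha⟩ := (hη.tendsto_top.eventually (gt_mem_nhds ht.1)).exists
    obtain ⟨b, hb⟩ := (hη.tendsto_bot.eventually (lt_mem_nhds ht.2)).exists
    exact mem_range_of_exists_le_of_exists_ge (eta_cont hη) ⟨a, ha.le⟩ ⟨b, hb.le⟩

lemma kap_subst {n : ℕ} (hW : DoubleWell W) (hη : TransitionProfile W η) :
    ∫ t in Ioo (0:ℝ) 1, (Ph W t - Ph W t ^ qn n) / wf W t = kap n W η := by
  rw [← eta_image hη, integral_image_eq_integral_abs_deriv_smul MeasurableSet.univ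
    (fun s _ => (hη.ode s).hasDerivWithinAt) hη.anti.injective.injOn]
  rw [setIntegral_univ]
  unfold kap
  apply integral_congr_ae
  refine Eventually.of_forall fun s => ?_
  have := wf_pos hW (hη.mem s)
  simp only [smul_eq_mul, abs_neg, ← wf_eq (eta_Icc hη s)]
  rw [abs_of_pos this]; field_simp
end

end Part6

section Part7
open MeasureTheory Real Set Filter
open scoped ENNReal NNReal Pointwise

lemma rad_image {n : ℕ} (hn : 2 ≤ n) {a : ℝ} (ha : 0 < a) (T : ℝ) :
    (fun y : ℝ => a * y ^ n - T) '' Ioi 0 = Ioi (-T) := by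
  ext s
  constructor
  · rintro ⟨y, hy, rfl⟩
    have : 0 < a * y ^ n := mul_pos ha (pow_pos hy n)
    simp only [mem_Ioi]; linarith
  · intro hs
    have h1 : 0 < (s + T) / a := div_pos (by linarith [mem_Ioi.1 hs]) ha
    refine ⟨((s + T) / a) ^ ((n:ℝ)⁻¹), Real.rpow_pos_of_pos h1 _, ?_⟩
    simp only
    rw [← Real.rpow_natCast, ← Real.rpow_mul h1.le, inv_mul_cancel₀ (by positivity), Real.rpow_one]
    field_simp; ring

lemma rad_inj {n : ℕ} (hn : 2 ≤ n) {a : ℝ} (ha : 0 < a) (T : ℝ) :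
    InjOn (fun y : ℝ => a * y ^ n - T) (Ioi 0) := by
  intro x hx y hy h
  simp only [sub_left_inj, mul_eq_mul_left_iff, ha.ne', or_false] at h
  exact (pow_left_inj₀ (le_of_lt hx) (le_of_lt hy) (by omega)).1 h

lemma rad_hd {n : ℕ} (a T y : ℝ) :
    HasDerivAt (fun y : ℝ => a * y ^ n - T) (a * (n * y ^ (n - 1))) y := by
  have := ((hasDerivAt_pow n y).const_mul a).sub_const T
  simpa using this

lemma rad {n : ℕ} (hn : 2 ≤ n) {a : ℝ} (ha : 0 < a) (T : ℝ) {g : ℝ → ℝ}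
    (hg : IntegrableOn g (Ioi (-T))) :
    Integrable (fun x : En n => g (a * ‖x‖ ^ n - T)) ∧
      ∫ x : En n, g (a * ‖x‖ ^ n - T) = ballVol n * a⁻¹ * ∫ s in Ioi (-T), g s := by
  haveI : Nonempty (Fin n) := ⟨⟨0, by omega⟩⟩
  haveI : Nontrivial (En n) := inferInstance
  have hfr : Module.finrank ℝ (En n) = n := by simp
  have n0 : (n:ℝ) ≠ 0 := by positivity
  have e : ∀ y ∈ Ioi (0:ℝ), |a * ((n:ℝ) * y ^ (n - 1))| • g (a * y ^ n - T) =
      (a * n) * (y ^ (n - 1) • g (a * y ^ n - T)) := by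
    intro y hy
    have : 0 < y := hy
    rw [abs_of_nonneg (by positivity)]; simp only [smul_eq_mul]; ring
  constructor
  · rw [integrable_fun_norm_addHaar volume (f := fun r => g (a * r ^ n - T)), hfr]
    rw [← rad_image hn ha T, integrableOn_image_iff_integrableOn_abs_deriv_smul measurableSet_Ioi
      (fun y _ => (rad_hd a T y).hasDerivWithinAt) (rad_inj hn ha T)] at hg
    have h2 := (hg.congr_fun e measurableSet_Ioi).const_mul (a * n)⁻¹
    refine IntegrableOn.congr_fun h2 ?_ measurableSet_Ioi
    intro y hy
    simp only
    rw [← mul_assoc, inv_mul_cancel₀ (by positivity), one_mul]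
  · rw [integral_fun_norm_addHaar volume (fun r => g (a * r ^ n - T)), hfr, ← rad_image hn ha T,
      integral_image_eq_integral_abs_deriv_smul measurableSet_Ioi
      (fun y _ => (rad_hd a T y).hasDerivWithinAt) (rad_inj hn ha T),
      setIntegral_congr_fun measurableSet_Ioi e, integral_const_mul]
    have : volume.real (Metric.ball (0 : En n) 1) = ballVol n := rfl
    rw [this]
    simp only [smul_eq_mul, nsmul_eq_mul]
    field_simp

section
variable {W η : ℝ → ℝ}

def uT (n : ℕ) (η : ℝ → ℝ) (a T : ℝ) (x : En n) : ℝ := η (a * ‖x‖ ^ n - T)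

lemma uT_diff {n : ℕ} (hn : 2 ≤ n) (hη : TransitionProfile W η) (a T : ℝ) :
    Differentiable ℝ (uT n η a T) ∧ ∀ x, ‖fderiv ℝ (uT n η a T) x‖ =
      Real.sqrt (W (η (a * ‖x‖ ^ n - T))) * (|a| * (n * ‖x‖ ^ (n - 1))) := by
  have hn1 : (1:ℝ) < n := by exact_mod_cast (by omega : 1 < n)
  have key : ∀ x : En n, HasFDerivAt (uT n η a T)
      (-(Real.sqrt (W (η (a * ‖x‖ ^ n - T)))) • (a • fderiv ℝ (fun x : En n => ‖x‖ ^ (n:ℝ)) x)) x := by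
    intro x
    have h1 : HasFDerivAt (fun x : En n => ‖x‖ ^ (n:ℝ)) (fderiv ℝ (fun x : En n => ‖x‖ ^ (n:ℝ)) x) x :=
      (differentiable_norm_rpow hn1 x).hasFDerivAt
    have h2 : HasFDerivAt (fun x : En n => a * ‖x‖ ^ n - T)
        (a • fderiv ℝ (fun x : En n => ‖x‖ ^ (n:ℝ)) x) x := by
      have := (h1.const_mul a).sub_const T
      simpa [Real.rpow_natCast] using this
    exact (hη.ode (a * ‖x‖ ^ n - T)).comp_hasFDerivAt x h2
  refine ⟨fun x => (key x).differentiableAt, fun x => ?_⟩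
  rw [(key x).fderiv, norm_smul, norm_smul, norm_fderiv_norm_id_rpow x hn1, norm_neg, Real.norm_eq_abs,
    Real.norm_eq_abs, abs_of_nonneg (Real.sqrt_nonneg _)]
  congr 3
  rw [← Real.rpow_natCast]
  congr 1
  rw [Nat.cast_sub (by omega)]; simp

/-- exponent in the gradient term -/
def kn (n : ℕ) : ℝ := 2 * ((n:ℝ) - 1) / n

lemma kn_bd {n : ℕ} (hn : 2 ≤ n) : 1 ≤ kn n ∧ kn n ≤ 2 := by
  have : (2:ℝ) ≤ n := by exact_mod_cast hn
  unfold kn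
  constructor
  · rw [le_div_iff₀ (by linarith)]; linarith
  · rw [div_le_iff₀ (by linarith)]; linarith

lemma pow_k_le {k x : ℝ} (hk : 1 ≤ k) (hk2 : k ≤ 2) (hx : -1 ≤ x) :
    (1 + x) ^ k ≤ 1 + k * x + x ^ 2 := by
  have h0 : 0 ≤ 1 + x := by linarith
  have h1 := rpow_one_add_le_one_add_mul_self hx (p := k - 1) (by linarith) (by linarith)
  calc (1 + x) ^ k = (1 + x) ^ (k - 1) * (1 + x) := by
        rw [← Real.rpow_add_one' h0 (by linarith)]; congr 1; ring
    _ ≤ (1 + (k - 1) * x) * (1 + x) := by gcongr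
    _ = 1 + k * x + (k - 1) * x ^ 2 := by ring
    _ ≤ _ := by nlinarith [sq_nonneg x]

/-- gradient integral bound -/
lemma Ik_bd {n : ℕ} (hn : 2 ≤ n) (hW : DoubleWell W) (hη : TransitionProfile W η) {b T : ℝ}
    (hb : 0 < b) (hT : T = b⁻¹) :
    IntegrableOn (fun s => W (η s) * (1 + b * s) ^ kn n) (Ioi (-T)) ∧
    0 ≤ ∫ s in Ioi (-T), W (η s) * (1 + b * s) ^ kn n ∧
    ∫ s in Ioi (-T), W (η s) * (1 + b * s) ^ kn n ≤
      1 + kn n * b * mom1 W η + b ^ 2 * ∫ s, s ^ 2 * W (η s) := by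
  obtain ⟨i2, i1, i0⟩ := int_sqW hW hη
  have hk := kn_bd hn
  have h0 : ∀ s, 0 ≤ W (η s) := fun s => W_nonneg hW (eta_Icc hη s)
  set F : ℝ → ℝ := fun s => W (η s) + kn n * b * (s * W (η s)) + b ^ 2 * (s ^ 2 * W (η s)) with hF
  have hFi : Integrable F := (i0.add (i1.const_mul _)).add (i2.const_mul _)
  have hF0 : ∀ s, 0 ≤ F s := by
    intro s
    have : F s = W (η s) * (1 + kn n * (b * s) + (b * s) ^ 2) := by simp only [hF]; ring
    rw [this]
    apply mul_nonneg (h0 s)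
    nlinarith [sq_nonneg (b * s + kn n / 2)]
  have hpos : ∀ s ∈ Ioi (-T), 0 < 1 + b * s := by
    intro s hs
    have : -T < s := hs
    have h2 : b * (-T) < b * s := by gcongr
    rw [hT, mul_neg, mul_inv_cancel₀ hb.ne'] at h2
    linarith
  have hle : ∀ s ∈ Ioi (-T), W (η s) * (1 + b * s) ^ kn n ≤ F s := by
    intro s hs
    have : F s = W (η s) * (1 + kn n * (b * s) + (b * s) ^ 2) := by simp only [hF]; ring
    rw [this]
    exact mul_le_mul_of_nonneg_left (pow_k_le hk.1 hk.2 (by linarith [hpos s hs])) (h0 s)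
  have hnn : ∀ s ∈ Ioi (-T), 0 ≤ W (η s) * (1 + b * s) ^ kn n := fun s hs =>
    mul_nonneg (h0 s) (Real.rpow_nonneg (hpos s hs).le _)
  have hintg : IntegrableOn (fun s => W (η s) * (1 + b * s) ^ kn n) (Ioi (-T)) := by
    refine Integrable.mono' hFi.integrableOn ?_ ?_
    · have hc := Weta_cont hW hη
      apply Continuous.aestronglyMeasurable
      exact hc.mul ((by fun_prop : Continuous fun s : ℝ => 1 + b * s).rpow_const
        (fun _ => Or.inr (by linarith)))
    · refine (ae_restrict_iff' measurableSet_Ioi).2 (Eventually.of_forall fun s hs => ?_)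
      rw [Real.norm_eq_abs, abs_of_nonneg (hnn s hs)]
      exact hle s hs
  refine ⟨hintg, setIntegral_nonneg measurableSet_Ioi hnn, ?_⟩
  calc _ ≤ ∫ s in Ioi (-T), F s := setIntegral_mono_on hintg hFi.integrableOn measurableSet_Ioi hle
    _ ≤ ∫ s, F s := setIntegral_le_integral hFi (Eventually.of_forall hF0)
    _ = _ := by
      simp only [hF]
      have e1 : Integrable (fun s => W (η s) + kn n * b * (s * W (η s))) := i0.add (i1.const_mul _)
      rw [integral_add e1 (i2.const_mul _), integral_add i0 (i1.const_mul _),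
        integral_const_mul, integral_const_mul, int_W_one hW hη]
      rfl

lemma Mass_bd {n : ℕ} (hn : 2 ≤ n) (hW : DoubleWell W) (hη : TransitionProfile W η) {T : ℝ} (hT : 0 < T) :
    IntegrableOn (fun s => Ph W (η s) ^ qn n) (Ioi (-T)) ∧
    T + Kq n W η ≤ ∫ s in Ioi (-T), Ph W (η s) ^ qn n := by
  have hi := (int_V_hv hn hW hη).2
  have hvi : IntegrableOn hv (Ioi (-T)) := by
    unfold hv
    rw [IntegrableOn, integrable_indicator_iff measurableSet_Iic, IntegrableOn, Measure.restrict_restrict measurableSet_Iic]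
    have : Iic (0:ℝ) ∩ Ioi (-T) = Ioc (-T) 0 := by ext; simp [and_comm]
    rw [this]; simp
  have hvT : ∫ s in Ioi (-T), hv s = T := by
    unfold hv
    rw [setIntegral_indicator measurableSet_Iic]
    have : Ioi (-T) ∩ Iic (0:ℝ) = Ioc (-T) 0 := by ext; simp
    rw [this]; simp [hT.le]
  have hintg : IntegrableOn (fun s => Ph W (η s) ^ qn n) (Ioi (-T)) := by
    refine (hi.integrableOn.add hvi).congr (Eventually.of_forall fun s => ?_)
    simp
  refine ⟨hintg, ?_⟩
  have e : ∫ s in Ioi (-T), Ph W (η s) ^ qn n = (∫ s in Ioi (-T), (Ph W (η s) ^ qn n - hv s)) + T := by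
    rw [integral_sub hintg hvi, hvT]; ring
  rw [e]
  have : ∫ s in Iic (-T), (Ph W (η s) ^ qn n - hv s) ≤ 0 := by
    apply setIntegral_nonpos measurableSet_Iic
    intro s hs
    have h1 : hv s = 1 := by
      have : s ≤ 0 := by linarith [mem_Iic.1 hs]
      simp [hv, this]
    have hP := Ph_mem hW (eta_Icc hη s)
    rw [h1]; linarith [(rpow_q hn hP).2, hP.2]
  have h3 := intervalIntegral.integral_Iic_add_Ioi (b := -T) hi.integrableOn hi.integrableOn
  unfold Kq; linarith

lemma eta_sq_int (hW : DoubleWell W) (hη : TransitionProfile W η) {T : ℝ} :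
    IntegrableOn (fun s => η s ^ 2) (Ioi (-T)) := by
  obtain ⟨C, hC, h1, -⟩ := eta_dec hW hη
  have hc := eta_cont hη
  have i1 : IntegrableOn (fun s => η s ^ 2) (Ioi 0) := by
    have hd : Integrable (fun s => C * dec s) := by
      refine int_dec (C := C) ?_ ?_
      · unfold dec; exact Measurable.aestronglyMeasurable (by fun_prop)
      · intro s; have := dec_pos s
        rw [abs_of_pos (by positivity)]
        nlinarith [mul_nonneg (sq_nonneg s) (mul_pos hC this).le]
    refine Integrable.mono' hd.integrableOn (Continuous.aestronglyMeasurable (by fun_prop)) ?_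
    refine (ae_restrict_iff' measurableSet_Ioi).2 (Eventually.of_forall fun s hs => ?_)
    have := eta_Icc hη s
    rw [Real.norm_eq_abs, abs_of_nonneg (sq_nonneg _)]
    nlinarith [h1 s (le_of_lt hs), this.1, this.2]
  have i2 : IntegrableOn (fun s => η s ^ 2) (Icc (-T) 0) :=
    (by fun_prop : Continuous fun s => η s ^ 2).continuousOn.integrableOn_compact isCompact_Icc
  refine (i2.union i1).mono_set ?_
  intro s hs
  rcases le_or_gt s 0 with h | h
  · exact Or.inl ⟨le_of_lt hs, h⟩
  · exact Or.inr h
end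

end Part7

section Part8
open MeasureTheory Real Set Filter
open scoped ENNReal NNReal Pointwise
variable {W η : ℝ → ℝ}

lemma AC_nonneg {n : ℕ} (hW : DoubleWell W) {u : En n → ℝ} (hu : H1Box n u) {ε : ℝ} (hε : 0 < ε) :
    0 ≤ AC n W ε u := by
  unfold AC
  have : 0 ≤ ∫ x, W (u x) := integral_nonneg fun x => W_nonneg hW (hu.mem_Icc x)
  have h2 : 0 ≤ ∫ x, ‖fderiv ℝ u x‖ ^ 2 := integral_nonneg fun x => by positivity
  positivity

lemma ub1 {n : ℕ} (hn : 2 ≤ n) (hW : DoubleWell W) (hη : TransitionProfile W η) {b m : ℝ}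
    (hb : 0 < b) (hm : m = b * ∫ s in Ioi (-b⁻¹), Ph W (η s) ^ qn n) (hm0 : 0 < m) :
    H1Box n (uT n η (ballVol n * m / b) b⁻¹) ∧
    (∫ x, Vpot n W (uT n η (ballVol n * m / b) b⁻¹ x)) = 1 ∧
    (∫ x, W (uT n η (ballVol n * m / b) b⁻¹ x)) ≤ b / m ∧
    (∫ x, ‖fderiv ℝ (uT n η (ballVol n * m / b) b⁻¹) x‖ ^ 2) =
      b / m * ((ballVol n * m * n / b) ^ 2 * (ballVol n * m) ^ (- kn n)) *
        ∫ s in Ioi (-b⁻¹), W (η s) * (1 + b * s) ^ kn n := by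
  have hω := ballVol_pos n
  set ω := ballVol n with hωd
  set a := ω * m / b with had
  have ha : 0 < a := by positivity
  have hn1 : (1:ℝ) < n := by exact_mod_cast (by omega : 1 < n)
  obtain ⟨hd, hg⟩ := uT_diff hn hη a b⁻¹
  obtain ⟨iK, -, -⟩ := Ik_bd hn hW hη hb rfl
  obtain ⟨iV, -⟩ := Mass_bd hn hW hη (inv_pos.2 hb)
  have hfac : ω * a⁻¹ = b / m := by rw [had]; field_simp
  have hgrad : ∀ x : En n, ‖fderiv ℝ (uT n η a b⁻¹) x‖ ^ 2 =
      (fun s => ((ω * m * n / b) ^ 2 * (ω * m) ^ (- kn n)) * (W (η s) * (1 + b * s) ^ kn n))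
        (a * ‖x‖ ^ n - b⁻¹) := by
    intro x
    have e1 : 1 + b * (a * ‖x‖ ^ n - b⁻¹) = (ω * m) * ‖x‖ ^ n := by
      rw [had]; field_simp; ring
    have e2 : ((ω * m) * ‖x‖ ^ n) ^ kn n = (ω * m) ^ kn n * ‖x‖ ^ (2 * (n - 1)) := by
      rw [Real.mul_rpow (by positivity) (by positivity)]
      congr 1
      rw [← Real.rpow_natCast, ← Real.rpow_mul (norm_nonneg _), ← Real.rpow_natCast]
      congr 1
      push_cast [Nat.cast_sub (by omega : 1 ≤ n)]
      unfold kn; field_simp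
    rw [hg x]
    simp only [e1, e2]
    have e3 : (ω * m) ^ (- kn n) * (ω * m) ^ (kn n) = 1 := by
      rw [← Real.rpow_add (by positivity)]; simp
    rw [mul_pow, Real.sq_sqrt (W_nonneg hW (eta_Icc hη _)), abs_of_pos ha]
    have e4 : a * n = ω * m * n / b := by rw [had]; ring
    rw [← mul_assoc a, e4, mul_pow, ← pow_mul, mul_comm (n-1) 2]
    linear_combination (-(ω * m * ↑n / b) ^ 2 * W (η (a * ‖x‖ ^ n - b⁻¹)) * ‖x‖ ^ (2 * (n - 1))) * e3
  have r1 := rad hn ha b⁻¹ iV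
  have r2 := rad hn ha b⁻¹ ((int_sqW hW hη).2.2.integrableOn)
  have r3 := rad hn ha b⁻¹ (iK.const_mul ((ω * m * n / b) ^ 2 * (ω * m) ^ (- kn n)))
  have r4 := rad hn ha b⁻¹ (eta_sq_int hW hη (T := b⁻¹))
  refine ⟨⟨fun x => eta_Icc hη _, hd, ?_, ?_⟩, ?_, ?_, ?_⟩
  · rw [memLp_two_iff_integrable_sq hd.continuous.aestronglyMeasurable]
    exact r4.1
  · rw [← memLp_norm_iff (measurable_fderiv ℝ _).aestronglyMeasurable]
    rw [memLp_two_iff_integrable_sq (measurable_fderiv ℝ _).norm.aestronglyMeasurable]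
    simp only [hgrad]
    exact r3.1
  · have : ∀ x, Vpot n W (uT n η a b⁻¹ x) = Ph W (η (a * ‖x‖ ^ n - b⁻¹)) ^ qn n :=
      fun x => Vpot_eq n (eta_Icc hη _)
    simp only [this]
    rw [r1.2, hfac]
    have : ∫ s in Ioi (-b⁻¹), Ph W (η s) ^ qn n = m / b := by rw [hm]; field_simp
    rw [this]; field_simp
  · have := r2.2
    unfold uT
    rw [this, hfac]
    have h1 : ∫ s in Ioi (-b⁻¹), W (η s) ≤ 1 := by
      rw [← int_W_one hW hη]
      exact setIntegral_le_integral (int_sqW hW hη).2.2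
        (ae_of_all _ fun s => W_nonneg hW (eta_Icc hη s))
    have : 0 < b / m := by positivity
    nlinarith
  · simp only [hgrad]
    rw [r3.2, hfac, integral_const_mul]; ring

lemma ub_alg {α x y z : ℝ} (hα : 0 ≤ α) (hα1 : α ≤ 1) (hx : |x| ≤ 1/2) (hz : 0 ≤ z) (hy : |y| ≤ 1)
    (hz1 : z ≤ 1) {μ I : ℝ} (hμ : 1 + x ≤ μ) (hI : 0 ≤ I) (hI1 : I ≤ 1 + y + z) :
    μ ^ (-α) * I + μ⁻¹ ≤ 2 + y - (1 + α) * x + (10 * x ^ 2 + y ^ 2 + 3 * z) := by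
  have hx' := abs_le.1 hx
  have hy' := abs_le.1 hy
  have h1 : 0 < 1 + x := by linarith
  have h2 : (1 + x)⁻¹ ≤ 1 - x + 2 * x ^ 2 := by
    rw [inv_le_iff_one_le_mul₀ h1]
    nlinarith [sq_nonneg x]
  have h3 : μ⁻¹ ≤ (1 + x)⁻¹ := inv_anti₀ h1 hμ
  have h4 : μ ^ (-α) ≤ 1 + α * (-x + 2 * x ^ 2) := by
    have : μ ^ (-α) ≤ (1 + (-x + 2 * x ^ 2)) ^ α := by
      rw [Real.rpow_neg (by linarith), ← Real.inv_rpow (by linarith)]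
      apply Real.rpow_le_rpow (inv_nonneg.2 (by linarith)) (by linarith) hα
    exact this.trans (rpow_one_add_le_one_add_mul_self (by nlinarith [sq_nonneg x]) hα hα1)
  have h5 : μ ^ (-α) * I ≤ (1 + α * (-x + 2 * x ^ 2)) * (1 + y + z) := by
    apply mul_le_mul h4 hI1 hI
    nlinarith [sq_nonneg x]
  have h6 : (1 + α * (-x + 2 * x ^ 2)) * (1 + y + z) ≤ 1 + y - α * x + (8 * x ^ 2 + y ^ 2 + 3 * z) := by
    have k1 : α * x ^ 2 ≤ x ^ 2 := by nlinarith [sq_nonneg x]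
    have k2 : - (α * x * y) ≤ x ^ 2 + y ^ 2 := by
      have : α * (-(x*y)) ≤ x^2 + y^2 := by
        rcases le_total 0 (-(x*y)) with h | h
        · nlinarith [sq_nonneg (x+y), sq_nonneg (x - y)]
        · nlinarith [sq_nonneg x, sq_nonneg y]
      linarith
    have k3 : 2 * (α * x ^ 2) * y ≤ 2 * x ^ 2 := by
      have : 0 ≤ α * x ^ 2 := by positivity
      nlinarith
    have k4 : (α * (-x + 2 * x ^ 2)) * z ≤ 2 * z := by
      have : α * (-x + 2 * x ^ 2) ≤ 2 := by
        have : (-x + 2 * x ^ 2) ≤ 1 := by nlinarith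
        nlinarith
      exact mul_le_mul_of_nonneg_right this hz
    nlinarith
  linarith

set_option maxHeartbeats 1000000 in
theorem upper_bd {n : ℕ} (hn : 2 ≤ n) (hW : DoubleWell W) (hη : TransitionProfile W η) :
    ∃ ε₀ > (0:ℝ), ∃ C > (0:ℝ), ∀ ε : ℝ, 0 < ε → ε < ε₀ → ∃ u : En n → ℝ, H1Box n u ∧
      (∫ x : En n, Vpot n W (u x)) = 1 ∧
      AC n W ε u ≤ 2 * n * ballVol n ^ ((1 : ℝ) / (n : ℝ))
          + 2 * (n : ℝ) * ((n : ℝ) - 1) * ballVol n ^ ((2 : ℝ) / (n : ℝ)) * kap n W η * ε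
          + C * ε ^ 2 := by
  have hω := ballVol_pos n
  have hn1 : (2:ℝ) ≤ n := by exact_mod_cast hn
  set ω := ballVol n with hωd
  set θ := ω ^ ((1:ℝ)/n) with hθ
  have hθ0 : 0 < θ := by positivity
  have hθ2 : ω ^ ((2:ℝ)/n) = θ ^ 2 := by
    rw [hθ, ← Real.rpow_natCast, ← Real.rpow_mul hω.le]; congr 1; push_cast; ring
  set K := Kq n W η with hK
  set m1 := mom1 W η with hm1
  set m2 := ∫ s, s^2 * W (η s) with hm2
  have hm2n : 0 ≤ m2 := integral_nonneg fun s => mul_nonneg (sq_nonneg _) (W_nonneg hW (eta_Icc hη s))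
  have hkap : kap n W η = m1 - K := kap_eq hn hW hη
  set L := n * θ * (1 + |K| + 2 * |m1| + m2) with hL
  have hL0 : 0 < L := by positivity
  refine ⟨1 / (2 * L * (1 + n * θ)), by positivity,
    n * θ * ((n * θ)^2 * (10 * K ^ 2 + (2 * m1) ^ 2 + 3 * m2)) + 1, by positivity, ?_⟩
  intro ε hε hε1
  set b := n * ε * θ with hbd
  have hb : 0 < b := by positivity
  have hεL : b * (1 + |K| + 2 * |m1| + m2) ≤ 1/2 ∧ b ≤ 1 := by
    have h1 : ε * (2 * L * (1 + n * θ)) ≤ 1 := by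
      rw [lt_div_iff₀ (by positivity)] at hε1; exact hε1.le
    have h2 : ε * (2 * L) ≤ 1 := by
      have : 0 ≤ ε * (2 * L) * (n * θ) := by positivity
      nlinarith
    have h3 : b * (1 + |K| + 2 * |m1| + m2) = ε * L := by rw [hbd, hL]; ring
    have h4 : 0 ≤ b * (|K| + 2 * |m1| + m2) := by positivity
    constructor
    · linarith
    · nlinarith
  obtain ⟨hbL, hb1⟩ := hεL
  have p1 : 0 ≤ b * |K| := by positivity
  have p2 : 0 ≤ b * |m1| := by positivity
  have p3 : 0 ≤ b * m2 := by positivity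
  set x := b * K with hx
  have hxa : |x| ≤ 1/2 := by rw [hx, abs_mul, abs_of_pos hb]; nlinarith
  set m := b * ∫ s in Ioi (-b⁻¹), Ph W (η s) ^ qn n with hm
  have hmx : 1 + x ≤ m := by
    have := (Mass_bd hn hW hη (inv_pos.2 hb)).2
    have := mul_le_mul_of_nonneg_left this hb.le
    rw [hm, hx]
    refine le_trans (le_of_eq ?_) this
    rw [mul_add, mul_inv_cancel₀ hb.ne']
  have hm0 : 0 < m := by have := (abs_le.1 hxa).1; linarith
  obtain ⟨h1, h2, h3, h4⟩ := ub1 hn hW hη hb hm hm0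
  refine ⟨_, h1, h2, ?_⟩
  obtain ⟨-, hI0, hI1⟩ := Ik_bd hn hW hη hb rfl
  have hkn := kn_bd hn
  have hyb : |kn n * b * m1| ≤ 1 := by
    rw [abs_mul, abs_mul, abs_of_pos hb, abs_of_nonneg (by linarith : 0 ≤ kn n)]
    nlinarith
  have key := ub_alg (α := kn n - 1) (x := x) (y := kn n * b * m1) (z := b^2 * m2) (by linarith) (by linarith) hxa
    (by positivity) hyb (by nlinarith) hmx hI0 hI1
  unfold AC
  rw [h4]
  have hωm : (ω * m) ^ (-kn n) = ω ^ (-kn n) * (m ^ (-(kn n - 1)) * m⁻¹) := by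
    rw [Real.mul_rpow hω.le hm0.le]
    congr 1
    rw [← Real.rpow_neg_one m, ← Real.rpow_add hm0]; congr 1; ring
  have hωk : ω ^ 2 * ω ^ (- kn n) = θ ^ 2 := by
    rw [← hθ2, ← Real.rpow_natCast, ← Real.rpow_add hω]; congr 1
    unfold kn; push_cast; field_simp; ring
  set I := ∫ s in Ioi (-b⁻¹), W (η s) * (1 + b * s) ^ kn n with hI
  have e1 : ε * (b / m * ((ω * m * n / b) ^ 2 * (ω * m) ^ (- kn n)) * I) =
      n * θ * (m ^ (-(kn n - 1)) * I) := by
    rw [hωm]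
    have : b / m * ((ω * m * n / b) ^ 2 * (ω ^ (-kn n) * (m ^ (-(kn n - 1)) * m⁻¹))) =
      (ω ^ 2 * ω ^ (-kn n)) * (n^2 / b) * m ^ (-(kn n - 1)) := by field_simp
    rw [this, hωk, hbd]; field_simp
  have e2 : ε⁻¹ * ∫ x, W (uT n η (ω * m / b) b⁻¹ x) ≤ n * θ * m⁻¹ := by
    calc _ ≤ ε⁻¹ * (b / m) := mul_le_mul_of_nonneg_left h3 (by positivity)
      _ = _ := by rw [hbd]; field_simp
  rw [e1]
  have e3 := mul_le_mul_of_nonneg_left key (by positivity : 0 ≤ n * θ)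
  have hkn2 : kn n * n = 2 * (n - 1) := by unfold kn; field_simp
  have e4 : kn n * b * m1 - (1 + (kn n - 1)) * x = 2 * (n - 1) * θ * ε * kap n W η := by
    rw [hkap, hx, hbd]
    linear_combination (ε * θ * (m1 - K)) * hkn2
  have e5 : 10 * x ^ 2 + (kn n * b * m1) ^ 2 + 3 * (b ^ 2 * m2) ≤
      ε^2 * ((n * θ)^2 * (10 * K ^ 2 + (2 * m1) ^ 2 + 3 * m2)) := by
    have : ε^2 * ((n * θ)^2 * (10 * K ^ 2 + (2 * m1) ^ 2 + 3 * m2)) =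
      10 * x ^ 2 + 4 * (b * m1) ^ 2 + 3 * (b ^ 2 * m2) := by rw [hx, hbd]; ring
    rw [this]
    have : (kn n * b * m1) ^ 2 = (kn n)^2 * (b * m1)^2 := by ring
    rw [this]
    have : (kn n)^2 ≤ 4 := by nlinarith
    have := mul_le_mul_of_nonneg_right this (sq_nonneg (b * m1))
    linarith
  have e6 := mul_le_mul_of_nonneg_left e5 (by positivity : 0 ≤ n * θ)
  rw [hθ2]
  have e7 : n * θ * (kn n * b * m1 - (1 + (kn n - 1)) * x) = n * θ * (2 * (n - 1) * θ * ε * kap n W η) := by rw [e4]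
  have e8 : n * θ * (2 + kn n * b * m1 - (1 + (kn n - 1)) * x +
      (10 * x ^ 2 + (kn n * b * m1) ^ 2 + 3 * (b ^ 2 * m2))) =
      2 * n * θ + n * θ * (kn n * b * m1 - (1 + (kn n - 1)) * x) +
      n * θ * (10 * x ^ 2 + (kn n * b * m1) ^ 2 + 3 * (b ^ 2 * m2)) := by ring
  rw [e8, e7] at e3
  rw [mul_add] at e3
  have e9 := sq_nonneg ε
  linarith

end Part8

section Part9
open MeasureTheory Real Set Filter
open scoped ENNReal NNReal Pointwise
variable {W η : ℝ → ℝ}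

/-- distribution function -/
def vl {n : ℕ} (u : En n → ℝ) (t : ℝ) : ℝ≥0∞ := volume {x | t < u x}

lemma vl_anti {n : ℕ} (u : En n → ℝ) : Antitone (vl u) := fun _ _ h =>
  measure_mono fun _ hx => lt_of_le_of_lt h hx

lemma vl_meas {n : ℕ} (u : En n → ℝ) : Measurable (vl u) := (vl_anti u).measurable

/-- the measure `√W dt` -/
def PW (W : ℝ → ℝ) : Measure ℝ :=
  (volume.restrict (Ioo 0 1)).withDensity (fun t => ENNReal.ofReal (wf W t))

def pn (n : ℕ) : ℝ := ((n:ℝ) - 1) / n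
def cN (n : ℕ) : ℝ := n * ballVol n ^ (1 / (n:ℝ))

lemma lint_PW (hW : DoubleWell W) {F : ℝ → ℝ≥0∞} (hF : Measurable F) :
    ∫⁻ t, F t ∂(PW W) = ∫⁻ t in Ioo 0 1, ENNReal.ofReal (wf W t) * F t := by
  unfold PW
  rw [lintegral_withDensity_eq_lintegral_mul _ (wf_cont hW).measurable.ennreal_ofReal hF]
  rfl

lemma int_wf_I (hW : DoubleWell W) {F : ℝ → ℝ} : ∫ t, F t ∂(PW W) = ∫ t in Ioo 0 1, wf W t * F t := by
  unfold PW
  rw [integral_withDensity_eq_integral_toReal_smul (wf_cont hW).measurable.ennreal_ofReal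
    (ae_of_all _ fun t => ENNReal.ofReal_lt_top)]
  simp [ENNReal.toReal_ofReal (wf_nonneg (W := W) _)]

lemma PW_univ (hW : DoubleWell W) : PW W univ = 1 := by
  have h := lint_PW hW (F := fun _ => 1) measurable_const
  simp only [lintegral_const, one_mul, mul_one] at h
  rw [h, ← ofReal_integral_eq_lintegral_ofReal]
  · rw [← integral_Ioc_eq_integral_Ioo, ← intervalIntegral.integral_of_le zero_le_one]
    have := Ph_one hW
    unfold Ph at this
    rw [this]; simp
  · exact ((wf_cont hW).integrableOn_Icc (a := 0) (b := 1)).mono_set Ioo_subset_Icc_self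
  · exact ae_of_all _ fun t => wf_nonneg t

lemma PW_prob (hW : DoubleWell W) : IsProbabilityMeasure (PW W) := ⟨PW_univ hW⟩

lemma PW_ae (W : ℝ → ℝ) : ∀ᵐ t ∂(PW W), t ∈ Ioo (0:ℝ) 1 :=
  (withDensity_absolutelyContinuous _ _).ae_le (ae_restrict_mem measurableSet_Ioo)

lemma H1_L2 {n : ℕ} {u : En n → ℝ} (hu : H1Box n u) : Integrable (fun x => u x ^ 2) :=
  (memLp_two_iff_integrable_sq hu.diff.continuous.aestronglyMeasurable).1 hu.memL2

lemma H1_g2 {n : ℕ} {u : En n → ℝ} (hu : H1Box n u) : Integrable (fun x => ‖fderiv ℝ u x‖ ^ 2) :=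
  (memLp_two_iff_integrable_sq (measurable_fderiv ℝ _).norm.aestronglyMeasurable).1
    (hu.grad_memL2.norm)

lemma wfu_meas {n : ℕ} (hW : DoubleWell W) {u : En n → ℝ} (hu : H1Box n u) :
    Continuous (fun x => wf W (u x)) := (wf_cont hW).comp hu.diff.continuous

lemma H1_W {n : ℕ} (hW : DoubleWell W) (hη : TransitionProfile W η) {u : En n → ℝ} (hu : H1Box n u) :
    Integrable (fun x => wf W (u x) ^ 2) := by
  obtain ⟨c, hc, C, hC, h⟩ := W_quad hW hη
  refine ((H1_L2 hu).const_mul (C^2)).mono' ((wfu_meas hW hu).pow 2).aestronglyMeasurable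
    (ae_of_all _ fun x => ?_)
  have hx := hu.mem_Icc x
  rw [Real.norm_of_nonneg (sq_nonneg _), wf_sq hW hx]
  refine (h _ hx).2.trans ?_
  apply mul_le_mul_of_nonneg_left _ (sq_nonneg C)
  apply pow_le_pow_left₀ (mul_nonneg hx.1 (by linarith [hx.2]))
  nlinarith [hx.1, hx.2]

lemma H1_Ph {n : ℕ} (hW : DoubleWell W) (hη : TransitionProfile W η) {u : En n → ℝ} (hu : H1Box n u) :
    Integrable (fun x => Ph W (u x)) := by
  obtain ⟨C, hC, h⟩ := Ph_upper hW hη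
  refine ((H1_L2 hu).const_mul C).mono' ((Ph_cont hW).comp hu.diff.continuous).aestronglyMeasurable
    (ae_of_all _ fun x => ?_)
  have hx := hu.mem_Icc x
  rw [Real.norm_of_nonneg (Ph_mem hW hx).1]
  exact (h _ hx).1

lemma H1_Wg {n : ℕ} (hW : DoubleWell W) (hη : TransitionProfile W η) {u : En n → ℝ} (hu : H1Box n u) :
    ∫⁻ x, ENNReal.ofReal (wf W (u x)) * ‖fderiv ℝ u x‖ₑ ≠ ⊤ := by
  have h : Integrable (fun x => wf W (u x) * ‖fderiv ℝ u x‖) := by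
    refine ((H1_W hW hη hu).add (H1_g2 hu)).mono'
      (((wfu_meas hW hu).measurable.mul (measurable_fderiv ℝ u).norm).aestronglyMeasurable)
      (ae_of_all _ fun x => ?_)
    have : 0 ≤ wf W (u x) := wf_nonneg _
    rw [Real.norm_of_nonneg (by positivity)]
    simp only [Pi.add_apply]
    nlinarith [sq_nonneg (wf W (u x) - ‖fderiv ℝ u x‖), sq_nonneg (wf W (u x)), sq_nonneg ‖fderiv ℝ u x‖]
  have := h.lintegral_lt_top.ne
  convert this using 3 with x
  rw [ENNReal.ofReal_mul (wf_nonneg _), ofReal_norm]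

lemma lor_cont {n : ℕ} (hn : 2 ≤ n) (hW : DoubleWell W) (hη : TransitionProfile W η)
    {u : En n → ℝ} (hu : H1Box n u) {a : ℝ → ℝ} (ha : Continuous a) (ha0 : ∀ t, 0 < a t) :
    ENNReal.ofReal (cN n) * ∫⁻ t, ENNReal.ofReal (a t) * vl u t ^ pn n ∂(PW W) ≤
      ∫⁻ x, ENNReal.ofReal (a (u x)) * (ENNReal.ofReal (wf W (u x)) * ‖fderiv ℝ u x‖ₑ) := by
  set A : ℝ → ℝ := fun τ => ∫ s in 0..τ, a s * wf W s with hA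
  have hac : Continuous (fun s => a s * wf W s) := ha.mul (wf_cont hW)
  have hAd : ∀ τ, HasDerivAt A (a τ * wf W τ) τ := fun τ =>
    intervalIntegral.integral_hasDerivAt_right (hac.intervalIntegrable _ _)
      hac.aestronglyMeasurable.stronglyMeasurableAtFilter hac.continuousAt
  have hAc : Continuous A := continuous_iff_continuousAt.2 fun t => (hAd t).continuousAt
  have hA0 : A 0 = 0 := by simp [hA]
  have hAs : StrictMonoOn A (Icc 0 1) := by
    apply strictMonoOn_of_deriv_pos (convex_Icc 0 1) hAc.continuousOn
    intro x hx
    rw [interior_Icc] at hx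
    rw [(hAd x).deriv]
    exact mul_pos (ha0 x) (wf_pos hW hx)
  obtain ⟨B, hB⟩ := (isCompact_Icc (a := (0:ℝ)) (b := 1)).exists_bound_of_continuousOn ha.continuousOn
  have hAB : ∀ τ ∈ Icc (0:ℝ) 1, A τ ≤ B * Ph W τ := by
    intro τ hτ
    rw [hA]; unfold Ph
    rw [← intervalIntegral.integral_const_mul]
    apply intervalIntegral.integral_mono_on hτ.1 (hac.intervalIntegrable _ _)
      (((wf_cont hW).const_mul B).intervalIntegrable _ _)
    intro s hs
    apply mul_le_mul_of_nonneg_right _ (wf_nonneg _)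
    exact (le_abs_self _).trans (hB s ⟨hs.1, hs.2.trans hτ.2⟩)
  have hfd : ∀ x, HasFDerivAt (fun x => A (u x)) ((a (u x) * wf W (u x)) • fderiv ℝ u x) x := fun x =>
    (hAd (u x)).comp_hasFDerivAt x (hu.diff x).hasFDerivAt
  have hs := sob n hn (f := fun x => A (u x)) (fun x => (hfd x).differentiableAt) ?_
  · have e1 : ∫⁻ x, ENNReal.ofReal (a (u x)) * (ENNReal.ofReal (wf W (u x)) * ‖fderiv ℝ u x‖ₑ) =
        ∫⁻ x, ‖fderiv ℝ (fun x => A (u x)) x‖ₑ := by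
      apply lintegral_congr
      intro x
      rw [(hfd x).fderiv, enorm_smul, Real.enorm_of_nonneg (mul_nonneg (ha0 _).le (wf_nonneg _)),
        ENNReal.ofReal_mul (ha0 _).le, mul_assoc]
    rw [e1]
    refine le_trans ?_ hs
    unfold cN
    refine mul_le_mul' le_rfl ?_
    have him : A '' Ioo 0 1 ⊆ Ioi 0 := by
      rintro _ ⟨t, ht, rfl⟩
      rw [← hA0]
      exact hAs (by simp) (Ioo_subset_Icc_self ht) ht.1
    refine le_trans ?_ (lintegral_mono_set him)
    rw [lintegral_image_eq_lintegral_abs_deriv_mul measurableSet_Ioo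
      (fun x _ => (hAd x).hasDerivWithinAt) (hAs.injOn.mono Ioo_subset_Icc_self)]
    rw [lint_PW hW (by exact ha.measurable.ennreal_ofReal.mul ((vl_meas u).pow_const _))]
    apply le_of_eq
    apply setLIntegral_congr_fun measurableSet_Ioo
    intro t ht
    simp only
    rw [abs_of_nonneg (mul_nonneg (ha0 _).le (wf_nonneg _)), ENNReal.ofReal_mul (ha0 _).le]
    have : {x | A t < A (u x)} = {x | t < u x} := by
      ext x; exact hAs.lt_iff_lt (Ioo_subset_Icc_self ht) (hu.mem_Icc x)
    rw [this]; unfold vl pn; ring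
  · refine ne_top_of_le_ne_top ((H1_Ph hW hη hu).const_mul B).lintegral_lt_top.ne
      (lintegral_mono fun x => ENNReal.ofReal_le_ofReal (hAB _ (hu.mem_Icc x)))

lemma pn_nonneg {n : ℕ} (hn : 2 ≤ n) : 0 < pn n ∧ pn n < 1 := by
  have : (2:ℝ) ≤ n := by exact_mod_cast hn
  unfold pn
  constructor
  · apply div_pos <;> linarith
  · rw [div_lt_one] <;> linarith

lemma cN_pos {n : ℕ} (hn : 2 ≤ n) : 0 < cN n := by
  have : (2:ℝ) ≤ n := by exact_mod_cast hn
  have := ballVol_pos n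
  unfold cN; positivity

theorem lor {n : ℕ} (hn : 2 ≤ n) (hW : DoubleWell W) (hη : TransitionProfile W η)
    {u : En n → ℝ} (hu : H1Box n u) {a : ℝ → ℝ≥0∞} (ha : Measurable a) :
    ENNReal.ofReal (cN n) * ∫⁻ t, a t * vl u t ^ pn n ∂(PW W) ≤
      ∫⁻ x, a (u x) * (ENNReal.ofReal (wf W (u x)) * ‖fderiv ℝ u x‖ₑ) := by
  set F : ℝ → ℝ≥0∞ := fun t => ENNReal.ofReal (cN n) * vl u t ^ pn n with hF
  have hFm : Measurable F := ((vl_meas u).pow_const _).const_mul _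
  set G : En n → ℝ≥0∞ := fun x => ENNReal.ofReal (wf W (u x)) * ‖fderiv ℝ u x‖ₑ with hG
  have hGm : Measurable G := (wfu_meas hW hu).measurable.ennreal_ofReal.mul (measurable_fderiv ℝ u).enorm
  have hum : Measurable u := hu.diff.continuous.measurable
  set μ1 := (PW W).withDensity F with hμ1
  set μ2 := (volume.withDensity G).map u with hμ2
  have i1 : ∀ {g : ℝ → ℝ≥0∞}, Measurable g → ∫⁻ t, g t ∂μ1 =
      ENNReal.ofReal (cN n) * ∫⁻ t, g t * vl u t ^ pn n ∂(PW W) := by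
    intro g hg
    rw [hμ1, lintegral_withDensity_eq_lintegral_mul _ hFm hg, ← lintegral_const_mul _
      (by exact hg.mul ((vl_meas u).pow_const _))]
    apply lintegral_congr; intro t; simp only [Pi.mul_apply, hF]; ring
  have i2 : ∀ {g : ℝ → ℝ≥0∞}, Measurable g → ∫⁻ t, g t ∂μ2 = ∫⁻ x, g (u x) * G x := by
    intro g hg
    rw [hμ2, lintegral_map hg hum,
      lintegral_withDensity_eq_lintegral_mul _ hGm (g := fun x => g (u x)) (hg.comp hum)]
    apply lintegral_congr; intro t; simp only [Pi.mul_apply]; ring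
  rw [← i1 ha, ← i2 ha]
  refine lintegral_mono' ?_ le_rfl
  have hc : ∀ {a : ℝ → ℝ}, Continuous a → (∀ t, 0 < a t) →
      ∫⁻ t, ENNReal.ofReal (a t) ∂μ1 ≤ ∫⁻ t, ENNReal.ofReal (a t) ∂μ2 := by
    intro a ha ha0
    rw [i1 ha.measurable.ennreal_ofReal, i2 ha.measurable.ennreal_ofReal]
    exact lor_cont hn hW hη hu ha ha0
  have f2 : μ2 univ ≠ ⊤ := by
    have := i2 (g := fun _ => 1) measurable_const
    simp only [lintegral_const, one_mul] at this
    rw [this]; exact H1_Wg hW hη hu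
  have f1 : μ1 univ ≠ ⊤ := by
    have := hc (a := fun _ => 1) continuous_const (by simp)
    simp only [lintegral_const, ENNReal.ofReal_one, one_mul] at this
    exact ne_top_of_le_ne_top f2 this
  have : IsFiniteMeasure μ1 := ⟨f1.lt_top⟩
  have : IsFiniteMeasure μ2 := ⟨f2.lt_top⟩
  have hcl : ∀ K : Set ℝ, IsClosed K → μ1 K ≤ μ2 K := by
    intro K hK
    have key : ∀ k : ℕ, μ1 K ≤ (∫⁻ t, (thickenedIndicator (one_div_pos.2 (Nat.cast_add_one_pos k : (0:ℝ) < k + 1)) K t : ℝ≥0∞) ∂μ2)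
        + ENNReal.ofReal (1 / ((k:ℝ) + 1)) * μ2 univ := by
      intro k
      have hpos := one_div_pos.2 (Nat.cast_add_one_pos k : (0:ℝ) < k + 1)
      set f := thickenedIndicator hpos K with hf
      have hfc : Continuous fun t => ((f t : ℝ≥0) : ℝ) := NNReal.continuous_coe.comp f.continuous
      have h1 := hc (a := fun t => (f t : ℝ) + 1 / ((k:ℝ) + 1)) (hfc.add continuous_const)
        (fun t => by have := (f t).coe_nonneg; positivity)
      have e : ∀ t, ENNReal.ofReal ((f t : ℝ) + 1 / ((k:ℝ) + 1)) = (f t : ℝ≥0∞) + ENNReal.ofReal (1 / ((k:ℝ) + 1)) := by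
        intro t
        rw [ENNReal.ofReal_add (f t).coe_nonneg hpos.le, ENNReal.ofReal_coe_nnreal]
      simp only [e] at h1
      rw [lintegral_add_right _ measurable_const, lintegral_add_right _ measurable_const] at h1
      simp only [lintegral_const] at h1
      refine le_trans ?_ h1
      refine le_trans ?_ le_self_add
      rw [← lintegral_indicator_one hK.measurableSet]
      apply lintegral_mono
      intro t
      by_cases ht : t ∈ K
      · have h1 : f t = 1 := thickenedIndicator_one hpos K ht
        simp only [h1]; simp [ht]
      · simp [ht]
    have t1 := tendsto_lintegral_thickenedIndicator_of_isClosed μ2 hK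
      (δs := fun k : ℕ => 1 / ((k:ℝ) + 1)) (fun k => one_div_pos.2 (Nat.cast_add_one_pos k))
      tendsto_one_div_add_atTop_nhds_zero_nat
    have t2 : Tendsto (fun k : ℕ => ENNReal.ofReal (1 / ((k:ℝ) + 1)) * μ2 univ) atTop (nhds 0) := by
      have := (ENNReal.tendsto_ofReal (tendsto_one_div_add_atTop_nhds_zero_nat (𝕜 := ℝ)))
      have := ENNReal.Tendsto.mul_const this (b := μ2 univ) (Or.inr f2)
      simpa using this
    have := t1.add t2
    rw [add_zero] at this
    exact ge_of_tendsto' this key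
  refine Measure.le_iff.2 fun s hs => ?_
  rw [hs.measure_eq_iSup_isClosed_of_ne_top (measure_ne_top _ _)]
  exact iSup₂_le fun K hK => iSup_le fun hKc => (hcl K hKc).trans (measure_mono hK)

end Part9

section Part10
open MeasureTheory Real Set Filter
open scoped ENNReal NNReal Pointwise
variable {W η : ℝ → ℝ}

lemma PW_ftc (hW : DoubleWell W) {F f : ℝ → ℝ} (hf : Continuous f) (hf0 : ∀ t, 0 ≤ f t)
    (hF : ∀ t, HasDerivAt F (f t * wf W t) t) {y : ℝ} (hy : y ∈ Icc (0:ℝ) 1) :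
    ∫⁻ t in Iio y, ENNReal.ofReal (f t) ∂(PW W) = ENNReal.ofReal (F y - F 0) := by
  have hc : Continuous fun t => f t * wf W t := hf.mul (wf_cont hW)
  rw [← lintegral_indicator measurableSet_Iio,
    lint_PW hW (hf.measurable.ennreal_ofReal.indicator measurableSet_Iio)]
  have : ∫⁻ t in Ioo 0 1, ENNReal.ofReal (wf W t) * (Iio y).indicator (fun t => ENNReal.ofReal (f t)) t
      = ∫⁻ t in Ioo 0 y, ENNReal.ofReal (f t * wf W t) := by
    have e : ∀ t, ENNReal.ofReal (wf W t) * (Iio y).indicator (fun t => ENNReal.ofReal (f t)) t =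
        (Iio y).indicator (fun t => ENNReal.ofReal (f t * wf W t)) t := by
      intro t
      by_cases ht : t ∈ Iio y
      · simp only [indicator_of_mem ht]
        rw [ENNReal.ofReal_mul (hf0 t), mul_comm]
      · simp only [indicator_of_notMem ht, mul_zero]
    simp only [e]
    rw [lintegral_indicator measurableSet_Iio, Measure.restrict_restrict measurableSet_Iio]
    congr 2
    ext t; simp only [mem_inter_iff, mem_Iio, mem_Ioo]
    exact ⟨fun h => ⟨h.2.1, h.1⟩, fun h => ⟨h.2, h.1, h.2.trans_le hy.2⟩⟩
  rw [this, ← ofReal_integral_eq_lintegral_ofReal]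
  · rw [← integral_Ioc_eq_integral_Ioo, ← intervalIntegral.integral_of_le hy.1,
      intervalIntegral.integral_eq_sub_of_hasDerivAt (fun t _ => hF t) (hc.intervalIntegrable _ _)]
  · exact (hc.integrableOn_Icc (a := 0) (b := y)).mono_set Ioo_subset_Icc_self
  · exact ae_of_all _ fun t => mul_nonneg (hf0 t) (wf_nonneg t)

lemma PW_Iio (hW : DoubleWell W) {y : ℝ} (hy : y ∈ Icc (0:ℝ) 1) :
    PW W (Iio y) = ENNReal.ofReal (Ph W y) := by
  have := PW_ftc hW (f := fun _ => 1) continuous_const (by simp)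
    (fun t => (Ph_hd hW t).congr_deriv (by simp)) hy
  simpa [Ph_zero] using this

lemma PW_sing (W : ℝ → ℝ) (y : ℝ) : PW W {y} = 0 :=
  (withDensity_absolutelyContinuous _ _) (by simp)

lemma PW_Iic (hW : DoubleWell W) {y : ℝ} (hy : y ∈ Icc (0:ℝ) 1) :
    PW W (Iic y) = ENNReal.ofReal (Ph W y) := by
  rw [← PW_Iio hW hy, ← Iio_union_right]
  refine le_antisymm ((measure_union_le _ _).trans ?_) (measure_mono subset_union_left)
  rw [PW_sing, add_zero]

lemma PW_Ici (hW : DoubleWell W) {y : ℝ} (hy : y ∈ Icc (0:ℝ) 1) :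
    PW W (Ici y) = ENNReal.ofReal (1 - Ph W y) := by
  have := PW_prob hW
  rw [← compl_Iio, prob_compl_eq_one_sub measurableSet_Iio, PW_Iio hW hy,
    ENNReal.ofReal_sub _ (Ph_mem hW hy).1]
  simp

/-- derivative weight -/
def mq (n : ℕ) (W : ℝ → ℝ) (t : ℝ) : ℝ := qn n * max 0 (Ph W t) ^ (qn n - 1)

lemma mq_cont {n : ℕ} (hn : 2 ≤ n) (hW : DoubleWell W) : Continuous (mq n W) := by
  have hq := qn_bd hn
  unfold mq
  exact ((continuous_const.max (Ph_cont hW)).rpow_const (fun _ => Or.inr (by linarith))).const_mul _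

lemma mq_nonneg {n : ℕ} (hn : 2 ≤ n) (t : ℝ) : 0 ≤ mq n W t := by
  have hq := qn_bd hn
  unfold mq
  exact mul_nonneg (by linarith) (by positivity)

lemma mq_le {n : ℕ} (hn : 2 ≤ n) (hW : DoubleWell W) {t : ℝ} (ht : t ∈ Icc (0:ℝ) 1) : mq n W t ≤ 2 := by
  have hq := qn_bd hn
  have h := Ph_mem hW ht
  unfold mq
  have : max 0 (Ph W t) ^ (qn n - 1) ≤ 1 :=
    Real.rpow_le_one (le_max_left _ _) (max_le zero_le_one h.2) (by linarith)
  have h0 : 0 ≤ max 0 (Ph W t) ^ (qn n - 1) := by positivity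
  nlinarith

lemma PW_mq {n : ℕ} (hn : 2 ≤ n) (hW : DoubleWell W) {y : ℝ} (hy : y ∈ Icc (0:ℝ) 1) :
    ∫⁻ t in Iio y, ENNReal.ofReal (mq n W t) ∂(PW W) = ENNReal.ofReal (Ph W y ^ qn n) := by
  have hq := qn_bd hn
  have hF : ∀ t, HasDerivAt (fun t => Ph W t ^ qn n) (mq n W t * wf W t) t := by
    intro t
    refine (V_hd hn hW t).congr_deriv ?_
    by_cases ht : 0 ≤ t
    · have : 0 ≤ Ph W t := by rw [← Ph_zero (W := W)]; exact Ph_mono hW ht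
      unfold mq; rw [max_eq_right this]
    · have : wf W t = 0 := by
        unfold wf
        rw [min_eq_right (by linarith), max_eq_left (by linarith), hW.zero_at_zero, Real.sqrt_zero]
      rw [this]; simp
  have := PW_ftc hW (mq_cont hn hW) (mq_nonneg hn) hF hy
  rw [this, Ph_zero, Real.zero_rpow (by linarith), sub_zero]

lemma swap {n : ℕ} (hW : DoubleWell W) {u : En n → ℝ} (hu : H1Box n u) {K : ℝ → ℝ → ℝ≥0∞}
    (hK : Measurable (Function.uncurry K)) :
    ∫⁻ t, (∫⁻ x, K t (u x)) ∂(PW W) = ∫⁻ x, (∫⁻ t, K t (u x) ∂(PW W)) := by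
  have := PW_prob hW
  apply lintegral_lintegral_swap
  exact (hK.comp ((measurable_fst).prodMk (hu.diff.continuous.measurable.comp measurable_snd))).aemeasurable

lemma swap_set {n : ℕ} (hW : DoubleWell W) {u : En n → ℝ} (hu : H1Box n u) {S : Set (ℝ × ℝ)}
    (hS : MeasurableSet S) {g h : ℝ → ℝ≥0∞} (hg : Measurable g) (hh : Measurable h) :
    ∫⁻ t, g t * (∫⁻ x in {x | (t, u x) ∈ S}, h (u x)) ∂(PW W) =
      ∫⁻ x, h (u x) * (∫⁻ t in {t | (t, u x) ∈ S}, g t ∂(PW W)) := by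
  have hum := hu.diff.continuous.measurable
  have hm : Measurable (Function.uncurry fun t y => S.indicator (fun z : ℝ × ℝ => g z.1 * h z.2) (t, y)) := by
    exact ((hg.comp measurable_fst).mul (hh.comp measurable_snd)).indicator hS
  have := swap hW hu hm
  have e1 : ∀ t, ∫⁻ x, S.indicator (fun z : ℝ × ℝ => g z.1 * h z.2) (t, u x) =
      g t * (∫⁻ x in {x | (t, u x) ∈ S}, h (u x)) := by
    intro t
    have hms : MeasurableSet {x | (t, u x) ∈ S} := (measurable_const.prodMk hum) hS
    rw [← lintegral_const_mul _ (f := fun x => h (u x)) (hh.comp hum), ← lintegral_indicator hms]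
    rfl
  have e2 : ∀ x, ∫⁻ t, S.indicator (fun z : ℝ × ℝ => g z.1 * h z.2) (t, u x) ∂(PW W) =
      h (u x) * (∫⁻ t in {t | (t, u x) ∈ S}, g t ∂(PW W)) := by
    intro x
    have hms : MeasurableSet {t | (t, u x) ∈ S} := (measurable_id.prodMk measurable_const) hS
    rw [← lintegral_const_mul _ hg, ← lintegral_indicator hms]
    apply lintegral_congr
    intro t
    by_cases ht : (t, u x) ∈ S
    · have ht' : t ∈ {t | (t, u x) ∈ S} := ht
      rw [indicator_of_mem ht, indicator_of_mem ht', mul_comm]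
    · have ht' : t ∉ {t | (t, u x) ∈ S} := ht
      rw [indicator_of_notMem ht, indicator_of_notMem ht']
  simp only [e1, e2] at this
  exact this

lemma lc_g {n : ℕ} (hW : DoubleWell W) {u : En n → ℝ} (hu : H1Box n u) {g : ℝ → ℝ≥0∞} (hg : Measurable g) :
    ∫⁻ t, g t * vl u t ∂(PW W) = ∫⁻ x, (∫⁻ t in Iio (u x), g t ∂(PW W)) := by
  have := swap_set hW hu (S := {z | z.1 < z.2}) (measurableSet_lt measurable_fst measurable_snd) hg
    (h := fun _ => 1) measurable_const
  simp only [lintegral_const, one_mul, Measure.restrict_apply MeasurableSet.univ, univ_inter] at this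
  exact this

lemma lc_Ph {n : ℕ} (hW : DoubleWell W) {u : En n → ℝ} (hu : H1Box n u) :
    ∫⁻ t, vl u t ∂(PW W) = ∫⁻ x, ENNReal.ofReal (Ph W (u x)) := by
  have := lc_g hW hu (g := fun _ => 1) measurable_const
  simp only [one_mul, lintegral_const, Measure.restrict_apply MeasurableSet.univ, univ_inter] at this
  rw [this]
  exact lintegral_congr fun x => PW_Iio hW (hu.mem_Icc x)

lemma lc_V {n : ℕ} (hn : 2 ≤ n) (hW : DoubleWell W) {u : En n → ℝ} (hu : H1Box n u) :
    ∫⁻ t, ENNReal.ofReal (mq n W t) * vl u t ∂(PW W) = ∫⁻ x, ENNReal.ofReal (Ph W (u x) ^ qn n) := by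
  rw [lc_g hW hu (mq_cont hn hW).measurable.ennreal_ofReal]
  exact lintegral_congr fun x => PW_mq hn hW (hu.mem_Icc x)

lemma V_int {n : ℕ} (hn : 2 ≤ n) (hW : DoubleWell W) (hη : TransitionProfile W η) {u : En n → ℝ} (hu : H1Box n u) :
    Integrable fun x => Ph W (u x) ^ qn n := by
  have hq := qn_bd hn
  refine (H1_Ph hW hη hu).mono' ?_ (ae_of_all _ fun x => ?_)
  · exact (((Ph_cont hW).comp hu.diff.continuous).rpow_const
      (fun _ => Or.inr (by linarith))).aestronglyMeasurable
  · have h := Ph_mem hW (hu.mem_Icc x)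
    rw [Real.norm_of_nonneg (by have := h.1; positivity)]
    exact (rpow_q hn h).2

lemma V_mass {n : ℕ} (hn : 2 ≤ n) (hW : DoubleWell W) (hη : TransitionProfile W η) {u : En n → ℝ}
    (hu : H1Box n u) (h1 : (∫ x : En n, Vpot n W (u x)) = 1) :
    ∫ x, Ph W (u x) ^ qn n = 1 ∧ ∫⁻ x, ENNReal.ofReal (Ph W (u x) ^ qn n) = 1 := by
  have e : ∀ x, Vpot n W (u x) = Ph W (u x) ^ qn n := fun x => Vpot_eq n (hu.mem_Icc x)
  simp only [e] at h1
  refine ⟨h1, ?_⟩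
  rw [← ofReal_integral_eq_lintegral_ofReal (V_int hn hW hη hu), h1, ENNReal.ofReal_one]
  exact ae_of_all _ fun x => Real.rpow_nonneg (Ph_mem hW (hu.mem_Icc x)).1 _

lemma X_ge {n : ℕ} (hn : 2 ≤ n) (hW : DoubleWell W) (hη : TransitionProfile W η) {u : En n → ℝ}
    (hu : H1Box n u) (h1 : (∫ x : En n, Vpot n W (u x)) = 1) :
    1 ≤ ∫⁻ t, vl u t ^ pn n ∂(PW W) := by
  obtain ⟨-, hm⟩ := V_mass hn hW hη hu h1
  have hq := qn_bd hn
  have hn2 : (2:ℝ) ≤ n := by exact_mod_cast hn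
  have hum := hu.diff.continuous.measurable
  set h : ℝ → ℝ≥0∞ := fun y => ENNReal.ofReal (max 0 (Ph W y) ^ (qn n - 1)) with hh
  have hhm : Measurable h := by
    have : Continuous fun y => max 0 (Ph W y) ^ (qn n - 1) :=
      ((continuous_const.max (Ph_cont hW)).rpow_const (fun _ => Or.inr (by linarith)))
    exact this.measurable.ennreal_ofReal
  have hs := swap_set hW hu (S := {z | z.1 < z.2}) (measurableSet_lt measurable_fst measurable_snd)
    (g := fun _ => 1) measurable_const hhm
  have e2 : ∫⁻ x, h (u x) * (∫⁻ t in {t | (t, u x) ∈ {z : ℝ × ℝ | z.1 < z.2}}, 1 ∂(PW W)) = 1 := by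
    refine Eq.trans ?_ hm
    apply lintegral_congr
    intro x
    have hP := Ph_mem hW (hu.mem_Icc x)
    have : ∫⁻ t in {t | (t, u x) ∈ {z : ℝ × ℝ | z.1 < z.2}}, 1 ∂(PW W) = ENNReal.ofReal (Ph W (u x)) := by
      rw [lintegral_one, Measure.restrict_apply MeasurableSet.univ, univ_inter]
      exact PW_Iio hW (hu.mem_Icc x)
    rw [this, hh]
    simp only
    rw [← ENNReal.ofReal_mul (by positivity), max_eq_right hP.1]
    congr 1
    rcases hP.1.eq_or_lt with h0 | h0
    · rw [← h0, Real.zero_rpow (by linarith : qn n ≠ 0)]; simp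
    · rw [← Real.rpow_add_one h0.ne']; congr 1; ring
  rw [e2] at hs
  rw [← hs]
  apply lintegral_mono
  intro t
  simp only [one_mul]
  have hms : MeasurableSet {x | (t, u x) ∈ {z : ℝ × ℝ | z.1 < z.2}} := by
    exact measurableSet_lt measurable_const hum
  have hconj : (qn n).HolderConjugate n := by
    rw [Real.holderConjugate_iff]
    refine ⟨hq.1, ?_⟩
    unfold qn; field_simp; ring
  have H := ENNReal.lintegral_mul_le_Lp_mul_Lq (volume.restrict {x | (t, u x) ∈ {z : ℝ × ℝ | z.1 < z.2}}) hconj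
    (f := fun _ => 1) (g := fun x => h (u x)) measurable_const.aemeasurable (hhm.comp hum).aemeasurable
  simp only [Pi.mul_apply, one_mul, ENNReal.one_rpow, lintegral_one, Measure.restrict_apply MeasurableSet.univ, univ_inter] at H
  refine H.trans ?_
  have e3 : (∫⁻ x in {x | (t, u x) ∈ {z : ℝ × ℝ | z.1 < z.2}}, h (u x) ^ (n:ℝ)) ≤ 1 := by
    rw [← hm]
    refine (setLIntegral_le_lintegral _ _).trans (lintegral_mono fun x => ?_)
    have hP := Ph_mem hW (hu.mem_Icc x)
    rw [hh]; simp only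
    rw [ENNReal.ofReal_rpow_of_nonneg (by positivity) (by linarith), max_eq_right hP.1, ← Real.rpow_mul hP.1]
    apply le_of_eq; congr 2
    have : (n:ℝ) - 1 ≠ 0 := by linarith
    unfold qn; field_simp; ring
  have e4 : 1 / qn n = pn n := by unfold qn pn; rw [one_div_div]
  rw [e4]
  calc _ ≤ vl u t ^ pn n * 1 := by
        refine mul_le_mul' le_rfl ?_
        exact ENNReal.rpow_le_one e3 (by positivity)
    _ = _ := mul_one _

end Part10

section Part11
open MeasureTheory Real Set Filter
open scoped ENNReal NNReal Pointwise
variable {W η : ℝ → ℝ}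

def Sd : Set (ℝ × ℝ) := {z | (z.1 < z.2 ∧ z.2 ≤ 1/2) ∨ (1/2 < z.2 ∧ z.2 ≤ z.1)}
def Sd2 : Set (ℝ × ℝ) := {z | (z.1 ≤ z.2 ∧ z.2 ≤ 1/2) ∨ (1/2 < z.2 ∧ z.2 ≤ z.1)}

lemma Sd_meas : MeasurableSet Sd := by
  unfold Sd
  exact ((measurableSet_lt measurable_fst measurable_snd).inter
    (measurableSet_le measurable_snd measurable_const)).union
    ((measurableSet_lt measurable_const measurable_snd).inter
    (measurableSet_le measurable_snd measurable_fst))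

lemma Sd2_meas : MeasurableSet Sd2 := by
  unfold Sd2
  exact ((measurableSet_le measurable_fst measurable_snd).inter
    (measurableSet_le measurable_snd measurable_const)).union
    ((measurableSet_lt measurable_const measurable_snd).inter
    (measurableSet_le measurable_snd measurable_fst))

def du {n : ℕ} (u : En n → ℝ) (t : ℝ) : ℝ≥0∞ := volume {x | (t, u x) ∈ Sd}
def du2 {n : ℕ} (u : En n → ℝ) (t : ℝ) : ℝ≥0∞ := volume {x | (t, u x) ∈ Sd2}
def HW (W : ℝ → ℝ) (y : ℝ) : ℝ := if y ≤ 1/2 then Ph W y else 1 - Ph W y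

lemma du_meas {n : ℕ} {u : En n → ℝ} (hu : H1Box n u) : Measurable (du u) := by
  have hum := hu.diff.continuous.measurable
  have : MeasurableSet {z : ℝ × En n | (z.1, u z.2) ∈ Sd} :=
    (measurable_fst.prodMk (hum.comp measurable_snd)) Sd_meas
  exact measurable_measure_prodMk_left this

lemma du2_meas {n : ℕ} {u : En n → ℝ} (hu : H1Box n u) : Measurable (du2 u) := by
  have hum := hu.diff.continuous.measurable
  have : MeasurableSet {z : ℝ × En n | (z.1, u z.2) ∈ Sd2} :=
    (measurable_fst.prodMk (hum.comp measurable_snd)) Sd2_meas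
  exact measurable_measure_prodMk_left this

lemma HW_meas (hW : DoubleWell W) : Measurable (HW W) := by
  unfold HW
  exact Measurable.ite measurableSet_Iic (Ph_cont hW).measurable ((Ph_cont hW).measurable.const_sub 1)

lemma PW_Sd (hW : DoubleWell W) {y : ℝ} (hy : y ∈ Icc (0:ℝ) 1) :
    PW W {t | (t, y) ∈ Sd} = ENNReal.ofReal (HW W y) := by
  unfold HW
  split_ifs with h
  · rw [← PW_Iio hW hy]
    congr 1; ext t
    show ((t < y ∧ y ≤ 1/2) ∨ (1/2 < y ∧ y ≤ t)) ↔ t < y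
    constructor
    · rintro (h1 | h1)
      · exact h1.1
      · linarith [h1.1]
    · exact fun h1 => Or.inl ⟨h1, h⟩
  · rw [← PW_Ici hW hy]
    push Not at h
    congr 1; ext t
    show ((t < y ∧ y ≤ 1/2) ∨ (1/2 < y ∧ y ≤ t)) ↔ y ≤ t
    constructor
    · rintro (h1 | h1)
      · linarith [h1.2]
      · exact h1.2
    · exact fun h1 => Or.inr ⟨h, h1⟩

lemma PW_Sd2 (hW : DoubleWell W) {y : ℝ} (hy : y ∈ Icc (0:ℝ) 1) :
    PW W {t | (t, y) ∈ Sd2} = ENNReal.ofReal (HW W y) := by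
  unfold HW
  split_ifs with h
  · rw [← PW_Iic hW hy]
    congr 1; ext t
    show ((t ≤ y ∧ y ≤ 1/2) ∨ (1/2 < y ∧ y ≤ t)) ↔ t ≤ y
    constructor
    · rintro (h1 | h1)
      · exact h1.1
      · linarith [h1.1]
    · exact fun h1 => Or.inl ⟨h1, h⟩
  · rw [← PW_Ici hW hy]
    push Not at h
    congr 1; ext t
    show ((t ≤ y ∧ y ≤ 1/2) ∨ (1/2 < y ∧ y ≤ t)) ↔ y ≤ t
    constructor
    · rintro (h1 | h1)
      · linarith [h1.2]
      · exact h1.2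
    · exact fun h1 => Or.inr ⟨h, h1⟩

lemma int_du {n : ℕ} (hW : DoubleWell W) {u : En n → ℝ} (hu : H1Box n u) :
    ∫⁻ t, du u t ∂(PW W) = ∫⁻ x, ENNReal.ofReal (HW W (u x)) := by
  have := swap_set hW hu Sd_meas (g := fun _ => 1) measurable_const
    (h := fun _ => 1) measurable_const
  simp only [lintegral_const, one_mul, Measure.restrict_apply MeasurableSet.univ, univ_inter] at this
  unfold du
  rw [this]
  exact lintegral_congr fun x => PW_Sd hW (hu.mem_Icc x)

lemma int_du2 {n : ℕ} (hW : DoubleWell W) {u : En n → ℝ} (hu : H1Box n u) :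
    ∫⁻ t, du2 u t ∂(PW W) = ∫⁻ x, ENNReal.ofReal (HW W (u x)) := by
  have := swap_set hW hu Sd2_meas (g := fun _ => 1) measurable_const
    (h := fun _ => 1) measurable_const
  simp only [lintegral_const, one_mul, Measure.restrict_apply MeasurableSet.univ, univ_inter] at this
  unfold du2
  rw [this]
  exact lintegral_congr fun x => PW_Sd2 hW (hu.mem_Icc x)

lemma HW_le (hW : DoubleWell W) (hη : TransitionProfile W η) :
    ∃ C > (0:ℝ), ∀ t ∈ Icc (0:ℝ) 1, 0 ≤ HW W t ∧ HW W t ≤ C * wf W t ^ 2 := by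
  obtain ⟨C, hC, h⟩ := Ph_W hW hη
  have hh := Ph_mem' hW (t := 1/2) ⟨by norm_num, by norm_num⟩
  set p := Ph W (1/2) with hp
  have hp1 : 0 < 1 - p := by linarith [hh.2]
  have hp0 := hh.1
  refine ⟨C / (1 - p) + C / p, by positivity, fun t ht => ?_⟩
  have hm := Ph_mem hW ht
  have hw : 0 ≤ wf W t ^ 2 := sq_nonneg _
  have h1 := h t ht
  rw [← wf_sq hW ht] at h1
  unfold HW
  split_ifs with hc
  · refine ⟨hm.1, ?_⟩
    have : Ph W t ≤ p := Ph_mono hW hc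
    have h2 : Ph W t ≤ C / (1 - p) * wf W t ^ 2 := by
      rw [div_mul_eq_mul_div, le_div_iff₀ hp1]
      nlinarith [hm.1]
    have : 0 ≤ C / p * wf W t ^ 2 := by positivity
    linarith
  · push Not at hc
    refine ⟨by linarith [hm.2], ?_⟩
    have : p ≤ Ph W t := Ph_mono hW hc.le
    have h2 : 1 - Ph W t ≤ C / p * wf W t ^ 2 := by
      rw [div_mul_eq_mul_div, le_div_iff₀ hp0]
      nlinarith [hm.2]
    have : 0 ≤ C / (1-p) * wf W t ^ 2 := by positivity
    linarith

lemma sym_pair {n : ℕ} {u : En n → ℝ} (hu : H1Box n u) {S : Set (En n)} (hS : MeasurableSet S)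
    (h : ∀ x ∈ S, ∀ y ∈ S, (u x, u y) ∈ Sd2 ∨ (u y, u x) ∈ Sd2) (hfin : volume S ≠ ⊤) :
    volume S * volume S ≤ 2 * ∫⁻ x in S, volume (S ∩ {y | (u x, u y) ∈ Sd2}) := by
  have hum := hu.diff.continuous.measurable
  have : IsFiniteMeasure (volume.restrict S) := ⟨by simpa using hfin.lt_top⟩
  set g : En n → En n → ℝ≥0∞ := fun x y => Sd2.indicator 1 (u x, u y) with hg
  have hgm : Measurable (Function.uncurry g) :=
    (measurable_one.indicator Sd2_meas).comp ((hum.comp measurable_fst).prodMk (hum.comp measurable_snd))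
  have e1 : ∀ x, volume (S ∩ {y | (u x, u y) ∈ Sd2}) = ∫⁻ y in S, g x y := by
    intro x
    have hms : MeasurableSet {y | (u x, u y) ∈ Sd2} := (measurable_const.prodMk hum) Sd2_meas
    rw [inter_comm, ← Measure.restrict_apply hms, ← lintegral_indicator_one hms]
    rfl
  simp only [e1]
  have e2 : volume S * volume S = ∫⁻ x in S, ∫⁻ y in S, 1 := by
    simp
  have e3 : ∫⁻ x in S, ∫⁻ y in S, g x y = ∫⁻ x in S, ∫⁻ y in S, g y x :=
    lintegral_lintegral_swap hgm.aemeasurable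
  have e4 : ∫⁻ x in S, ∫⁻ y in S, (1:ℝ≥0∞) ≤ ∫⁻ x in S, ∫⁻ y in S, (g x y + g y x) := by
    apply setLIntegral_mono' hS
    intro x hx
    apply setLIntegral_mono' hS
    intro y hy
    rcases h x hx y hy with h | h
    · simp [hg, indicator_of_mem h]
    · simp [hg, indicator_of_mem h]
  rw [e2]
  refine e4.trans ?_
  have e5 : ∀ x, ∫⁻ y in S, (g x y + g y x) = (∫⁻ y in S, g x y) + ∫⁻ y in S, g y x := by
    intro x
    exact lintegral_add_left (hgm.comp (measurable_const.prodMk measurable_id)) _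
  simp only [e5]
  have hgl : Measurable fun x => ∫⁻ y in S, g x y := Measurable.lintegral_prod_right hgm
  rw [lintegral_add_left hgl, ← e3, two_mul]

lemma sym_d {n : ℕ} {u : En n → ℝ} (hu : H1Box n u) {t : ℝ} (hfin : du u t ≠ ⊤) :
    du u t * min 1 (du u t) ≤ 2 * ∫⁻ x in {x | (t, u x) ∈ Sd}, min 1 (du2 u (u x)) := by
  have hum := hu.diff.continuous.measurable
  set S := {x | (t, u x) ∈ Sd} with hSd
  have hS : MeasurableSet S := (measurable_const.prodMk hum) Sd_meas
  have hp := sym_pair hu hS ?_ hfin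
  · have hd : du u t = volume S := rfl
    rw [hd] at hfin ⊢
    have hmax0 : max 1 (volume S) ≠ 0 := (lt_of_lt_of_le one_pos (le_max_left _ _)).ne'
    have hmaxt : max 1 (volume S) ≠ ⊤ := by simp [hfin]
    have h1 : volume S * min 1 (volume S) * max 1 (volume S) = volume S * volume S := by
      rcases le_total 1 (volume S) with h | h
      · rw [min_eq_left h, max_eq_right h, mul_one]
      · rw [min_eq_right h, max_eq_left h, mul_one]
    rw [← ENNReal.mul_le_mul_iff_left hmax0 hmaxt, h1]
    refine hp.trans ?_
    rw [mul_assoc]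
    refine mul_le_mul' le_rfl ?_
    rw [← lintegral_mul_const' _ _ hmaxt]
    apply lintegral_mono
    intro x
    have k1 : volume (S ∩ {y | (u x, u y) ∈ Sd2}) ≤ volume S := measure_mono inter_subset_left
    have k2 : volume (S ∩ {y | (u x, u y) ∈ Sd2}) ≤ du2 u (u x) := measure_mono inter_subset_right
    rcases le_total 1 (du2 u (u x)) with h | h
    · simp only [min_eq_left h, one_mul]
      exact k1.trans (le_max_right _ _)
    · simp only [min_eq_right h]
      calc _ ≤ du2 u (u x) * 1 := by rw [mul_one]; exact k2
        _ ≤ _ := mul_le_mul' le_rfl (le_max_left _ _)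
  · intro x hx y hy
    have hx' : (t < u x ∧ u x ≤ 1/2) ∨ (1/2 < u x ∧ u x ≤ t) := hx
    have hy' : (t < u y ∧ u y ≤ 1/2) ∨ (1/2 < u y ∧ u y ≤ t) := hy
    show ((u x ≤ u y ∧ u y ≤ 1/2) ∨ (1/2 < u y ∧ u y ≤ u x)) ∨
      ((u y ≤ u x ∧ u x ≤ 1/2) ∨ (1/2 < u x ∧ u x ≤ u y))
    rcases le_total (u x) (u y) with h | h
    · rcases le_or_gt (u y) (1/2) with h2 | h2
      · exact Or.inl (Or.inl ⟨h, h2⟩)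
      · rcases hx' with h3 | h3
        · rcases hy' with h4 | h4 <;> linarith [h3.1, h3.2, h4.1, h4.2]
        · exact Or.inr (Or.inr ⟨h3.1, h⟩)
    · rcases le_or_gt (u x) (1/2) with h2 | h2
      · exact Or.inr (Or.inl ⟨h, h2⟩)
      · rcases hy' with h3 | h3
        · rcases hx' with h4 | h4 <;> linarith [h3.1, h3.2, h4.1, h4.2]
        · exact Or.inl (Or.inr ⟨h3.1, h⟩)

end Part11

section Part12
open MeasureTheory Real Set Filter
open scoped ENNReal NNReal Pointwise
variable {W η : ℝ → ℝ}

lemma two_ofReal (y : ℝ) : 2 * ENNReal.ofReal y = ENNReal.ofReal (2 * y) := by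
  rw [ENNReal.ofReal_mul (by norm_num)]; simp

lemma AC_lint {n : ℕ} (hW : DoubleWell W) (hη : TransitionProfile W η) {u : En n → ℝ} (hu : H1Box n u)
    {ε : ℝ} (hε : 0 < ε) :
    ∫⁻ x, ENNReal.ofReal (ε * ‖fderiv ℝ u x‖ ^ 2 + ε⁻¹ * wf W (u x) ^ 2) = ENNReal.ofReal (AC n W ε u) := by
  have i1 := (H1_g2 hu).const_mul ε
  have i2 := (H1_W hW hη hu).const_mul ε⁻¹
  rw [← ofReal_integral_eq_lintegral_ofReal
    (f := fun x => ε * ‖fderiv ℝ u x‖ ^ 2 + ε⁻¹ * wf W (u x) ^ 2) (i1.add i2)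
    (ae_of_all _ fun x => by simp only [Pi.zero_apply]; positivity)]
  congr 1
  rw [integral_add i1 i2, integral_const_mul, integral_const_mul]
  unfold AC
  simp only [wf_sq hW (hu.mem_Icc _)]

lemma AC_W {n : ℕ} (hW : DoubleWell W) (hη : TransitionProfile W η) {u : En n → ℝ} (hu : H1Box n u)
    {ε : ℝ} (hε : 0 < ε) :
    ∫⁻ x, ENNReal.ofReal (wf W (u x) ^ 2) ≤ ENNReal.ofReal (ε * AC n W ε u) := by
  rw [ENNReal.ofReal_mul hε.le, ← AC_lint hW hη hu hε,
    ← lintegral_const_mul' _ _ ENNReal.ofReal_ne_top]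
  apply lintegral_mono
  intro x
  simp only
  rw [← ENNReal.ofReal_mul hε.le]
  apply ENNReal.ofReal_le_ofReal
  rw [mul_add, ← mul_assoc, ← mul_assoc, mul_inv_cancel₀ hε.ne', one_mul]
  have : 0 ≤ ε * ε * ‖fderiv ℝ u x‖ ^ 2 := by positivity
  linarith

lemma star0 {n : ℕ} (hn : 2 ≤ n) (hW : DoubleWell W) (hη : TransitionProfile W η) {u : En n → ℝ}
    (hu : H1Box n u) {ε : ℝ} (hε : 0 < ε) {a : ℝ → ℝ} (ha : Measurable a) (ha0 : ∀ t, 0 ≤ a t)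
    (ha1 : ∀ t, a t ≤ 1) :
    ENNReal.ofReal ε⁻¹ * (∫⁻ x, ENNReal.ofReal (a (u x) * wf W (u x) ^ 2)) +
      ENNReal.ofReal (2 * cN n) * (∫⁻ t, ENNReal.ofReal (1 - a t) * vl u t ^ pn n ∂(PW W)) ≤
      ENNReal.ofReal (AC n W ε u) := by
  have hum := hu.diff.continuous.measurable
  have hl := lor hn hW hη hu (a := fun t => ENNReal.ofReal (1 - a t)) (ha.const_sub 1).ennreal_ofReal
  have h2 : ENNReal.ofReal (2 * cN n) = 2 * ENNReal.ofReal (cN n) := by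
    rw [ENNReal.ofReal_mul (by norm_num)]; simp
  rw [h2, mul_assoc]
  refine (add_le_add le_rfl (mul_le_mul' le_rfl hl)).trans ?_
  rw [← AC_lint hW hη hu hε, ← lintegral_const_mul' _ _ ENNReal.ofReal_ne_top,
    ← lintegral_const_mul' _ _ (by simp), ← lintegral_add_left]
  · apply lintegral_mono
    intro x
    simp only
    have w0 := wf_nonneg (W := W) (u x)
    have a0 := ha0 (u x)
    have a1 := ha1 (u x)
    rw [← ENNReal.ofReal_mul (by positivity), ← ofReal_norm, ← ENNReal.ofReal_mul w0,
      ← ENNReal.ofReal_mul (by linarith), two_ofReal, ← ENNReal.ofReal_add (by positivity)]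
    · apply ENNReal.ofReal_le_ofReal
      set g := ‖fderiv ℝ u x‖
      set w := wf W (u x)
      have h3 : 2 * (w * g) ≤ ε * g ^ 2 + ε⁻¹ * w ^ 2 := by
        have : 0 ≤ ε * (g - ε⁻¹ * w) ^ 2 := by positivity
        have e : ε * (g - ε⁻¹ * w) ^ 2 = ε * g ^ 2 + ε⁻¹ * w ^ 2 - 2 * (w * g) := by field_simp; ring
        linarith
      have h4 : 0 ≤ ε * g ^ 2 := by positivity
      nlinarith [mul_le_mul_of_nonneg_left h3 (by linarith : 0 ≤ 1 - a (u x))]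
    · have : 0 ≤ 1 - a (u x) := by linarith
      positivity
  · exact (((ha.comp hum).mul ((wfu_meas hW hu).measurable.pow_const 2)).ennreal_ofReal).const_mul _

lemma X_le {n : ℕ} (hn : 2 ≤ n) (hW : DoubleWell W) (hη : TransitionProfile W η) {u : En n → ℝ}
    (hu : H1Box n u) {ε : ℝ} (hε : 0 < ε) :
    ENNReal.ofReal (2 * cN n) * (∫⁻ t, vl u t ^ pn n ∂(PW W)) ≤ ENNReal.ofReal (AC n W ε u) := by
  have := star0 hn hW hη hu hε (a := fun _ => 0) measurable_const (by simp) (by simp)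
  simpa using this

lemma star {n : ℕ} (hn : 2 ≤ n) (hW : DoubleWell W) (hη : TransitionProfile W η) {u : En n → ℝ}
    (hu : H1Box n u) (h1 : (∫ x : En n, Vpot n W (u x)) = 1) {ε C1 : ℝ} (hε : 0 < ε) (hC1 : 0 ≤ C1)
    (hAC : AC n W ε u ≤ 2 * cN n * (1 + C1 * ε)) {a : ℝ → ℝ} (ha : Measurable a) (ha0 : ∀ t, 0 ≤ a t)
    (ha1 : ∀ t, a t ≤ 1) :
    (∫⁻ x, ENNReal.ofReal (a (u x) * wf W (u x) ^ 2)) ≤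
      ENNReal.ofReal (2 * cN n * ε) * (∫⁻ t, ENNReal.ofReal (a t) * vl u t ^ pn n ∂(PW W)) +
      ENNReal.ofReal (2 * cN n * C1 * ε ^ 2) := by
  have hN := cN_pos hn
  have s0 := star0 hn hW hη hu hε ha ha0 ha1
  have hX := X_ge hn hW hη hu h1
  have hXt : ∫⁻ t, vl u t ^ pn n ∂(PW W) ≠ ⊤ := by
    intro h
    have := X_le hn hW hη hu hε
    rw [h, ENNReal.mul_top (by simp; positivity)] at this
    exact ENNReal.ofReal_ne_top (top_le_iff.1 this)
  have hsplit : ∫⁻ t, vl u t ^ pn n ∂(PW W) = (∫⁻ t, ENNReal.ofReal (a t) * vl u t ^ pn n ∂(PW W)) +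
      ∫⁻ t, ENNReal.ofReal (1 - a t) * vl u t ^ pn n ∂(PW W) := by
    rw [← lintegral_add_left (by exact ha.ennreal_ofReal.mul ((vl_meas u).pow_const _))]
    apply lintegral_congr; intro t
    rw [← add_mul, ← ENNReal.ofReal_add (ha0 t) (by linarith [ha1 t])]; simp
  set Za := ∫⁻ t, ENNReal.ofReal (a t) * vl u t ^ pn n ∂(PW W)
  set Z1 := ∫⁻ t, ENNReal.ofReal (1 - a t) * vl u t ^ pn n ∂(PW W)
  set A := ∫⁻ x, ENNReal.ofReal (a (u x) * wf W (u x) ^ 2)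
  have hZ1 : Z1 ≠ ⊤ := ne_top_of_le_ne_top hXt (by rw [hsplit]; exact le_add_self)
  have h3 : ENNReal.ofReal ε⁻¹ * A + ENNReal.ofReal (2 * cN n) * Z1 ≤
      (ENNReal.ofReal (2 * cN n) * Za + ENNReal.ofReal (2 * cN n * C1 * ε)) + ENNReal.ofReal (2 * cN n) * Z1 := by
    refine s0.trans ((ENNReal.ofReal_le_ofReal hAC).trans ?_)
    rw [show 2 * cN n * (1 + C1 * ε) = 2 * cN n + 2 * cN n * C1 * ε by ring,
      ENNReal.ofReal_add (by positivity) (by positivity)]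
    rw [hsplit] at hX
    calc _ ≤ ENNReal.ofReal (2 * cN n) * (Za + Z1) + ENNReal.ofReal (2 * cN n * C1 * ε) := by
          refine add_le_add ?_ le_rfl
          calc _ = ENNReal.ofReal (2 * cN n) * 1 := (mul_one _).symm
            _ ≤ _ := mul_le_mul' le_rfl hX
      _ = _ := by ring
  have h4 := (ENNReal.add_le_add_iff_right (ENNReal.mul_ne_top ENNReal.ofReal_ne_top hZ1)).1 h3
  have h5 := mul_le_mul' (le_refl (ENNReal.ofReal ε)) h4
  rw [← mul_assoc, ← ENNReal.ofReal_mul hε.le, mul_inv_cancel₀ hε.ne', ENNReal.ofReal_one, one_mul] at h5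
  refine h5.trans (le_of_eq ?_)
  rw [mul_add, ← mul_assoc, ← ENNReal.ofReal_mul hε.le, ← ENNReal.ofReal_mul hε.le]
  rw [show ε * (2 * cN n) = 2 * cN n * ε by ring,
    show ε * (2 * cN n * C1 * ε) = 2 * cN n * C1 * ε ^ 2 by ring]

/-- relation between `vl` and `du` -/
lemma vl_du {n : ℕ} {u : En n → ℝ} (hu : H1Box n u) (t : ℝ) :
    (t ≤ 1/2 → vl u t = vl u (1/2) + du u t) ∧ (1/2 ≤ t → vl u (1/2) = vl u t + du u t) := by
  have hum := hu.diff.continuous.measurable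
  have hS : MeasurableSet {x | (t, u x) ∈ Sd} := (measurable_const.prodMk hum) Sd_meas
  constructor
  · intro ht
    unfold vl du
    rw [← measure_union _ hS]
    · congr 1; ext x
      show t < u x ↔ (1/2 < u x) ∨ ((t < u x ∧ u x ≤ 1/2) ∨ (1/2 < u x ∧ u x ≤ t))
      constructor
      · intro h
        rcases le_or_gt (u x) (1/2) with h2 | h2
        · exact Or.inr (Or.inl ⟨h, h2⟩)
        · exact Or.inl h2
      · rintro (h | h | h)
        · linarith
        · exact h.1
        · linarith [h.1]
    · rw [Set.disjoint_left]
      intro x hx hx2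
      have h1 : 1/2 < u x := hx
      have h2 : (t < u x ∧ u x ≤ 1/2) ∨ (1/2 < u x ∧ u x ≤ t) := hx2
      rcases h2 with h | h <;> linarith [h.1, h.2]
  · intro ht
    unfold vl du
    rw [← measure_union _ hS]
    · congr 1; ext x
      show 1/2 < u x ↔ (t < u x) ∨ ((t < u x ∧ u x ≤ 1/2) ∨ (1/2 < u x ∧ u x ≤ t))
      constructor
      · intro h
        rcases le_or_gt (u x) t with h2 | h2
        · exact Or.inr (Or.inr ⟨h, h2⟩)
        · exact Or.inl h2
      · rintro (h | h | h)
        · linarith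
        · linarith [h.1, h.2]
        · exact h.1
    · rw [Set.disjoint_left]
      intro x hx hx2
      have h1 : t < u x := hx
      have h2 : (t < u x ∧ u x ≤ 1/2) ∨ (1/2 < u x ∧ u x ≤ t) := hx2
      rcases h2 with h | h <;> linarith [h.1, h.2]

lemma vl_fin {n : ℕ} {u : En n → ℝ} (hu : H1Box n u) {t : ℝ} (ht : 0 < t) : vl u t ≠ ⊤ := by
  have h := (H1_L2 hu)
  have hl := h.lintegral_lt_top.ne
  intro htop
  apply hl
  rw [← top_le_iff]
  have hms : MeasurableSet {x | t < u x} := measurableSet_lt measurable_const hu.diff.continuous.measurable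
  calc ⊤ = ENNReal.ofReal (t^2) * vl u t := by rw [htop, ENNReal.mul_top]; simp; positivity
    _ = ∫⁻ x in {x | t < u x}, ENNReal.ofReal (t^2) := by simp [vl]
    _ ≤ ∫⁻ x in {x | t < u x}, ENNReal.ofReal (u x ^ 2) := by
        apply setLIntegral_mono' hms
        intro x hx
        exact ENNReal.ofReal_le_ofReal (pow_le_pow_left₀ ht.le (le_of_lt hx) 2)
    _ ≤ _ := setLIntegral_le_lintegral _ _

lemma du_fin {n : ℕ} {u : En n → ℝ} (hu : H1Box n u) {t : ℝ} (ht : 0 < t) : du u t ≠ ⊤ := by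
  rcases le_total t (1/2) with h | h
  · have := (vl_du hu t).1 h
    exact ne_top_of_le_ne_top (vl_fin hu ht) (by rw [this]; exact le_add_self)
  · have := (vl_du hu t).2 h
    exact ne_top_of_le_ne_top (vl_fin hu (by norm_num : (0:ℝ) < 1/2)) (by rw [this]; exact le_add_self)

lemma vbar_le {n : ℕ} (hn : 2 ≤ n) (hW : DoubleWell W) (hη : TransitionProfile W η) {u : En n → ℝ}
    (hu : H1Box n u) (h1 : (∫ x : En n, Vpot n W (u x)) = 1) :
    vl u (1/2) ≤ ENNReal.ofReal ((Ph W (1/2) ^ qn n)⁻¹) := by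
  have hp := (Ph_mem' hW (t := 1/2) ⟨by norm_num, by norm_num⟩).1
  have hq := qn_bd hn
  have hms : MeasurableSet {x | 1/2 < u x} := measurableSet_lt measurable_const hu.diff.continuous.measurable
  have h : ENNReal.ofReal (Ph W (1/2) ^ qn n) * vl u (1/2) ≤ 1 := by
    rw [← (V_mass hn hW hη hu h1).2]
    calc _ = ∫⁻ x in {x | 1/2 < u x}, ENNReal.ofReal (Ph W (1/2) ^ qn n) := by simp [vl]
      _ ≤ ∫⁻ x in {x | 1/2 < u x}, ENNReal.ofReal (Ph W (u x) ^ qn n) := by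
          apply setLIntegral_mono' hms
          intro x hx
          exact ENNReal.ofReal_le_ofReal (Real.rpow_le_rpow hp.le (Ph_mono hW (le_of_lt hx)) (by linarith))
      _ ≤ _ := setLIntegral_le_lintegral _ _
  rw [ENNReal.ofReal_inv_of_pos (by positivity), ENNReal.le_inv_iff_mul_le, mul_comm]
  exact h

/-- the two basic estimates -/
theorem basic {n : ℕ} (hn : 2 ≤ n) (hW : DoubleWell W) (hη : TransitionProfile W η) {C1 : ℝ} (hC1 : 0 ≤ C1) :
    ∃ C > (0:ℝ), ∀ (u : En n → ℝ) (ε : ℝ), H1Box n u → (∫ x : En n, Vpot n W (u x)) = 1 →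
      0 < ε → ε < 1 → AC n W ε u ≤ 2 * cN n * (1 + C1 * ε) →
      ∫⁻ t, du u t ∂(PW W) ≤ ENNReal.ofReal (C * ε) ∧
      ∫⁻ t, du u t * min 1 (du u t) ∂(PW W) ≤ ENNReal.ofReal (C * ε ^ 2) := by
  obtain ⟨CH, hCH, hH⟩ := HW_le hW hη
  have hN := cN_pos hn
  have hpn := pn_nonneg hn
  set vb := (Ph W (1/2) ^ qn n)⁻¹ with hvb
  have hp := (Ph_mem' hW (t := 1/2) ⟨by norm_num, by norm_num⟩).1
  have hvb0 : 0 < vb := by positivity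
  set C5 := CH * (2 * cN n * (1 + C1)) with hC5
  have hC50 : 0 < C5 := by positivity
  set C6 := 2 * CH * (2 * cN n * ((2 + vb) * C5) + 2 * cN n * C1) with hC6
  have hC60 : 0 < C6 := by positivity
  refine ⟨C5 + C6, by positivity, ?_⟩
  intro u ε hu h1 hε hε1 hAC
  have hum := hu.diff.continuous.measurable
  have hHu : ∫⁻ x, ENNReal.ofReal (HW W (u x)) ≤ ENNReal.ofReal (C5 * ε) := by
    calc _ ≤ ∫⁻ x, ENNReal.ofReal CH * ENNReal.ofReal (wf W (u x) ^ 2) := by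
          apply lintegral_mono; intro x
          simp only
          rw [← ENNReal.ofReal_mul hCH.le]
          exact ENNReal.ofReal_le_ofReal (hH _ (hu.mem_Icc x)).2
      _ = ENNReal.ofReal CH * ∫⁻ x, ENNReal.ofReal (wf W (u x) ^ 2) :=
          lintegral_const_mul' _ _ ENNReal.ofReal_ne_top
      _ ≤ ENNReal.ofReal CH * ENNReal.ofReal (ε * AC n W ε u) := mul_le_mul' le_rfl (AC_W hW hη hu hε)
      _ = ENNReal.ofReal (CH * (ε * AC n W ε u)) := by rw [ENNReal.ofReal_mul hCH.le]
      _ ≤ _ := by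
          apply ENNReal.ofReal_le_ofReal
          rw [hC5]
          have : AC n W ε u ≤ 2 * cN n * (1 + C1) := by
            refine hAC.trans ?_
            apply mul_le_mul_of_nonneg_left _ (by positivity)
            nlinarith
          have := mul_le_mul_of_nonneg_left this (by positivity : 0 ≤ CH * ε)
          linarith
  have hd := int_du hW hu
  have hd2 := int_du2 hW hu
  refine ⟨?_, ?_⟩
  · rw [hd]
    refine hHu.trans (ENNReal.ofReal_le_ofReal ?_)
    nlinarith
  set ae : ℝ → ℝ≥0∞ := fun t => min 1 (du2 u t) with hae
  have haem : Measurable ae := measurable_const.min (du2_meas hu)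
  have haet : ∀ t, ae t ≠ ⊤ := fun t => ne_top_of_le_ne_top ENNReal.one_ne_top (min_le_left _ _)
  set a : ℝ → ℝ := fun t => (ae t).toReal with ha
  have hao : ∀ t, ENNReal.ofReal (a t) = ae t := fun t => ENNReal.ofReal_toReal (haet t)
  have st := star hn hW hη hu h1 hε hC1 hAC (a := a) haem.ennreal_toReal (fun t => ENNReal.toReal_nonneg)
    (fun t => by
      have := ENNReal.toReal_mono ENNReal.one_ne_top (min_le_left 1 (du2 u t))
      simpa using this)
  have b1 : ∫⁻ t, du u t * min 1 (du u t) ∂(PW W) ≤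
      2 * ∫⁻ t, (∫⁻ x in {x | (t, u x) ∈ Sd}, ae (u x)) ∂(PW W) := by
    rw [← lintegral_const_mul' _ _ (by simp)]
    apply lintegral_mono_ae
    filter_upwards [PW_ae W] with t ht
    exact sym_d hu (du_fin hu ht.1)
  have b2 := swap_set hW hu Sd_meas (g := fun _ => 1) measurable_const haem
  simp only [lintegral_const, one_mul, Measure.restrict_apply MeasurableSet.univ, univ_inter] at b2
  rw [b2] at b1
  have b3 : ∫⁻ x, ae (u x) * PW W {t | (t, u x) ∈ Sd} ≤
      ENNReal.ofReal CH * ∫⁻ x, ENNReal.ofReal (a (u x) * wf W (u x) ^ 2) := by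
    rw [← lintegral_const_mul' _ _ ENNReal.ofReal_ne_top]
    apply lintegral_mono; intro x
    simp only
    rw [PW_Sd hW (hu.mem_Icc x), ENNReal.ofReal_mul ENNReal.toReal_nonneg, hao, mul_left_comm]
    refine mul_le_mul' le_rfl ?_
    rw [← ENNReal.ofReal_mul hCH.le]
    exact ENNReal.ofReal_le_ofReal (hH _ (hu.mem_Icc x)).2
  have b4 : ∫⁻ t, ENNReal.ofReal (a t) * vl u t ^ pn n ∂(PW W) ≤ ENNReal.ofReal ((2 + vb) * (C5 * ε)) := by
    have hv := vbar_le hn hW hη hu h1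
    calc _ ≤ ∫⁻ t, (ENNReal.ofReal (1 + vb) * du2 u t + du u t) ∂(PW W) := by
          apply lintegral_mono; intro t
          simp only [hao]
          have k1 : vl u t ^ pn n ≤ 1 + vl u t := by
            rcases le_total (vl u t) 1 with h | h
            · exact (ENNReal.rpow_le_one h hpn.1.le).trans le_self_add
            · calc _ ≤ vl u t ^ (1:ℝ) := ENNReal.rpow_le_rpow_of_exponent_le h hpn.2.le
                _ = vl u t := ENNReal.rpow_one _
                _ ≤ _ := le_add_self
          have k2 : vl u t ≤ ENNReal.ofReal vb + du u t := by
            rcases le_total t (1/2) with h | h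
            · rw [(vl_du hu t).1 h]; exact add_le_add hv le_rfl
            · exact ((vl_anti u h).trans hv).trans le_self_add
          calc ae t * vl u t ^ pn n ≤ ae t * (ENNReal.ofReal (1 + vb) + du u t) := by
                refine mul_le_mul' le_rfl (k1.trans ?_)
                rw [ENNReal.ofReal_add zero_le_one hvb0.le, ENNReal.ofReal_one, add_assoc]
                exact add_le_add le_rfl k2
            _ = ENNReal.ofReal (1 + vb) * ae t + ae t * du u t := by ring
            _ ≤ _ := by
                refine add_le_add (mul_le_mul' le_rfl (min_le_right _ _)) ?_
                calc _ ≤ 1 * du u t := mul_le_mul' (min_le_left _ _) le_rfl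
                  _ = _ := one_mul _
      _ = ENNReal.ofReal (1 + vb) * (∫⁻ t, du2 u t ∂(PW W)) + ∫⁻ t, du u t ∂(PW W) := by
          rw [lintegral_add_left ((du2_meas hu).const_mul _), lintegral_const_mul' _ _ ENNReal.ofReal_ne_top]
      _ ≤ ENNReal.ofReal (1 + vb) * ENNReal.ofReal (C5 * ε) + ENNReal.ofReal (C5 * ε) := by
          rw [hd, hd2]
          exact add_le_add (mul_le_mul' le_rfl hHu) hHu
      _ = _ := by
          rw [← ENNReal.ofReal_mul (by positivity), ← ENNReal.ofReal_add (by positivity) (by positivity)]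
          congr 1; ring
  refine b1.trans ?_
  calc _ ≤ 2 * (ENNReal.ofReal CH * (ENNReal.ofReal (2 * cN n * ε) * ENNReal.ofReal ((2 + vb) * (C5 * ε)) +
        ENNReal.ofReal (2 * cN n * C1 * ε ^ 2))) := by
        refine mul_le_mul' le_rfl (b3.trans (mul_le_mul' le_rfl (st.trans ?_)))
        exact add_le_add (mul_le_mul' le_rfl b4) le_rfl
    _ = ENNReal.ofReal (C6 * ε ^ 2) := by
        rw [← ENNReal.ofReal_mul (by positivity), ← ENNReal.ofReal_add (by positivity) (by positivity),
          ← ENNReal.ofReal_mul (by positivity), two_ofReal]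
        congr 1; rw [hC6]; ring
    _ ≤ _ := by
        apply ENNReal.ofReal_le_ofReal
        nlinarith [sq_nonneg ε]

end Part12

section Part13
open MeasureTheory Real Set Filter
open scoped ENNReal NNReal Pointwise
variable {W η : ℝ → ℝ}

lemma z_lb {p v : ℝ} (hp : 0 < p) (hp1 : p < 1) (hv : 0 ≤ v) :
    1 + p * (v - 1) - (v - 1) ^ 2 ≤ v ^ p ∧ 1 + p * (v - 1) - |v - 1| ≤ v ^ p ∧ 1 - |v - 1| ≤ v ^ p := by
  have hb : 1 - |v - 1| ≤ v ^ p := by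
    rcases le_total v 1 with h | h
    · rw [abs_of_nonpos (by linarith)]
      have : v ≤ v ^ p := by
        rcases hv.eq_or_lt with h0 | h0
        · rw [← h0, Real.zero_rpow hp.ne']
        · simpa using Real.rpow_le_rpow_of_exponent_ge h0 h hp1.le
      linarith
    · have := Real.one_le_rpow h hp.le
      have := abs_nonneg (v - 1)
      linarith
  have hc : 1 + p * (v - 1) - |v - 1| ≤ v ^ p := by
    rcases le_total v 1 with h | h
    · have : p * (v - 1) ≤ 0 := by nlinarith
      linarith
    · rw [abs_of_nonneg (by linarith)]
      have := Real.one_le_rpow h hp.le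
      nlinarith
  refine ⟨?_, hc, hb⟩
  rcases hv.eq_or_lt with h0 | h0
  · rw [← h0, Real.zero_rpow hp.ne']; norm_num; linarith
  set w := v - 1 with hw
  have hvw : v = 1 + w := by rw [hw]; ring
  set r := 1 - p with hr
  have hb1 : v ^ r ≤ 1 + r * w := by
    rw [hvw]; exact rpow_one_add_le_one_add_mul_self (by linarith) (by linarith) (by linarith)
  have hvr : 0 < v ^ r := Real.rpow_pos_of_pos h0 _
  have hmul : v ^ p * v ^ r = v := by
    rw [← Real.rpow_add h0, hr]; simp
  have hvp : 0 < v ^ p := Real.rpow_pos_of_pos h0 _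
  have h1 : v ≤ v ^ p * (1 + r * w) := by
    calc v = v ^ p * v ^ r := hmul.symm
      _ ≤ _ := mul_le_mul_of_nonneg_left hb1 hvp.le
  have hpos : 0 < 1 + r * w := lt_of_lt_of_le hvr hb1
  have h2 : (1 + p * w - w ^ 2) * (1 + r * w) ≤ v := by
    rw [hvw, show p = 1 - r by rw [hr]; ring]
    have : 0 ≤ w ^ 2 * (1 + r * w - r * (1 - r)) := by
      apply mul_nonneg (sq_nonneg _)
      nlinarith [sq_nonneg (1 - r)]
    nlinarith
  exact le_of_mul_le_mul_right (h2.trans h1) hpos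

lemma f_split {s d b : ℝ} (hs : 0 ≤ s) (hd : 0 ≤ d) (hb : 0 ≤ b) (h : s ≤ d + b) :
    min s (s ^ 2) ≤ 4 * (d * min 1 d) + 4 * b ^ 2 := by
  rcases le_total b d with hbd | hbd
  · have h2 : s ≤ 2 * d := by linarith
    have : 0 ≤ b ^ 2 := sq_nonneg _
    rcases le_total 1 d with h1 | h1
    · rw [min_eq_left h1]
      have := min_le_left s (s^2)
      linarith
    · rw [min_eq_right h1]
      have := min_le_right s (s^2)
      nlinarith
  · have h2 : s ≤ 2 * b := by linarith
    have : 0 ≤ d * min 1 d := mul_nonneg hd (le_min zero_le_one hd)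
    have := min_le_right s (s^2)
    nlinarith

/-- tilt weight -/
def cW (n : ℕ) (W : ℝ → ℝ) (t : ℝ) : ℝ := cN n * pn n * (Ph W t - Ph W t ^ qn n) / wf W t ^ 2

lemma cW_meas {n : ℕ} (hn : 2 ≤ n) (hW : DoubleWell W) : Measurable (cW n W) := by
  have hq := qn_bd hn
  unfold cW
  have h1 : Continuous fun t => Ph W t ^ qn n := (Ph_cont hW).rpow_const (fun _ => Or.inr (by linarith))
  exact (((Ph_cont hW).sub h1).measurable.const_mul _).div ((wf_cont hW).measurable.pow_const 2)

lemma cW_mul {n : ℕ} (hn : 2 ≤ n) (hW : DoubleWell W) {t : ℝ} (ht : t ∈ Icc (0:ℝ) 1) :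
    cW n W t * wf W t ^ 2 = cN n * pn n * (Ph W t - Ph W t ^ qn n) := by
  have hq := qn_bd hn
  unfold cW
  by_cases h : wf W t = 0
  · have : t = 0 ∨ t = 1 := by
      by_contra hc
      push Not at hc
      have := wf_pos hW (t := t) ⟨lt_of_le_of_ne ht.1 (Ne.symm hc.1), lt_of_le_of_ne ht.2 hc.2⟩
      linarith
    rcases this with rfl | rfl
    · rw [Ph_zero, Real.zero_rpow (by linarith)]; simp
    · rw [Ph_one hW, Real.one_rpow]; simp
  · field_simp

lemma cW_bd {n : ℕ} (hn : 2 ≤ n) (hW : DoubleWell W) (hη : TransitionProfile W η) :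
    ∃ C > (0:ℝ), ∀ t ∈ Icc (0:ℝ) 1, 0 ≤ cW n W t ∧ cW n W t ≤ C := by
  obtain ⟨C, hC, h⟩ := Ph_W hW hη
  have hN := cN_pos hn
  have hp := (pn_nonneg hn).1
  refine ⟨cN n * pn n * C, by positivity, fun t ht => ?_⟩
  have hm := Ph_mem hW ht
  have hr := rpow_q hn hm
  have hw : 0 ≤ wf W t ^ 2 := sq_nonneg _
  unfold cW
  refine ⟨div_nonneg (mul_nonneg (by positivity) (by linarith)) hw, ?_⟩
  rcases hw.eq_or_lt with h0 | h0
  · rw [← h0, div_zero]; positivity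
  · rw [div_le_iff₀ h0, mul_assoc (cN n * pn n) C]
    refine mul_le_mul_of_nonneg_left ?_ (by positivity)
    have := h t ht
    rw [← wf_sq hW ht] at this
    nlinarith

lemma cW_int {n : ℕ} (hW : DoubleWell W) (hη : TransitionProfile W η) :
    ∫ t, cW n W t ∂(PW W) = cN n * pn n * kap n W η := by
  rw [int_wf_I hW, ← kap_subst hW hη, ← integral_const_mul]
  apply setIntegral_congr_fun (measurableSet_Ioo (a := (0:ℝ)) (b := 1))
  intro t ht
  have := wf_pos hW ht
  simp only [cW]
  field_simp

lemma tilt {n : ℕ} (hn : 2 ≤ n) (hW : DoubleWell W) (hη : TransitionProfile W η) {u : En n → ℝ}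
    (hu : H1Box n u) (h1 : (∫ x : En n, Vpot n W (u x)) = 1) {ε Cc : ℝ} (hε : 0 < ε)
    (hc : ∀ t ∈ Icc (0:ℝ) 1, 0 ≤ cW n W t ∧ cW n W t ≤ Cc) (hεC : ε * Cc ≤ 1) :
    ENNReal.ofReal (2 * cN n) * (∫⁻ t, ENNReal.ofReal (1 + ε * cW n W t - (ε * cW n W t) ^ 2) *
      vl u t ^ pn n ∂(PW W)) ≤
      ENNReal.ofReal (AC n W ε u + 2 * (cN n * pn n) * ((∫ x, Ph W (u x)) - 1)) := by
  have hN := cN_pos hn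
  have hp := (pn_nonneg hn).1
  have hcm := cW_meas hn hW
  have hl := lor hn hW hη hu (a := fun t => ENNReal.ofReal (1 + ε * cW n W t - (ε * cW n W t) ^ 2))
    (((hcm.const_mul ε).const_add 1).sub ((hcm.const_mul ε).pow_const 2)).ennreal_ofReal
  rw [← two_ofReal, mul_assoc]
  refine (mul_le_mul' le_rfl hl).trans ?_
  have i1 := (H1_g2 hu).const_mul ε
  have i2 := (H1_W hW hη hu).const_mul ε⁻¹
  have i3 : Integrable (fun x => 2 * (cN n * pn n) * (Ph W (u x) - Ph W (u x) ^ qn n)) :=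
    ((H1_Ph hW hη hu).sub (V_int hn hW hη hu)).const_mul (2 * (cN n * pn n))
  have hval : ∫ x, (ε * ‖fderiv ℝ u x‖ ^ 2 + ε⁻¹ * wf W (u x) ^ 2 +
      2 * (cN n * pn n) * (Ph W (u x) - Ph W (u x) ^ qn n)) =
      AC n W ε u + 2 * (cN n * pn n) * ((∫ x, Ph W (u x)) - 1) := by
    rw [integral_add (f := fun x => ε * ‖fderiv ℝ u x‖ ^ 2 + ε⁻¹ * wf W (u x) ^ 2) (i1.add i2) i3,
      integral_add i1 i2, integral_const_mul, integral_const_mul, integral_const_mul,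
      integral_sub (H1_Ph hW hη hu) (V_int hn hW hη hu), (V_mass hn hW hη hu h1).1]
    unfold AC
    simp only [wf_sq hW (hu.mem_Icc _)]
  have hnn : ∀ x, 0 ≤ ε * ‖fderiv ℝ u x‖ ^ 2 + ε⁻¹ * wf W (u x) ^ 2 +
      2 * (cN n * pn n) * (Ph W (u x) - Ph W (u x) ^ qn n) := by
    intro x
    have := (rpow_q hn (Ph_mem hW (hu.mem_Icc x))).2
    have h2 : 0 ≤ 2 * (cN n * pn n) * (Ph W (u x) - Ph W (u x) ^ qn n) :=
      mul_nonneg (by positivity) (by linarith)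
    positivity
  rw [← hval, ofReal_integral_eq_lintegral_ofReal
    (f := fun x => ε * ‖fderiv ℝ u x‖ ^ 2 + ε⁻¹ * wf W (u x) ^ 2 +
      2 * (cN n * pn n) * (Ph W (u x) - Ph W (u x) ^ qn n)) ((i1.add i2).add i3) (ae_of_all _ hnn),
    ← lintegral_const_mul' _ _ (by simp)]
  apply lintegral_mono
  intro x
  simp only
  have hx := hu.mem_Icc x
  have w0 := wf_nonneg (W := W) (u x)
  obtain ⟨c0, c1⟩ := hc _ hx
  rw [mul_assoc 2 (cN n * pn n), ← cW_mul hn hW hx]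
  set c := cW n W (u x)
  have y0 : 0 ≤ ε * c := by positivity
  have y1 : ε * c ≤ 1 := (mul_le_mul_of_nonneg_left c1 hε.le).trans hεC
  set a := 1 + ε * c - (ε * c) ^ 2 with ha
  have a0 : 0 ≤ a := by rw [ha]; nlinarith
  have a2 : a ^ 2 ≤ 1 + 2 * (ε * c) := by
    rw [ha]
    set y := ε * c
    nlinarith [mul_nonneg y0 y0, mul_nonneg (mul_nonneg y0 y0) y0, mul_nonneg (mul_nonneg (mul_nonneg y0 y0) y0) (sub_nonneg.2 y1)]
  rw [← ofReal_norm, ← ENNReal.ofReal_mul w0, ← ENNReal.ofReal_mul a0, two_ofReal]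
  apply ENNReal.ofReal_le_ofReal
  set g := ‖fderiv ℝ u x‖
  set w := wf W (u x)
  have h3 : 2 * (a * (w * g)) ≤ ε * g ^ 2 + ε⁻¹ * (a ^ 2 * w ^ 2) := by
    have : 0 ≤ ε * (g - ε⁻¹ * (a * w)) ^ 2 := by positivity
    have e : ε * (g - ε⁻¹ * (a * w)) ^ 2 = ε * g ^ 2 + ε⁻¹ * (a ^ 2 * w ^ 2) - 2 * (a * (w * g)) := by field_simp; ring
    linarith
  have h4 : ε⁻¹ * (a ^ 2 * w ^ 2) ≤ ε⁻¹ * ((1 + 2 * (ε * c)) * w ^ 2) :=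
    mul_le_mul_of_nonneg_left (mul_le_mul_of_nonneg_right a2 (sq_nonneg _)) (by positivity)
  have h5 : ε⁻¹ * ((1 + 2 * (ε * c)) * w ^ 2) = ε⁻¹ * w ^ 2 + 2 * (c * w ^ 2) := by field_simp
  linarith

lemma int_mq {n : ℕ} (hn : 2 ≤ n) (hW : DoubleWell W) : ∫ t, mq n W t ∂(PW W) = 1 := by
  have h := PW_mq hn hW (y := 1) ⟨zero_le_one, le_rfl⟩
  rw [Measure.restrict_eq_self_of_ae_mem, Ph_one hW, Real.one_rpow, ENNReal.ofReal_one] at h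
  · rw [integral_eq_lintegral_of_nonneg_ae (ae_of_all _ (mq_nonneg hn))
      (mq_cont hn hW).aestronglyMeasurable, h]; simp
  · filter_upwards [PW_ae W] with t ht using ht.2

end Part13

section Part14
open MeasureTheory Real Set Filter
open scoped ENNReal NNReal Pointwise
variable {W η : ℝ → ℝ}

lemma real_core {P : Measure ℝ} [IsProbabilityMeasure P] {v d c m : ℝ → ℝ} {p vb D E Z Cc ε : ℝ}
    (hp : 0 < p) (hp1 : p < 1) (hv0 : ∀ t, 0 ≤ v t) (hd0 : ∀ t, 0 ≤ d t)
    (iv : Integrable v P) (idd : Integrable d P) (hD : ∫ t, d t ∂P ≤ D)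
    (ie : Integrable (fun t => d t * min 1 (d t)) P) (hE : ∫ t, d t * min 1 (d t) ∂P ≤ E)
    (iz : Integrable (fun t => v t ^ p) P) (hZ : ∫ t, v t ^ p ∂P ≤ Z)
    (ic : Integrable c P) (im : Integrable m P) (imv : Integrable (fun t => m t * v t) P)
    (hm1 : ∫ t, m t ∂P = 1) (hmv : ∫ t, m t * v t ∂P = 1)
    (hm : ∀ᵐ t ∂P, 0 ≤ m t ∧ m t ≤ 2) (hc : ∀ᵐ t ∂P, 0 ≤ c t ∧ c t ≤ Cc)
    (hvd : ∀ᵐ t ∂P, |v t - vb| ≤ d t) (hε : 0 < ε) (hCc : 0 ≤ Cc)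
    (ia : Integrable (fun t => (1 + ε * c t - (ε * c t) ^ 2) * v t ^ p) P) :
    1 + p * ((∫ t, v t ∂P) - 1) + ε * (∫ t, c t ∂P) -
      (4 * E + 16 * D ^ 2 + 3 * ε * Cc * D + ε ^ 2 * Cc ^ 2 * Z) ≤
      ∫ t, (1 + ε * c t - (ε * c t) ^ 2) * v t ^ p ∂P := by
  have hDn : 0 ≤ ∫ t, d t ∂P := integral_nonneg hd0
  have hb : |vb - 1| ≤ 2 * D := by
    rw [abs_le]
    constructor
    · have h : ∫ t, m t * v t ∂P ≤ ∫ t, (m t * vb + 2 * d t) ∂P := by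
        apply integral_mono_ae imv ((im.mul_const _).add (idd.const_mul _))
        filter_upwards [hm, hvd] with t h1 h2
        have h3 := (abs_le.1 h2).2
        have := hd0 t
        show m t * v t ≤ m t * vb + 2 * d t
        nlinarith [mul_le_mul_of_nonneg_left h3 h1.1]
      rw [integral_add (im.mul_const _) (idd.const_mul _), integral_mul_const, integral_const_mul,
        hmv, hm1] at h
      linarith
    · have h : ∫ t, (m t * vb - 2 * d t) ∂P ≤ ∫ t, m t * v t ∂P := by
        apply integral_mono_ae ((im.mul_const _).sub (idd.const_mul _)) imv
        filter_upwards [hm, hvd] with t h1 h2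
        have h3 := (abs_le.1 h2).1
        have := hd0 t
        show m t * vb - 2 * d t ≤ m t * v t
        nlinarith [mul_le_mul_of_nonneg_left h3 h1.1]
      rw [integral_sub (im.mul_const _) (idd.const_mul _), integral_mul_const, integral_const_mul,
        hmv, hm1] at h
      linarith
  set b := |vb - 1| with hbd
  have hb0 : 0 ≤ b := abs_nonneg _
  have j1 : Integrable (fun t => p * v t) P := iv.const_mul p
  have j2 : Integrable (fun t => ε * c t) P := ic.const_mul ε
  have j3 : Integrable (fun t => 4 * (d t * min 1 (d t))) P := ie.const_mul 4
  have j4 : Integrable (fun t => ε * Cc * d t) P := idd.const_mul _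
  have j5 : Integrable (fun t => ε ^ 2 * Cc ^ 2 * v t ^ p) P := iz.const_mul _
  have j0 : Integrable (fun _ : ℝ => 1 - p - 4 * b ^ 2 - ε * Cc * b) P := integrable_const _
  have k1 : Integrable (fun t => (1 - p - 4 * b ^ 2 - ε * Cc * b) + p * v t) P := j0.add j1
  have k2 : Integrable (fun t => (1 - p - 4 * b ^ 2 - ε * Cc * b) + p * v t + ε * c t) P := k1.add j2
  have k3 : Integrable (fun t => (1 - p - 4 * b ^ 2 - ε * Cc * b) + p * v t + ε * c t
    - 4 * (d t * min 1 (d t))) P := k2.sub j3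
  have k4 : Integrable (fun t => (1 - p - 4 * b ^ 2 - ε * Cc * b) + p * v t + ε * c t
    - 4 * (d t * min 1 (d t)) - ε * Cc * d t) P := k3.sub j4
  have key : ∫ t, ((1 - p - 4 * b ^ 2 - ε * Cc * b) + p * v t + ε * c t
    - 4 * (d t * min 1 (d t)) - ε * Cc * d t - ε ^ 2 * Cc ^ 2 * v t ^ p) ∂P ≤
      ∫ t, (1 + ε * c t - (ε * c t) ^ 2) * v t ^ p ∂P := by
    apply integral_mono_ae (k4.sub j5) ia
    filter_upwards [hc, hvd] with t h1 h2
    obtain ⟨c0, c1⟩ := h1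
    obtain ⟨z1, z2, z3⟩ := z_lb hp hp1 (hv0 t)
    have hs : |v t - 1| ≤ d t + b := by
      have := abs_sub_le (v t) vb 1
      linarith
    have hf := f_split (abs_nonneg _) (hd0 t) hb0 hs
    have hz0 : 0 ≤ v t ^ p := Real.rpow_nonneg (hv0 t) p
    have hz : 1 + p * (v t - 1) - (4 * (d t * min 1 (d t)) + 4 * b ^ 2) ≤ v t ^ p := by
      rw [sq_abs] at hf
      rcases min_choice |v t - 1| ((v t - 1) ^ 2) with h | h <;> rw [h] at hf <;> linarith
    have hz' : ε * c t - ε * Cc * (d t + b) ≤ ε * c t * v t ^ p := by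
      have e1 : ε * c t * (1 - |v t - 1|) ≤ ε * c t * v t ^ p :=
        mul_le_mul_of_nonneg_left z3 (by positivity)
      have e2 : ε * c t * |v t - 1| ≤ ε * Cc * (d t + b) :=
        mul_le_mul (mul_le_mul_of_nonneg_left c1 hε.le) hs (abs_nonneg _) (by positivity)
      linarith
    have hz'' : (ε * c t) ^ 2 * v t ^ p ≤ ε ^ 2 * Cc ^ 2 * v t ^ p := by
      apply mul_le_mul_of_nonneg_right _ hz0
      rw [mul_pow]
      exact mul_le_mul_of_nonneg_left (pow_le_pow_left₀ c0 c1 2) (sq_nonneg _)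
    show (1 - p - 4 * b ^ 2 - ε * Cc * b) + p * v t + ε * c t
      - 4 * (d t * min 1 (d t)) - ε * Cc * d t - ε ^ 2 * Cc ^ 2 * v t ^ p ≤
      (1 + ε * c t - (ε * c t) ^ 2) * v t ^ p
    linarith
  rw [integral_sub k4 j5, integral_sub k3 j4, integral_sub k2 j3, integral_add k1 j2,
    integral_add j0 j1, integral_const_mul, integral_const_mul, integral_const_mul,
    integral_const_mul, integral_const_mul] at key
  simp only [integral_const, probReal_univ, one_smul] at key
  have f1 : b ^ 2 ≤ 4 * D ^ 2 := by nlinarith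
  have f2 : ε * Cc * b ≤ ε * Cc * (2 * D) := mul_le_mul_of_nonneg_left hb (by positivity)
  have f3 : ε * Cc * (∫ t, d t ∂P) ≤ ε * Cc * D := mul_le_mul_of_nonneg_left hD (by positivity)
  have f4 : ε ^ 2 * Cc ^ 2 * (∫ t, v t ^ p ∂P) ≤ ε ^ 2 * Cc ^ 2 * Z :=
    mul_le_mul_of_nonneg_left hZ (by positivity)
  linarith

lemma toReal_int {P : Measure ℝ} {f : ℝ → ℝ≥0∞} (hf : Measurable f) {B : ℝ} (hB : 0 ≤ B)
    (h : ∫⁻ t, f t ∂P ≤ ENNReal.ofReal B) :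
    Integrable (fun t => (f t).toReal) P ∧ ∫ t, (f t).toReal ∂P = (∫⁻ t, f t ∂P).toReal ∧
      ∫ t, (f t).toReal ∂P ≤ B := by
  have hne : ∫⁻ t, f t ∂P ≠ ⊤ := ne_top_of_le_ne_top ENNReal.ofReal_ne_top h
  have e := integral_toReal hf.aemeasurable (ae_lt_top hf hne)
  refine ⟨integrable_toReal_of_lintegral_ne_top hf.aemeasurable hne, e, ?_⟩
  rw [e]
  exact ENNReal.toReal_le_of_le_ofReal hB h

theorem lower_bd {n : ℕ} (hn : 2 ≤ n) (hW : DoubleWell W) (hη : TransitionProfile W η) :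
    ∃ ε₀ > (0:ℝ), ∃ C > (0:ℝ), ∀ ε : ℝ, 0 < ε → ε < ε₀ → ∀ u : En n → ℝ, H1Box n u →
      (∫ x : En n, Vpot n W (u x)) = 1 →
      2 * cN n + 2 * cN n * (cN n * pn n * kap n W η) * ε - C * ε ^ 2 ≤ AC n W ε u := by
  have hN := cN_pos hn
  have hpn := pn_nonneg hn
  have hPP := PW_prob hW
  obtain ⟨Cc, hCc, hc⟩ := cW_bd hn hW hη
  set K := cN n * pn n * kap n W η with hK
  obtain ⟨C, hC, hbasic⟩ := basic hn hW hη (C1 := |K|) (abs_nonneg K)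
  set C' := 2 * cN n * (4 * C + 16 * C ^ 2 + 3 * Cc * C + Cc ^ 2 * (1 + |K|)) with hC'
  have hC'0 : 0 < C' := by positivity
  refine ⟨min 1 Cc⁻¹, by positivity, C', hC'0, fun ε hε hε0 u hu h1 => ?_⟩
  have hε1 : ε < 1 := hε0.trans_le (min_le_left _ _)
  have hεC : ε * Cc ≤ 1 := by
    have : ε ≤ Cc⁻¹ := (hε0.trans_le (min_le_right _ _)).le
    calc ε * Cc ≤ Cc⁻¹ * Cc := mul_le_mul_of_nonneg_right this hCc.le
      _ = 1 := inv_mul_cancel₀ hCc.ne'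
  by_cases hA : AC n W ε u ≤ 2 * cN n * (1 + |K| * ε)
  swap
  · push Not at hA
    have : 2 * cN n * (K * ε) ≤ 2 * cN n * (|K| * ε) :=
      mul_le_mul_of_nonneg_left (mul_le_mul_of_nonneg_right (le_abs_self K) hε.le) (by positivity)
    have : 0 ≤ C' * ε ^ 2 := by positivity
    linarith
  obtain ⟨b1, b2⟩ := hbasic u ε hu h1 hε hε1 hA
  obtain ⟨id1, -, id2⟩ := toReal_int (du_meas hu) (by positivity) b1
  obtain ⟨ie1, -, ie2⟩ := toReal_int (f := fun t => du u t * min 1 (du u t))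
    ((du_meas hu).mul (measurable_const.min (du_meas hu))) (by positivity) b2
  have hde : (fun t => (du u t * min 1 (du u t)).toReal) =ᵐ[PW W]
      fun t => (du u t).toReal * min 1 (du u t).toReal := by
    filter_upwards [PW_ae W] with t ht
    rw [ENNReal.toReal_mul, ENNReal.toReal_min ENNReal.one_ne_top (du_fin hu ht.1)]
    simp
  have ie1' := ie1.congr hde
  rw [integral_congr_ae hde] at ie2
  have hX : ∫⁻ t, vl u t ^ pn n ∂(PW W) ≤ ENNReal.ofReal (1 + |K|) := by
    have h2 := (X_le hn hW hη hu hε).trans (ENNReal.ofReal_le_ofReal (hA.trans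
      (mul_le_mul_of_nonneg_left (show 1 + |K| * ε ≤ 1 + |K| by
        nlinarith [abs_nonneg K]) (by positivity))))
    rw [ENNReal.ofReal_mul (p := 2 * cN n) (by positivity)] at h2
    exact (ENNReal.mul_le_mul_iff_right (by simpa using hN) ENNReal.ofReal_ne_top).1 h2
  obtain ⟨iz1, -, iz2⟩ := toReal_int ((vl_meas u).pow_const (pn n)) (by positivity) hX
  simp only [← ENNReal.toReal_rpow] at iz1 iz2
  have hPn : ∀ x, 0 ≤ Ph W (u x) := fun x => (Ph_mem hW (hu.mem_Icc x)).1
  have hv := lc_Ph hW hu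
  rw [← ofReal_integral_eq_lintegral_ofReal (H1_Ph hW hη hu) (ae_of_all _ hPn)] at hv
  obtain ⟨iv1, iv2, -⟩ := toReal_int (vl_meas u) (integral_nonneg hPn) hv.le
  rw [hv, ENNReal.toReal_ofReal (integral_nonneg hPn)] at iv2
  have hmv := lc_V hn hW hu
  rw [(V_mass hn hW hη hu h1).2] at hmv
  obtain ⟨im1, im2, -⟩ := toReal_int (f := fun t => ENNReal.ofReal (mq n W t) * vl u t)
    ((mq_cont hn hW).measurable.ennreal_ofReal.mul (vl_meas u)) zero_le_one (by rw [hmv]; simp)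
  rw [hmv] at im2
  simp only [ENNReal.toReal_mul, ENNReal.toReal_ofReal (mq_nonneg hn _), ENNReal.toReal_one] at im1 im2
  have hmb : ∀ᵐ t ∂(PW W), 0 ≤ mq n W t ∧ mq n W t ≤ 2 := by
    filter_upwards [PW_ae W] with t ht
    exact ⟨mq_nonneg hn t, mq_le hn hW ⟨ht.1.le, ht.2.le⟩⟩
  have hcb : ∀ᵐ t ∂(PW W), 0 ≤ cW n W t ∧ cW n W t ≤ Cc := by
    filter_upwards [PW_ae W] with t ht
    exact hc t ⟨ht.1.le, ht.2.le⟩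
  have ic : Integrable (cW n W) (PW W) := by
    apply Integrable.of_bound (cW_meas hn hW).aestronglyMeasurable Cc
    filter_upwards [hcb] with t ht
    rw [Real.norm_eq_abs, abs_of_nonneg ht.1]; exact ht.2
  have im : Integrable (mq n W) (PW W) := by
    apply Integrable.of_bound (mq_cont hn hW).aestronglyMeasurable 2
    filter_upwards [hmb] with t ht
    rw [Real.norm_eq_abs, abs_of_nonneg ht.1]; exact ht.2
  have hvd : ∀ᵐ t ∂(PW W), |(vl u t).toReal - (vl u (1/2)).toReal| ≤ (du u t).toReal := by
    filter_upwards [PW_ae W] with t ht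
    obtain ⟨a1, a2⟩ := vl_du hu t
    rcases le_total t (1/2) with h | h
    · rw [a1 h, ENNReal.toReal_add (vl_fin hu (by norm_num)) (du_fin hu ht.1)]
      rw [add_sub_cancel_left, abs_of_nonneg ENNReal.toReal_nonneg]
    · rw [a2 h, ENNReal.toReal_add (vl_fin hu ht.1) (du_fin hu ht.1)]
      rw [sub_add_cancel_left, abs_neg, abs_of_nonneg ENNReal.toReal_nonneg]
  have a0 : ∀ᵐ t ∂(PW W), 0 ≤ 1 + ε * cW n W t - (ε * cW n W t) ^ 2 := by
    filter_upwards [hcb] with t ht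
    have y0 : 0 ≤ ε * cW n W t := mul_nonneg hε.le ht.1
    have y1 : ε * cW n W t ≤ 1 := (mul_le_mul_of_nonneg_left ht.2 hε.le).trans hεC
    nlinarith
  have am : Measurable fun t => 1 + ε * cW n W t - (ε * cW n W t) ^ 2 :=
    ((((cW_meas hn hW).const_mul ε).const_add 1).sub (((cW_meas hn hW).const_mul ε).pow_const 2))
  have ht := tilt hn hW hη hu h1 hε hc hεC
  set T := AC n W ε u + 2 * (cN n * pn n) * ((∫ x, Ph W (u x)) - 1) with hT
  have ia0 : ∫⁻ t, ENNReal.ofReal (1 + ε * cW n W t - (ε * cW n W t) ^ 2) * vl u t ^ pn n ∂(PW W) ≤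
      ENNReal.ofReal (max 0 T / (2 * cN n)) := by
    have h2 : ENNReal.ofReal T = ENNReal.ofReal (2 * cN n) * ENNReal.ofReal (max 0 T / (2 * cN n)) := by
      rw [← ENNReal.ofReal_mul (by positivity), mul_div_cancel₀ _ (by positivity)]
      rcases le_total 0 T with h | h
      · rw [max_eq_right h]
      · rw [max_eq_left h, ENNReal.ofReal_of_nonpos h, ENNReal.ofReal_zero]
    rw [h2] at ht
    exact (ENNReal.mul_le_mul_iff_right (by simpa using hN) ENNReal.ofReal_ne_top).1 ht
  obtain ⟨ia1, -, ia2⟩ := toReal_int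
    (f := fun t => ENNReal.ofReal (1 + ε * cW n W t - (ε * cW n W t) ^ 2) * vl u t ^ pn n)
    (am.ennreal_ofReal.mul ((vl_meas u).pow_const (pn n))) (by positivity) ia0
  have hae : (fun t => (ENNReal.ofReal (1 + ε * cW n W t - (ε * cW n W t) ^ 2) * vl u t ^ pn n).toReal)
      =ᵐ[PW W] fun t => (1 + ε * cW n W t - (ε * cW n W t) ^ 2) * (vl u t).toReal ^ pn n := by
    filter_upwards [a0] with t ht
    rw [ENNReal.toReal_mul, ENNReal.toReal_ofReal ht, ENNReal.toReal_rpow]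
  have ia1' := ia1.congr hae
  rw [integral_congr_ae hae] at ia2
  have core := real_core (P := PW W) (v := fun t => (vl u t).toReal) (d := fun t => (du u t).toReal)
    (c := cW n W) (m := mq n W) (p := pn n) hpn.1 hpn.2 (fun _ => ENNReal.toReal_nonneg)
    (fun _ => ENNReal.toReal_nonneg) iv1 id1 id2 ie1' ie2 iz1 iz2 ic im im1 (int_mq hn hW) im2
    hmb hcb hvd hε hCc.le ia1'
  rw [cW_int hW hη, iv2, ← hK] at core
  set I := ∫ x, Ph W (u x)
  have fin := core.trans ia2
  rw [le_div_iff₀ (by positivity)] at fin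
  -- I ≥ 1, so T ≥ 0
  have hI : 1 ≤ I := by
    rw [← (V_mass hn hW hη hu h1).1]
    exact integral_mono (V_int hn hW hη hu) (H1_Ph hW hη hu)
      fun x => (rpow_q hn (Ph_mem hW (hu.mem_Icc x))).2
  have hT0 : 0 ≤ T := by
    have h3 := AC_nonneg hW hu hε
    have h4 : 0 ≤ 2 * (cN n * pn n) * (I - 1) :=
      mul_nonneg (mul_nonneg zero_le_two (mul_nonneg hN.le hpn.1.le)) (by linarith)
    rw [hT]; linarith
  rw [max_eq_right hT0, hT] at fin
  rw [hC']
  nlinarith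

theorem main_thm (n : ℕ) (hn : 2 ≤ n) (W : ℝ → ℝ) (hW : DoubleWell W)
    (η : ℝ → ℝ) (hη : TransitionProfile W η) :
    ∃ ε₀ > (0:ℝ), ∃ C > (0:ℝ), ∀ ε : ℝ, 0 < ε → ε < ε₀ →
      |Psi n W ε 1 - 2 * (n : ℝ) * ballVol n ^ ((1 : ℝ) / (n : ℝ))
          - 2 * (n : ℝ) * ((n : ℝ) - 1) * ballVol n ^ ((2 : ℝ) / (n : ℝ)) *
            (∫ s : ℝ, (derivWithin (Vpot n W) (Icc 0 1) (η s) * deriv η s + W (η s)) * s) * ε|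
        ≤ C * ε ^ 2 := by
  obtain ⟨e1, he1, C1, hC1, hl⟩ := lower_bd hn hW hη
  obtain ⟨e2, he2, C2, hC2, hu⟩ := upper_bd hn hW hη
  rw [frozen_kap hn hW hη]
  have hn0 : (0:ℝ) < n := by positivity
  have hB := ballVol_pos n
  have ek : 2 * cN n * (cN n * pn n * kap n W η) =
      2 * (n : ℝ) * ((n : ℝ) - 1) * ballVol n ^ ((2 : ℝ) / (n : ℝ)) * kap n W η := by
    have : ballVol n ^ ((2 : ℝ) / (n : ℝ)) = ballVol n ^ ((1 : ℝ) / (n : ℝ)) * ballVol n ^ ((1 : ℝ) / (n : ℝ)) := by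
      rw [← Real.rpow_add hB]; congr 1; ring
    rw [this]
    unfold cN pn
    field_simp
  refine ⟨min e1 e2, lt_min he1 he2, C1 + C2, by positivity, fun ε hε hεl => ?_⟩
  have g1 := hl ε hε (hεl.trans_le (min_le_left _ _))
  obtain ⟨u, u1, u2, u3⟩ := hu ε hε (hεl.trans_le (min_le_right _ _))
  have up : Psi n W ε 1 ≤ AC n W ε u := by
    apply csInf_le
    · refine ⟨0, ?_⟩
      rintro _ ⟨w, ⟨hw, -⟩, rfl⟩
      exact AC_nonneg hW hw hε
    · exact ⟨u, ⟨u1, u2⟩, rfl⟩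
  have lo : 2 * cN n + 2 * cN n * (cN n * pn n * kap n W η) * ε - C1 * ε ^ 2 ≤ Psi n W ε 1 := by
    apply le_csInf
    · exact ⟨_, u, ⟨u1, u2⟩, rfl⟩
    · rintro _ ⟨w, ⟨hw, hw1⟩, rfl⟩
      exact g1 w hw hw1
  rw [ek, show 2 * cN n = 2 * (n : ℝ) * ballVol n ^ ((1 : ℝ) / (n : ℝ)) by unfold cN; ring] at lo
  have p1 : 0 ≤ C1 * ε ^ 2 := by positivity
  have p2 : 0 ≤ C2 * ε ^ 2 := by positivity
  rw [abs_le]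
  constructor <;> linarith

end Part14

theorem statement11 (n : ℕ) (hn : 2 ≤ n) (W : ℝ → ℝ) (hW : DoubleWell W)
    (η : ℝ → ℝ) (hη : TransitionProfile W η) :
    ∃ ε₀ > (0:ℝ), ∃ C > (0:ℝ), ∀ ε : ℝ, 0 < ε → ε < ε₀ →
      |Psi n W ε 1 - 2 * (n : ℝ) * ballVol n ^ ((1 : ℝ) / (n : ℝ))
          - 2 * (n : ℝ) * ((n : ℝ) - 1) * ballVol n ^ ((2 : ℝ) / (n : ℝ)) *
            (∫ s : ℝ, (derivWithin (Vpot n W) (Icc 0 1) (η s) * deriv η s + W (η s)) * s) * ε|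
        ≤ C * ε ^ 2 := by
  exact main_thm n hn W hW η hη
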